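/- arXiv:1307.5363 — 2 statements merged into one kernel-verified Lean document; each statement's English description precedes it below -/
import Mathlib

section
/- Let G be a Jordan domain with rectifiable boundary L of length l, fix ζ ∈ G, and for n ∈ ℕ set Q_n(z) = ((l/2π)·Σ_{k=0}^n |p_k(ζ)|²)^{−1/2} · Σ_{k=0}^n conj(p_k(ζ))·p_k(z), so that J'_{2n+1} = Q_n². Then ‖φ − J_{2n+1}‖_∞ ≤ √(2πl) · ‖√(φ') − Q_n‖₂, where √(φ') is the analytic branch of the square root of φ' on G with √(φ'(ζ)) > 0. -/
open Complex MeasureTheory Set Filter Metric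

noncomputable section

/-- A bounded Jordan domain `G ⊆ ℂ` whose boundary is a rectifiable Jordan curve
of length `l`, given together with a unit-speed (arclength) parametrization `γ`
of the boundary curve `L = frontier G`. -/
structure JordanDomain where
  /-- the domain -/
  G : Set ℂ
  isOpen : IsOpen G
  nonempty : G.Nonempty
  bounded : Bornology.IsBounded G
  connected : IsConnected G
  simplyConnected : SimplyConnectedSpace ↥G
  /-- the length of the boundary curve -/
  l : ℝ
  l_pos : 0 < l
  /-- arclength parametrization of the boundary curve -/
  γ : ℝ → ℂ
  γ_cont : Continuous γ
  γ_periodic : Function.Periodic γ l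
  γ_injOn : InjOn γ (Ico 0 l)
  γ_boundary : γ '' Ico 0 l = frontier G
  /-- `γ` is a unit-speed (arclength) parametrization; in particular the boundary
  is rectifiable with length `l`. -/
  γ_unitSpeed : ∀ s t : ℝ, s ≤ t → t ≤ s + l →
    eVariationOn γ (Icc s t) = ENNReal.ofReal (t - s)

/-- The `E₂(G)`-norm of (the boundary trace of) a function, computed through the
arclength parametrization of the boundary: `‖g‖₂ = ((1/l) ∫₀^l ‖g(s)‖² ds)^{1/2}`. -/
def JordanDomain.bnorm (D : JordanDomain) (g : ℝ → ℂ) : ℝ :=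
  Real.sqrt ((1 / D.l) * ∫ s in (0:ℝ)..D.l, ‖g s‖ ^ 2)

/-- `p` is the sequence of orthonormal polynomials of `E₂(G)` obtained by Gram–Schmidt
orthonormalization of the monomials `1, z, z², …`: `deg p k = k`, the leading
coefficients are positive reals, and the polynomials are orthonormal with respect to
the arclength inner product `(f,g) = (1/l) ∫_L f conj(g) |dz|`. -/
def JordanDomain.IsONPolys (D : JordanDomain) (p : ℕ → Polynomial ℂ) : Prop :=
  (∀ k, (p k).natDegree = k) ∧
  (∀ k, ∃ c : ℝ, 0 < c ∧ (p k).leadingCoeff = (c : ℂ)) ∧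
  (∀ j k, (1 / (D.l : ℂ)) * (∫ s in (0:ℝ)..D.l,
      (p j).eval (D.γ s) * (starRingEnd ℂ) ((p k).eval (D.γ s))) =
    if j = k then 1 else 0)

/-- The `n`-th partial sum `Σ_{k=0}^n conj(p_k(ζ))·p_k(z)` of the Szegő kernel expansion. -/
def partialSum (p : ℕ → Polynomial ℂ) (ζ : ℂ) (n : ℕ) : ℂ → ℂ := fun z =>
  ∑ k ∈ Finset.range (n + 1), (starRingEnd ℂ) ((p k).eval ζ) * (p k).eval z

/-- The Szegő kernel `K(z,ζ) = Σ_{k=0}^∞ conj(p_k(ζ))·p_k(z)`. -/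
def szegoKernel (p : ℕ → Polynomial ℂ) (ζ z : ℂ) : ℂ :=
  ∑' k : ℕ, (starRingEnd ℂ) ((p k).eval ζ) * (p k).eval z

/-- The approximating polynomials
`J_{2n+1}(z) = (2π/l)·(∫_ζ^z (Σ_{k=0}^n conj(p_k(ζ))p_k(t))² dt) / (Σ_{k=0}^n |p_k(ζ)|²)`;
the (path-independent) integral of the polynomial integrand is written out explicitly,
using `∫_ζ^z t^i dt = (z^{i+1} - ζ^{i+1})/(i+1)`. -/
def Jfun (D : JordanDomain) (p : ℕ → Polynomial ℂ) (ζ : ℂ) (n : ℕ) : ℂ → ℂ := fun z =>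
  let S : Polynomial ℂ :=
    (∑ k ∈ Finset.range (n + 1), Polynomial.C ((starRingEnd ℂ) ((p k).eval ζ)) * p k) ^ 2
  (((2 * Real.pi / D.l : ℝ) : ℂ) / (∑ k ∈ Finset.range (n + 1), ((‖(p k).eval ζ‖ : ℂ)) ^ 2)) *
    ∑ i ∈ Finset.range (S.natDegree + 1),
      S.coeff i * ((z ^ (i + 1) - ζ ^ (i + 1)) / ((i : ℂ) + 1))

/-- `Q_n(z) = ((l/2π)·Σ_{k=0}^n |p_k(ζ)|²)^{-1/2} · Σ_{k=0}^n conj(p_k(ζ))·p_k(z)`,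
so that `J'_{2n+1} = Q_n²`. -/
def Qfun (D : JordanDomain) (p : ℕ → Polynomial ℂ) (ζ : ℂ) (n : ℕ) : ℂ → ℂ := fun z =>
  ((Real.sqrt ((D.l / (2 * Real.pi)) *
      ∑ k ∈ Finset.range (n + 1), ‖(p k).eval ζ‖ ^ 2) : ℝ) : ℂ)⁻¹ * partialSum p ζ n z

/-- The sup norm `⨆_{z ∈ K} ‖f(z)‖` on a set `K ⊆ ℂ`. -/
def supNormOn (K : Set ℂ) (f : ℂ → ℂ) : ℝ := ⨆ z : K, ‖f (z : ℂ)‖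

/-- `g` has nontangential limit `v` at the boundary point `w` of `G`:
`g(z) → v` as `z → w` inside every cone `{z ∈ G : ‖z - w‖ ≤ M·dist(z, ∂G)}`. -/
def NTLim (G : Set ℂ) (g : ℂ → ℂ) (w v : ℂ) : Prop :=
  ∀ M : ℝ, 1 < M →
    Tendsto g (nhdsWithin w {z | z ∈ G ∧ ‖z - w‖ ≤ M * infDist z (frontier G)}) (nhds v)

/-- `φ` is the conformal map of `G` onto the unit disk `D` normalized by
`φ(ζ) = 0` and `φ'(ζ) > 0`. -/
structure ConformalOnto (G : Set ℂ) (φ : ℂ → ℂ) (ζ : ℂ) : Prop where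
  differentiable : ∀ z ∈ G, DifferentiableAt ℂ φ z
  bijOn : BijOn φ G (ball (0 : ℂ) 1)
  map_center : φ ζ = 0
  deriv_center_pos : ∃ c : ℝ, 0 < c ∧ deriv φ ζ = (c : ℂ)

/-- `G` is a Smirnov domain: for any conformal map `ψ` of the unit disk onto `G`,
`log|ψ'|` is represented by the Poisson integral of its (radial) boundary values.
(By the Keldysh–Lavrentiev theorem this is equivalent to polynomials being dense
in the Smirnov classes `E_p(G)`.) -/
def IsSmirnovDomain (G : Set ℂ) : Prop :=
  ∀ ψ : ℂ → ℂ,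
    (∀ w ∈ ball (0 : ℂ) 1, DifferentiableAt ℂ ψ w) →
    BijOn ψ (ball (0 : ℂ) 1) G →
    ∃ h : ℝ → ℝ,
      IntervalIntegrable h volume 0 (2 * Real.pi) ∧
      (∀ᵐ (θ : ℝ) ∂(volume.restrict (Ioc (0 : ℝ) (2 * Real.pi))),
        Tendsto (fun r : ℝ => Real.log ‖deriv ψ ((r : ℂ) * Complex.exp ((θ : ℂ) * Complex.I))‖)
          (nhdsWithin 1 (Iio 1)) (nhds (h θ))) ∧
      (∀ w ∈ ball (0 : ℂ) 1,
        Real.log ‖deriv ψ w‖ =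
          (1 / (2 * Real.pi)) * ∫ θ in (0 : ℝ)..(2 * Real.pi),
            ((1 - ‖w‖ ^ 2) / ‖Complex.exp ((θ : ℂ) * Complex.I) - w‖ ^ 2) * h θ)

/-- The (interior) opening angle of `G` at the boundary point `z₀` equals `a`:
the angular measure of the set of directions in which `G` is seen from `z₀`
at distance `r` tends to `a` as `r → 0⁺`. -/
def HasCornerAngle (G : Set ℂ) (z₀ : ℂ) (a : ℝ) : Prop :=
  Tendsto (fun r : ℝ =>
      (volume {θ : ℝ | θ ∈ Ico 0 (2 * Real.pi) ∧
        z₀ + (r : ℂ) * Complex.exp ((θ : ℂ) * Complex.I) ∈ G}).toReal)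
    (nhdsWithin 0 (Ioi 0)) (nhds a)

/-- The boundary of the Jordan domain `D` is piecewise analytic: it is a union of
finitely many analytic arcs `τ i '' [0,1]` (each `τ i` is conformal, i.e. injective
and holomorphic, on an open neighborhood `U i` of the segment `[0,1]`), consecutive
arcs are joined at the junction points `τ i 1 = τ (i+1) 0`, and at the junction
point `τ i 1` the exterior angle of `G` is `extAngle i · π` (so the interior
opening angle there is `(2 - extAngle i) · π`). -/
structure PiecewiseAnalyticBoundary (D : JordanDomain) where
  /-- number of analytic arcs -/
  m : ℕ
  m_pos : 0 < m
  /-- conformal parametrizations of the arcs -/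
  τ : Fin m → ℂ → ℂ
  /-- neighborhoods of the segment `[0,1]` on which the `τ i` are conformal -/
  U : Fin m → Set ℂ
  U_open : ∀ i, IsOpen (U i)
  seg_sub : ∀ i, (Complex.ofReal '' Icc (0 : ℝ) 1) ⊆ U i
  analytic : ∀ i, DifferentiableOn ℂ (τ i) (U i)
  inj : ∀ i, InjOn (τ i) (U i)
  cover : (⋃ i, τ i '' (Complex.ofReal '' Icc (0 : ℝ) 1)) = frontier D.G
  junction : ∀ i : Fin m,
    τ i 1 = τ (Fin.mk ((i.val + 1) % m) (Nat.mod_lt _ m_pos)) 0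
  /-- `extAngle i · π` is the exterior angle at the junction point `τ i 1` -/
  extAngle : Fin m → ℝ
  extAngle_mem : ∀ i, extAngle i ∈ Ioo (0 : ℝ) 2
  extAngle_spec : ∀ i, HasCornerAngle D.G (τ i 1) ((2 - extAngle i) * Real.pi)

end


lemma ac_comp_lip {f : ℝ → ℂ} {a b : ℝ} (h : AbsolutelyContinuousOnInterval f a b)
    {Y : Type*} [PseudoMetricSpace Y] {g : ℂ → Y} (hg : LipschitzWith 1 g) :
    AbsolutelyContinuousOnInterval (fun x => g (f x)) a b := by
  rw [absolutelyContinuousOnInterval_iff] at h ⊢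
  intro ε hε
  obtain ⟨δ, hδ, H⟩ := h ε hε
  refine ⟨δ, hδ, fun E hE hs => lt_of_le_of_lt (Finset.sum_le_sum fun i _ => ?_) (H E hE hs)⟩
  simpa using hg.dist_le_mul (f (E.2 i).1) (f (E.2 i).2)

lemma ac_ftc {f f' : ℝ → ℂ} {a b : ℝ} (hab : a ≤ b) (h : AbsolutelyContinuousOnInterval f a b)
    (hd : ∀ᵐ x, x ∈ Icc a b → HasDerivAt f (f' x) x) :
    IntervalIntegrable f' volume a b ∧ ∫ x in a..b, f' x = f b - f a := by
  have hre : AbsolutelyContinuousOnInterval (fun x => (f x).re) a b := by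
    refine ac_comp_lip h (g := Complex.re) (LipschitzWith.of_dist_le_mul fun x y => ?_)
    simpa [Real.dist_eq, Complex.dist_eq] using Complex.abs_re_le_norm (x - y)
  have him : AbsolutelyContinuousOnInterval (fun x => (f x).im) a b := by
    refine ac_comp_lip h (g := Complex.im) (LipschitzWith.of_dist_le_mul fun x y => ?_)
    simpa [Real.dist_eq, Complex.dist_eq] using Complex.abs_im_le_norm (x - y)
  have dre : ∀ᵐ x, x ∈ Icc a b → deriv (fun x => (f x).re) x = (f' x).re := by
    filter_upwards [hd] with x hx hm
    exact (Complex.reCLM.hasFDerivAt.comp_hasDerivAt x (hx hm)).deriv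
  have dim : ∀ᵐ x, x ∈ Icc a b → deriv (fun x => (f x).im) x = (f' x).im := by
    filter_upwards [hd] with x hx hm
    exact (Complex.imCLM.hasFDerivAt.comp_hasDerivAt x (hx hm)).deriv
  have ire := hre.intervalIntegrable_deriv
  have iim := him.intervalIntegrable_deriv
  have hsub : uIoc a b ⊆ Icc a b := by rw [uIoc_of_le hab]; exact Ioc_subset_Icc_self
  have ire' : IntervalIntegrable (fun x => (f' x).re) volume a b := by
    refine ire.congr_ae ?_
    rw [EventuallyEq, ae_restrict_iff' measurableSet_uIoc]
    filter_upwards [dre] with x hx hm using hx (hsub hm)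
  have iim' : IntervalIntegrable (fun x => (f' x).im) volume a b := by
    refine iim.congr_ae ?_
    rw [EventuallyEq, ae_restrict_iff' measurableSet_uIoc]
    filter_upwards [dim] with x hx hm using hx (hsub hm)
  have hf' : (fun x => ((f' x).re : ℂ) + ((f' x).im : ℂ) * I) = f' := by
    funext x; exact Complex.re_add_im _
  have i1 : IntervalIntegrable (fun x => ((f' x).re : ℂ)) volume a b := ⟨ire'.1.ofReal, ire'.2.ofReal⟩
  have i2 : IntervalIntegrable (fun x => ((f' x).im : ℂ) * I) volume a b :=
    IntervalIntegrable.mul_const ⟨iim'.1.ofReal, iim'.2.ofReal⟩ I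
  refine ⟨hf' ▸ i1.add i2, ?_⟩
  have e1 : ∫ x in a..b, (f' x).re = (f b).re - (f a).re := by
    rw [← hre.integral_deriv_eq_sub]
    refine intervalIntegral.integral_congr_ae ?_
    filter_upwards [dre] with x hx hm using (hx (hsub hm)).symm
  have e2 : ∫ x in a..b, (f' x).im = (f b).im - (f a).im := by
    rw [← him.integral_deriv_eq_sub]
    refine intervalIntegral.integral_congr_ae ?_
    filter_upwards [dim] with x hx hm using (hx (hsub hm)).symm
  rw [← hf', intervalIntegral.integral_add i1 i2, intervalIntegral.integral_mul_const,
    intervalIntegral.integral_ofReal, intervalIntegral.integral_ofReal, e1, e2]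
  apply Complex.ext <;> simp

lemma lip_ae {γ : ℝ → ℂ} (hγ : LipschitzWith 1 γ) : ∀ᵐ s, HasDerivAt γ (deriv γ s) s := by
  filter_upwards [hγ.ae_differentiableAt_real] with s hs using hs.hasDerivAt

lemma lip_deriv_le {γ : ℝ → ℂ} (hγ : LipschitzWith 1 γ) (s : ℝ) : ‖deriv γ s‖ ≤ 1 := by
  simpa using norm_deriv_le_of_lipschitz (x₀ := s) hγ

lemma comp_ac {γ : ℝ → ℂ} (hγ : LipschitzWith 1 γ) {U : Set ℂ} (hU : IsOpen U) {H : ℂ → ℂ}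
    (hH : DifferentiableOn ℂ H U) {a b : ℝ} (hab : a ≤ b) (hs : ∀ s ∈ Icc a b, γ s ∈ U) :
    AbsolutelyContinuousOnInterval (fun s => H (γ s)) a b := by
  have hcomp : IsCompact (γ '' Icc a b) := isCompact_Icc.image hγ.continuous
  have hll : LocallyLipschitzOn (γ '' Icc a b) H := by
    rintro x ⟨s, hs', rfl⟩
    have hd : ContDiffAt ℝ 1 H (γ s) :=
      ((hH.contDiffOn hU (n := 1)).contDiffAt (hU.mem_nhds (hs s hs'))).restrict_scalars ℝ
    obtain ⟨K, t, ht, hK⟩ := hd.exists_lipschitzOnWith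
    exact ⟨K, t, mem_nhdsWithin_of_mem_nhds ht, hK⟩
  obtain ⟨K, hK⟩ := hll.exists_lipschitzOnWith_of_compact hcomp
  have : LipschitzOnWith (K * 1) (fun s => H (γ s)) (uIcc a b) := by
    rw [uIcc_of_le hab]
    exact hK.comp hγ.lipschitzOnWith (fun s hs => mem_image_of_mem _ hs)
  exact this.absolutelyContinuousOnInterval

lemma comp_ftc {γ : ℝ → ℂ} (hγ : LipschitzWith 1 γ) {U : Set ℂ} (hU : IsOpen U) {H H' : ℂ → ℂ}
    (hH : ∀ z ∈ U, HasDerivAt H (H' z) z) {a b : ℝ} (hab : a ≤ b) (hs : ∀ s ∈ Icc a b, γ s ∈ U) :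
    IntervalIntegrable (fun s => H' (γ s) * deriv γ s) volume a b ∧
    ∫ s in a..b, H' (γ s) * deriv γ s = H (γ b) - H (γ a) := by
  refine ac_ftc hab (comp_ac hγ hU
    (fun z hz => (hH z hz).differentiableAt.differentiableWithinAt) hab hs) ?_
  filter_upwards [lip_ae hγ] with s hs' hm
  exact (hH _ (hs s hm)).comp s hs'

lemma lip_of_var {l : ℝ} (hl : 0 < l) {γ : ℝ → ℂ} (hp : Function.Periodic γ l)
    (hv : ∀ s t : ℝ, s ≤ t → t ≤ s + l → eVariationOn γ (Icc s t) = ENNReal.ofReal (t - s)) :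
    LipschitzWith 1 γ := by
  have key : ∀ s t : ℝ, s ≤ t → t ≤ s + l → dist (γ s) (γ t) ≤ t - s := by
    intro s t h1 h2
    have := eVariationOn.edist_le γ (s := Icc s t) (left_mem_Icc.2 h1) (right_mem_Icc.2 h1)
    rw [hv s t h1 h2, edist_dist] at this
    exact (ENNReal.ofReal_le_ofReal_iff (by linarith)).1 this
  have key2 : ∀ s t : ℝ, s ≤ t → dist (γ s) (γ t) ≤ t - s := by
    intro s t h1
    have hm := toIcoMod_mem_Ico hl s t
    have : γ t = γ (toIcoMod hl s t) := by
      exact (hp.sub_zsmul_eq (toIcoDiv hl s t)).symm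
    rw [this]
    refine (key s _ hm.1 hm.2.le).trans ?_
    have h3 : toIcoMod hl s t ≤ t := by
      rw [toIcoMod]
      have : 0 ≤ toIcoDiv hl s t := by
        by_contra hneg
        have h4 : (toIcoDiv hl s t : ℝ) ≤ -1 := by exact_mod_cast (by omega : toIcoDiv hl s t ≤ -1)
        have h5 := hm.2
        rw [toIcoMod, zsmul_eq_mul] at h5
        nlinarith
      have h6 : (0:ℝ) ≤ toIcoDiv hl s t := by exact_mod_cast this
      rw [zsmul_eq_mul]; nlinarith
    linarith
  refine LipschitzWith.of_dist_le_mul fun s t => ?_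
  simp only [NNReal.coe_one, one_mul]
  rcases le_total s t with h | h
  · rw [dist_comm s t, Real.dist_eq, abs_of_nonneg (by linarith)]; exact key2 s t h
  · rw [dist_comm, Real.dist_eq, abs_of_nonneg (by linarith)]; exact key2 t s h

lemma unit_of_var {l : ℝ} (hl : 0 < l) {γ : ℝ → ℂ} (hγ : LipschitzWith 1 γ)
    (hp : Function.Periodic γ l)
    (hv : eVariationOn γ (Icc 0 l) = ENNReal.ofReal l) :
    ∀ᵐ s, ‖deriv γ s‖ = 1 := by
  have hmeas : Measurable (fun s => ‖deriv γ s‖) := (measurable_deriv γ).norm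
  have hint : ∀ a b : ℝ, IntervalIntegrable (fun s => ‖deriv γ s‖) volume a b := fun a b =>
    (intervalIntegrable_const (c := (1:ℝ))).mono_fun hmeas.aestronglyMeasurable
      (Eventually.of_forall fun s => by simpa using lip_deriv_le hγ s)
  have hseg : ∀ a b : ℝ, a ≤ b → ‖γ b - γ a‖ ≤ ∫ s in a..b, ‖deriv γ s‖ := by
    intro a b hab
    have := (comp_ftc hγ isOpen_univ (H := id) (H' := fun _ => 1) (fun z _ => hasDerivAt_id z) hab
      (fun s _ => mem_univ _)).2
    simp only [one_mul, id] at this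
    rw [← this]
    exact intervalIntegral.norm_integral_le_integral_norm hab
  have hle : ENNReal.ofReal l ≤ ENNReal.ofReal (∫ s in (0:ℝ)..l, ‖deriv γ s‖) := by
    rw [← hv, eVariationOn]
    refine iSup_le ?_
    rintro ⟨n, u, hu, hus⟩
    simp only
    have h1 : ∀ i, edist (γ (u (i+1))) (γ (u i)) ≤
        ENNReal.ofReal (∫ s in (u i)..(u (i+1)), ‖deriv γ s‖) := by
      intro i
      rw [edist_dist, dist_eq_norm]
      exact ENNReal.ofReal_le_ofReal (hseg _ _ (hu (Nat.le_succ i)))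
    refine (Finset.sum_le_sum fun i _ => h1 i).trans ?_
    rw [← ENNReal.ofReal_sum_of_nonneg (fun i _ => intervalIntegral.integral_nonneg
      (hu (Nat.le_succ i)) (fun _ _ => norm_nonneg _))]
    apply ENNReal.ofReal_le_ofReal
    rw [intervalIntegral.sum_integral_adjacent_intervals (fun k _ => hint _ _)]
    exact intervalIntegral.integral_mono_interval (hus 0).1 (hu (Nat.zero_le n)) (hus n).2
      (Eventually.of_forall fun _ => norm_nonneg _) (hint _ _)
  have hle' : l ≤ ∫ s in (0:ℝ)..l, ‖deriv γ s‖ := by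
    rwa [ENNReal.ofReal_le_ofReal_iff (intervalIntegral.integral_nonneg hl.le
      (fun _ _ => norm_nonneg _))] at hle
  have h0 : ∫ s in (0:ℝ)..l, (1 - ‖deriv γ s‖) = 0 := by
    have e : ∫ s in (0:ℝ)..l, (1 - ‖deriv γ s‖) = l - ∫ s in (0:ℝ)..l, ‖deriv γ s‖ := by
      rw [intervalIntegral.integral_sub intervalIntegrable_const (hint _ _)]; simp
    have : 0 ≤ ∫ s in (0:ℝ)..l, (1 - ‖deriv γ s‖) :=
      intervalIntegral.integral_nonneg hl.le (fun s _ => by linarith [lip_deriv_le hγ s])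
    linarith
  rw [intervalIntegral.integral_of_le hl.le, setIntegral_eq_zero_iff_of_nonneg_ae
    (Eventually.of_forall fun s => by simpa using lip_deriv_le hγ s)
    ((intervalIntegrable_const (c := (1:ℝ))).sub (hint 0 l)).1] at h0
  have h1 : ∀ᵐ s, s ∈ Ioc 0 l → ‖deriv γ s‖ = 1 := by
    rw [EventuallyEq, ae_restrict_iff' measurableSet_Ioc] at h0
    filter_upwards [h0] with s hs hm
    have := hs hm
    simp at this; linarith
  have hper : ∀ (n : ℤ) s, deriv γ (s + n * l) = deriv γ s := by
    intro n s
    have : (fun x => γ (x + n * l)) = γ := by funext x; exact hp.int_mul n x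
    conv_rhs => rw [← this]
    rw [deriv_comp_add_const]
  have h2 : ∀ n : ℤ, ∀ᵐ s, (s + n * l) ∈ Ioc 0 l → ‖deriv γ (s + n * l)‖ = 1 := by
    intro n
    exact (measurePreserving_add_right volume (n * l : ℝ)).quasiMeasurePreserving.ae h1
  filter_upwards [ae_all_iff.2 h2] with s hs
  obtain ⟨n, hn, -⟩ := existsUnique_add_zsmul_mem_Ioc hl s 0
  rw [zsmul_eq_mul, zero_add] at hn
  rw [← hper n s]; exact hs n hn


structure Setup (G : Set ℂ) (l : ℝ) (γ : ℝ → ℂ) (φ : ℂ → ℂ) : Prop where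
  op : IsOpen G
  bd : Bornology.IsBounded G
  conn : IsConnected G
  lpos : 0 < l
  lip : LipschitzWith 1 γ
  per : Function.Periodic γ l
  inj : ∀ s t, γ s = γ t → ∃ n : ℤ, s = t + n * l
  ran : range γ = frontier G
  unit : ∀ᵐ s, ‖deriv γ s‖ = 1
  diff : ∀ z ∈ G, DifferentiableAt ℂ φ z
  bij : BijOn φ G (ball 0 1)
  cont : ContinuousOn φ (closure G)

section
variable {G : Set ℂ} {l : ℝ} {γ : ℝ → ℂ} {φ : ℂ → ℂ}

lemma Setup.cpt (H : Setup G l γ φ) : IsCompact (closure G) := H.bd.isCompact_closure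

/-- inverse map -/
noncomputable def psi (φ : ℂ → ℂ) (G : Set ℂ) : ℂ → ℂ := Function.invFunOn φ G

lemma Setup.psi_mem (H : Setup G l γ φ) {w : ℂ} (hw : w ∈ ball (0:ℂ) 1) : psi φ G w ∈ G :=
  Function.invFunOn_mem (H.bij.surjOn hw)

lemma Setup.phi_psi (H : Setup G l γ φ) {w : ℂ} (hw : w ∈ ball (0:ℂ) 1) : φ (psi φ G w) = w :=
  Function.invFunOn_eq (H.bij.surjOn hw)

lemma Setup.psi_phi (H : Setup G l γ φ) {z : ℂ} (hz : z ∈ G) : psi φ G (φ z) = z :=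
  H.bij.injOn (H.psi_mem (H.bij.mapsTo hz)) hz (H.phi_psi (H.bij.mapsTo hz))

lemma Setup.diffOn (H : Setup G l γ φ) : DifferentiableOn ℂ φ G :=
  fun z hz => (H.diff z hz).differentiableWithinAt

lemma Setup.psi_contOn (H : Setup G l γ φ) : ContinuousOn (psi φ G) (ball 0 1) := by
  have hop : ∀ s ⊆ G, IsOpen s → IsOpen (φ '' s) := by
    have han : AnalyticOnNhd ℂ φ G := H.diffOn.analyticOnNhd H.op
    rcases han.is_constant_or_isOpen H.conn.isPreconnected with ⟨w, hw⟩ | h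
    · exfalso
      have h0 := H.bij.surjOn (show (0:ℂ) ∈ ball (0:ℂ) 1 by simp)
      have h1 := H.bij.surjOn (show (1/2:ℂ) ∈ ball (0:ℂ) 1 by simp; norm_num)
      obtain ⟨a, ha, ha'⟩ := h0
      obtain ⟨b, hb, hb'⟩ := h1
      rw [hw a ha] at ha'; rw [hw b hb, ha'] at hb'
      norm_num at hb'
    · exact h
  intro w hw
  refine ContinuousAt.continuousWithinAt ?_
  rw [ContinuousAt, tendsto_def]
  intro s hs
  obtain ⟨t, hts, ht, hwt⟩ := _root_.mem_nhds_iff.1 hs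
  have := hop (t ∩ G) inter_subset_right (ht.inter H.op)
  refine mem_of_superset (this.mem_nhds ⟨psi φ G w, ⟨hwt, H.psi_mem hw⟩, H.phi_psi hw⟩) ?_
  rintro _ ⟨z, ⟨hz, hz'⟩, rfl⟩
  rw [mem_preimage, H.psi_phi hz']; exact hts hz

lemma Setup.psi_contAt (H : Setup G l γ φ) {w : ℂ} (hw : w ∈ ball (0:ℂ) 1) :
    ContinuousAt (psi φ G) w := H.psi_contOn.continuousAt (isOpen_ball.mem_nhds hw)

lemma Setup.psi_diff (H : Setup G l γ φ) : DifferentiableOn ℂ (psi φ G) (ball 0 1) := by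
  have han : AnalyticOnNhd ℂ φ G := H.diffOn.analyticOnNhd H.op
  have key : ∀ w ∈ ball (0:ℂ) 1, deriv φ (psi φ G w) ≠ 0 → DifferentiableAt ℂ (psi φ G) w := by
    intro w hw hd
    refine (HasDerivAt.of_local_left_inverse (f := φ) (H.psi_contAt hw)
      (H.diff _ (H.psi_mem hw)).hasDerivAt hd ?_).differentiableAt
    filter_upwards [isOpen_ball.mem_nhds hw] with x hx using H.phi_psi hx
  intro w hw
  refine DifferentiableAt.differentiableWithinAt ?_
  set z := psi φ G w with hz
  have hzG : z ∈ G := H.psi_mem hw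
  have hdan : AnalyticAt ℂ (deriv φ) z := (han z hzG).deriv
  rcases hdan.eventually_eq_zero_or_eventually_ne_zero with h0 | h0
  · exfalso
    have h1 : ∀ᶠ x in nhds z, deriv φ x = 0 ∧ x ∈ G := h0.and (H.op.mem_nhds hzG)
    obtain ⟨r, hr, hb⟩ := Metric.eventually_nhds_iff_ball.1 h1
    have hc : ∀ x ∈ ball z r, φ x = φ z := by
      intro x hx
      refine (convex_ball z r).is_const_of_fderivWithin_eq_zero (𝕜 := ℂ) (f := φ)
        (fun y hy => (H.diff y (hb y hy).2).differentiableWithinAt) (fun y hy => ?_) hx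
        (mem_ball_self hr)
      rw [fderivWithin_of_isOpen isOpen_ball hy]
      ext; simpa using (hb y hy).1
    have hx : z + (r/2 : ℝ) ∈ ball z r := by
      simp [abs_of_pos hr, hr]
    have := H.bij.injOn (hb _ hx).2 hzG (hc _ hx)
    simp at this; linarith
  · refine (Complex.analyticAt_of_differentiable_on_punctured_nhds_of_continuousAt ?_
      (H.psi_contAt hw)).differentiableAt
    have h2 : ∀ᶠ x in nhdsWithin w {w}ᶜ, x ∈ ball (0:ℂ) 1 ∧ x ≠ w :=
      (eventually_nhdsWithin_of_eventually_nhds (isOpen_ball.mem_nhds hw)).and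
        self_mem_nhdsWithin
    have ht : Tendsto (psi φ G) (nhdsWithin w {w}ᶜ) (nhdsWithin z {z}ᶜ) := by
      refine tendsto_nhdsWithin_iff.2 ⟨(H.psi_contAt hw).tendsto.mono_left nhdsWithin_le_nhds, ?_⟩
      filter_upwards [h2] with x hx he
      apply hx.2
      rw [← H.phi_psi hx.1, mem_singleton_iff.1 he, hz, H.phi_psi hw]
    filter_upwards [h2, ht.eventually h0] with x hx hx'
    exact key x hx.1 hx'

lemma Setup.phi_frontier (H : Setup G l γ φ) {z : ℂ} (hz : z ∈ frontier G) : ‖φ z‖ = 1 := by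
  have hzc : z ∈ closure G := frontier_subset_closure hz
  have hzG : z ∉ G := by
    have := hz.2; rwa [H.op.interior_eq] at this
  have hnb : (nhdsWithin z G).NeBot := mem_closure_iff_nhdsWithin_neBot.1 hzc
  have ht : Tendsto φ (nhdsWithin z G) (nhds (φ z)) :=
    (H.cont z hzc).mono subset_closure
  have h1 : ‖φ z‖ ≤ 1 := by
    refine le_of_tendsto ht.norm ?_
    filter_upwards [self_mem_nhdsWithin] with x hx
    have := H.bij.mapsTo hx
    simp at this; exact this.le
  by_contra hne
  have hb : φ z ∈ ball (0:ℂ) 1 := by simp; exact lt_of_le_of_ne h1 hne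
  have ht2 : Tendsto (fun x => psi φ G (φ x)) (nhdsWithin z G) (nhds (psi φ G (φ z))) :=
    (H.psi_contAt hb).tendsto.comp ht
  have ht3 : Tendsto (fun x => psi φ G (φ x)) (nhdsWithin z G) (nhds z) := by
    refine Tendsto.congr' ?_ (tendsto_id.mono_left nhdsWithin_le_nhds)
    filter_upwards [self_mem_nhdsWithin] with x hx using (H.psi_phi hx).symm
  exact hzG (tendsto_nhds_unique ht2 ht3 ▸ H.psi_mem hb)

lemma Setup.phi_gamma (H : Setup G l γ φ) (s : ℝ) : ‖φ (γ s)‖ = 1 :=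
  H.phi_frontier (H.ran ▸ mem_range_self s)

lemma Setup.gamma_mem (H : Setup G l γ φ) (s : ℝ) : γ s ∈ closure G :=
  frontier_subset_closure (H.ran ▸ mem_range_self s)

lemma Setup.gamma_notMem (H : Setup G l γ φ) (s : ℝ) : γ s ∉ G := by
  have : γ s ∈ frontier G := H.ran ▸ mem_range_self s
  have := this.2; rwa [H.op.interior_eq] at this

lemma Setup.mem_or (H : Setup G l γ φ) {z : ℂ} (hz : z ∈ closure G) : z ∈ G ∨ ∃ s, γ s = z := by
  by_cases h : z ∈ G
  · exact Or.inl h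
  · refine Or.inr ?_
    have : z ∈ frontier G := ⟨hz, by rwa [H.op.interior_eq]⟩
    rwa [← H.ran] at this

lemma Setup.exists_gamma (H : Setup G l γ φ) {c : ℂ} (hc : ‖c‖ = 1) : ∃ s, φ (γ s) = c := by
  have h1 : IsClosed (φ '' closure G) := (H.cpt.image_of_continuousOn H.cont).isClosed
  have h2 : ball (0:ℂ) 1 ⊆ φ '' closure G := by
    intro w hw
    obtain ⟨z, hz, rfl⟩ := H.bij.surjOn hw
    exact ⟨z, subset_closure hz, rfl⟩
  have h3 : closedBall (0:ℂ) 1 ⊆ φ '' closure G := by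
    rw [← closure_ball (0:ℂ) one_ne_zero]; exact closure_minimal h2 h1
  obtain ⟨z, hz, rfl⟩ := h3 (show c ∈ closedBall (0:ℂ) 1 by simp [hc])
  rcases H.mem_or hz with h | ⟨s, rfl⟩
  · have := H.bij.mapsTo h
    simp at this; linarith
  · exact ⟨s, rfl⟩

lemma Setup.fib_nhds (H : Setup G l γ φ) {c : ℂ} {N : Set ℂ} (hN : IsOpen N)
    (h : ∀ z ∈ closure G, φ z = c → z ∈ N) :
    ∀ᶠ w in nhds c, ∀ z ∈ closure G, φ z = w → z ∈ N := by
  have h1 : IsClosed (φ '' (closure G \ N)) :=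
    ((H.cpt.diff hN).image_of_continuousOn (H.cont.mono sdiff_subset)).isClosed
  have h2 : c ∈ (φ '' (closure G \ N))ᶜ := by
    rintro ⟨z, ⟨hz, hz'⟩, rfl⟩; exact hz' (h z hz rfl)
  filter_upwards [h1.isOpen_compl.mem_nhds h2] with w hw z hz e
  by_contra hn
  exact hw ⟨z, ⟨hz, hn⟩, e⟩

lemma Setup.fib_conn (H : Setup G l γ φ) (c : ℂ) :
    IsPreconnected {z | z ∈ closure G ∧ φ z = c} := by
  rw [isPreconnected_closed_iff]
  rintro t t' ht ht' hsub ⟨a, ⟨haG, hac⟩, hat⟩ ⟨b, ⟨hbG, hbc⟩, hbt⟩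
  by_contra hne
  rw [not_nonempty_iff_eq_empty] at hne
  have hK : IsCompact {z | z ∈ closure G ∧ φ z = c} := by
    have := H.cont.preimage_isClosed_of_isClosed isClosed_closure (isClosed_singleton (x := c))
    exact H.cpt.of_isClosed_subset this (fun z hz => hz.1)
  obtain ⟨U, V, hU, hV, hKU, hKV, hd⟩ := SeparatedNhds.of_isCompact_isCompact
    (hK.inter_right ht) (hK.inter_right ht') (by
      rw [Set.disjoint_iff_inter_eq_empty, ← hne]; ext x; simp; tauto)
  have hev := H.fib_nhds (c := c) (hU.union hV) (fun z hz e => by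
    rcases hsub ⟨hz, e⟩ with h | h
    · exact Or.inl (hKU ⟨⟨hz, e⟩, h⟩)
    · exact Or.inr (hKV ⟨⟨hz, e⟩, h⟩))
  obtain ⟨r, hr, hb⟩ := Metric.eventually_nhds_iff_ball.1 hev
  have hS : IsPreconnected (psi φ G '' (ball 0 1 ∩ ball c r)) :=
    (((convex_ball _ _).inter (convex_ball _ _)).isPreconnected).image _
      (H.psi_contOn.mono inter_subset_left)
  have hSsub : psi φ G '' (ball 0 1 ∩ ball c r) ⊆ U ∪ V := by
    rintro _ ⟨w, ⟨hw, hw'⟩, rfl⟩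
    exact hb w hw' _ (subset_closure (H.psi_mem hw)) (H.phi_psi hw)
  have meet : ∀ (W : Set ℂ) (a : ℂ), IsOpen W → a ∈ W → a ∈ closure G → φ a = c →
      (psi φ G '' (ball 0 1 ∩ ball c r) ∩ W).Nonempty := by
    intro W a hW haW haG hac
    have hnb : (nhdsWithin a G).NeBot := mem_closure_iff_nhdsWithin_neBot.1 haG
    have ht : Tendsto φ (nhdsWithin a G) (nhds (φ a)) := (H.cont a haG).mono subset_closure
    rw [hac] at ht
    have e1 := ht.eventually (ball_mem_nhds c hr)
    have e2 : ∀ᶠ x in nhdsWithin a G, x ∈ W := mem_nhdsWithin_of_mem_nhds (hW.mem_nhds haW)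
    have e3 : ∀ᶠ x in nhdsWithin a G, x ∈ G := self_mem_nhdsWithin
    obtain ⟨x, h1, h2, h3⟩ := (e1.and (e2.and e3)).exists
    exact ⟨x, ⟨φ x, ⟨H.bij.mapsTo h3, h1⟩, H.psi_phi h3⟩, h2⟩
  obtain ⟨x, -, hxU, hxV⟩ := hS U V hU hV hSsub (meet U a hU (hKU ⟨⟨haG, hac⟩, hat⟩) haG hac)
    (meet V b hV (hKV ⟨⟨hbG, hbc⟩, hbt⟩) hbG hbc)
  exact Set.disjoint_left.1 hd hxU hxV

lemma Setup.psi_lim (H : Setup G l γ φ) {c z : ℂ} (h : ∀ x ∈ closure G, φ x = c → x = z) :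
    Tendsto (psi φ G) (nhdsWithin c (ball 0 1)) (nhds z) := by
  rw [tendsto_def]
  intro N hN
  obtain ⟨t, hts, ht, hzt⟩ := _root_.mem_nhds_iff.1 hN
  have := H.fib_nhds (c := c) ht (fun x hx e => by rw [h x hx e]; exact hzt)
  filter_upwards [mem_nhdsWithin_of_mem_nhds this, self_mem_nhdsWithin] with w hw hw'
  exact hts (hw _ (subset_closure (H.psi_mem hw')) (H.phi_psi hw'))

end


section
variable {G : Set ℂ} {l : ℝ} {γ : ℝ → ℂ} {φ : ℂ → ℂ}

lemma Setup.mem_period (H : Setup G l γ φ) (a s : ℝ) : ∃ t ∈ Ico a (a + l), γ t = γ s :=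
  ⟨toIcoMod H.lpos a s, toIcoMod_mem_Ico H.lpos a s,
    H.per.sub_zsmul_eq (toIcoDiv H.lpos a s)⟩

lemma Setup.sep (H : Setup G l γ φ) {c : ℂ} {p q x y : ℝ} (hpq : p < q) (hql : q < p + l)
    (hx : x ∈ Ioo p q) (hy : y ∈ Ioo q (p + l)) (hxc : φ (γ x) = c) (hyc : φ (γ y) = c)
    (hp : φ (γ p) ≠ c) (hq : φ (γ q) ≠ c) : False := by
  have hc : ‖c‖ = 1 := hxc ▸ H.phi_gamma x
  have hK := H.fib_conn c
  rw [isPreconnected_closed_iff] at hK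
  obtain ⟨z, ⟨hzG, hzc⟩, ⟨a, ha, haz⟩, ⟨b, hb, hbz⟩⟩ := hK (γ '' Icc p q) (γ '' Icc q (p + l))
    (isCompact_Icc.image H.lip.continuous).isClosed
    (isCompact_Icc.image H.lip.continuous).isClosed
    (by
      rintro z ⟨hz, hzc⟩
      rcases H.mem_or hz with h | ⟨s, rfl⟩
      · have := H.bij.mapsTo h
        simp [hzc] at this; linarith
      · obtain ⟨t, ht, hts⟩ := H.mem_period p s
        rw [← hts]
        rcases le_total t q with h | h
        · exact Or.inl ⟨t, ⟨ht.1, h⟩, rfl⟩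
        · exact Or.inr ⟨t, ⟨h, ht.2.le⟩, rfl⟩)
    ⟨γ x, ⟨H.gamma_mem x, hxc⟩, x, Ioo_subset_Icc_self hx, rfl⟩
    ⟨γ y, ⟨H.gamma_mem y, hyc⟩, y, Ioo_subset_Icc_self hy, rfl⟩
  obtain ⟨n, hn⟩ := H.inj a b (haz.trans hbz.symm)
  have hl := H.lpos
  have h1 : (n : ℝ) < 1 := by
    by_contra hcon
    push Not at hcon
    nlinarith [ha.1, ha.2, hb.1, hb.2]
  have h2 : (-2 : ℝ) < n := by
    by_contra hcon
    push Not at hcon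
    nlinarith [ha.1, ha.2, hb.1, hb.2]
  have h1' : n < 1 := by exact_mod_cast h1
  have h2' : -2 < n := by exact_mod_cast h2
  have : n = 0 ∨ n = -1 := by omega
  rcases this with rfl | rfl
  · have : a = q := by push_cast at hn; linarith [ha.2, hb.1]
    apply hq; rw [← this, haz]; exact hzc
  · have : a = p := by push_cast at hn; linarith [ha.1, hb.2]
    apply hp; rw [← this, haz]; exact hzc

lemma Setup.exists_base (H : Setup G l γ φ) : ∃ s₀, ∀ s ∈ Ioo s₀ (s₀ + l), φ (γ s) ≠ φ (γ s₀) := by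
  have hcount : (range (fun q : ℚ => φ (γ q))).Countable := countable_range _
  have hunc : ¬ (sphere (0:ℂ) 1).Countable := by
    intro h
    have h1 : (range (fun t : Ioo (0:ℝ) 1 => Complex.exp (t * I))).Countable :=
      h.mono (by rintro _ ⟨t, rfl⟩; simp [Complex.norm_exp_ofReal_mul_I])
    have h2 : Function.Injective (fun t : Ioo (0:ℝ) 1 => Complex.exp (t * I)) := by
      intro a b hab
      have ha := a.2; have hb := b.2
      have h3 := congrArg Complex.arg hab
      have := Real.pi_gt_three
      simp only [] at h3
      rw [Complex.arg_exp_mul_I, Complex.arg_exp_mul_I,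
        (toIocMod_eq_self _).2 ⟨by linarith [ha.1], by linarith [ha.2]⟩,
        (toIocMod_eq_self _).2 ⟨by linarith [hb.1], by linarith [hb.2]⟩] at h3
      exact Subtype.ext h3
    have h4 : Countable (Ioo (0:ℝ) 1) := by
      have : Countable (range (fun t : Ioo (0:ℝ) 1 => Complex.exp (t * I))) := h1.to_subtype
      exact Function.Injective.countable (Equiv.ofInjective _ h2).injective
    exact (Cardinal.Real.Ioo_countable_iff.1 (Set.countable_coe_iff.1 h4)).not_gt one_pos
  obtain ⟨c, hc, hcr⟩ : ∃ c ∈ sphere (0:ℂ) 1, c ∉ range (fun q : ℚ => φ (γ q)) := by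
    by_contra hcon
    push Not at hcon
    exact hunc (hcount.mono hcon)
  obtain ⟨s₀, hs₀⟩ := H.exists_gamma (c := c) (by simpa using hc)
  refine ⟨s₀, fun s hs he => ?_⟩
  obtain ⟨q1, h1, h2⟩ := exists_rat_btwn hs.1
  obtain ⟨q2, h3, h4⟩ := exists_rat_btwn hs.2
  refine H.sep (c := c) (p := q1) (q := q2) (x := s) (y := s₀ + l) (by linarith) (by linarith)
    ⟨h2, h3⟩ ⟨h4, by linarith⟩ (he.trans hs₀) (by rw [H.per]; exact hs₀) ?_ ?_
  · exact fun h => hcr ⟨q1, h⟩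
  · exact fun h => hcr ⟨q2, h⟩

/-- angle relative to base value -/
noncomputable def ang (c w : ℂ) : ℝ := Real.pi + Complex.arg (-(w / c))

lemma ang_slit {c w : ℂ} (hc : ‖c‖ = 1) (hw : ‖w‖ = 1) (hne : w ≠ c) : -(w / c) ∈ slitPlane := by
  have hc0 : c ≠ 0 := by intro h; simp [h] at hc
  have hn : ‖-(w/c)‖ = 1 := by simp [hc, hw]
  rw [mem_slitPlane_iff_arg]
  refine ⟨fun h => hne ?_, by intro h; simp [h] at hn⟩
  have := Complex.norm_mul_exp_arg_mul_I (-(w/c))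
  rw [hn, h, Complex.exp_pi_mul_I] at this
  have h2 : w / c = 1 := by
    have := this; simp at this; exact this.symm
  field_simp at h2; exact h2

lemma ang_mem {c w : ℂ} (hc : ‖c‖ = 1) (hw : ‖w‖ = 1) (hne : w ≠ c) :
    ang c w ∈ Ioo 0 (2 * Real.pi) := by
  have h := mem_slitPlane_iff_arg.1 (ang_slit hc hw hne)
  have h1 := Complex.neg_pi_lt_arg (-(w/c))
  have h2 := lt_of_le_of_ne (Complex.arg_le_pi (-(w/c))) h.1
  constructor <;> simp only [ang] <;> linarith

lemma ang_exp {c w : ℂ} (hc : ‖c‖ = 1) (hw : ‖w‖ = 1) : w = c * Complex.exp (ang c w * I) := by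
  have hc0 : c ≠ 0 := by intro h; simp [h] at hc
  have hn : ‖-(w/c)‖ = 1 := by simp [hc, hw]
  have := Complex.norm_mul_exp_arg_mul_I (-(w/c))
  rw [hn] at this
  simp only [ang]
  push_cast at this ⊢
  rw [add_mul, Complex.exp_add, Complex.exp_pi_mul_I]
  rw [one_mul] at this
  rw [this]; field_simp

lemma exp_inj {s t : ℝ} (hs : s ∈ Ioo 0 (2 * Real.pi)) (ht : t ∈ Ioo 0 (2 * Real.pi))
    (h : Complex.exp (s * I) = Complex.exp (t * I)) : s = t := by
  obtain ⟨n, hn⟩ := Complex.exp_eq_exp_iff_exists_int.1 h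
  have hn' : (s : ℂ) = t + n * (2 * Real.pi) := by
    have : ((s:ℂ) - (t + n * (2 * Real.pi))) * I = 0 := by rw [sub_mul, hn]; ring
    simpa [sub_eq_zero] using this
  have h3 : s = t + n * (2 * Real.pi) := by exact_mod_cast hn'
  have hp := Real.pi_pos
  have h1 : (n : ℝ) < 1 := by
    by_contra hcon; push Not at hcon; nlinarith [hs.1, hs.2, ht.1, ht.2]
  have h2 : (-1 : ℝ) < n := by
    by_contra hcon; push Not at hcon; nlinarith [hs.1, hs.2, ht.1, ht.2]
  have h1' : n < 1 := by exact_mod_cast h1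
  have h2' : -1 < n := by exact_mod_cast h2
  have : n = 0 := by omega
  subst this; simpa using h3

structure Good (G : Set ℂ) (l : ℝ) (γ : ℝ → ℂ) (φ : ℂ → ℂ) (c : ℂ) (θ : ℝ → ℝ) : Prop
    extends Setup G l γ φ where
  cn : ‖c‖ = 1
  mono : Monotone θ
  t0 : θ 0 = 0
  tl : θ l = 2 * Real.pi
  maps : ∀ s ∈ Ioo 0 l, θ s ∈ Ioo 0 (2 * Real.pi)
  ex : ∀ s ∈ Icc 0 l, φ (γ s) = c * Complex.exp (θ s * I)

lemma Setup.shift (H : Setup G l γ φ) (s₀ : ℝ) : Setup G l (fun s => γ (s₀ + s)) φ where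
  op := H.op
  bd := H.bd
  conn := H.conn
  lpos := H.lpos
  lip := LipschitzWith.of_dist_le_mul fun x y => by
    simpa using H.lip.dist_le_mul (s₀ + x) (s₀ + y)
  per := fun x => by simp only [← add_assoc]; exact H.per _
  inj := fun s t h => by
    obtain ⟨n, hn⟩ := H.inj _ _ h
    exact ⟨n, by linarith⟩
  ran := by
    rw [← H.ran]
    exact (Equiv.addLeft s₀).surjective.range_comp γ
  unit := by
    have := (measurePreserving_add_left volume s₀).quasiMeasurePreserving.ae H.unit
    filter_upwards [this] with s hs
    rw [deriv_comp_const_add]; exact hs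
  diff := H.diff
  bij := H.bij
  cont := H.cont

lemma Setup.rev (H : Setup G l γ φ) : Setup G l (fun s => γ (-s)) φ where
  op := H.op
  bd := H.bd
  conn := H.conn
  lpos := H.lpos
  lip := LipschitzWith.of_dist_le_mul fun x y => by
    simpa using H.lip.dist_le_mul (-x) (-y)
  per := fun x => by simp only [neg_add]; exact H.per.neg _
  inj := fun s t h => by
    obtain ⟨n, hn⟩ := H.inj _ _ h
    exact ⟨-n, by push_cast; linarith⟩
  ran := by
    rw [← H.ran]
    exact (Equiv.neg ℝ).surjective.range_comp γ
  unit := by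
    have := (Measure.measurePreserving_neg (volume : Measure ℝ)).quasiMeasurePreserving.ae H.unit
    filter_upwards [this] with s hs
    rw [deriv_comp_neg, norm_neg]; exact hs
  diff := H.diff
  bij := H.bij
  cont := H.cont

lemma Setup.good_of_mono (H : Setup G l γ φ) (hb : ∀ s ∈ Ioo 0 l, φ (γ s) ≠ φ (γ 0))
    (hm : MonotoneOn (fun s => ang (φ (γ 0)) (φ (γ s))) (Ioo 0 l)) :
    ∃ c θ, Good G l γ φ c θ := by
  have hl := H.lpos
  have hp := Real.pi_pos
  have hmem : ∀ s ∈ Ioo 0 l, ang (φ (γ 0)) (φ (γ s)) ∈ Ioo 0 (2 * Real.pi) := fun s hs =>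
    ang_mem (H.phi_gamma 0) (H.phi_gamma s) (hb s hs)
  refine ⟨φ (γ 0), fun s => if s ≤ 0 then 0 else if l ≤ s then 2 * Real.pi else
    ang (φ (γ 0)) (φ (γ s)), { H with
      cn := H.phi_gamma 0
      mono := ?_
      t0 := by simp
      tl := by simp [hl.not_ge]
      maps := ?_
      ex := ?_ }⟩
  · intro s t hst
    simp only
    by_cases h1 : t ≤ 0
    · simp [h1, hst.trans h1]
    by_cases h2 : l ≤ s
    · simp [h1, (hl.trans_le h2).not_ge, h2, h2.trans hst]
    by_cases h3 : s ≤ 0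
    · simp only [h3, if_true, h1, if_false]
      split_ifs with h
      · positivity
      · push Not at h1 h; exact (hmem t ⟨h1, h⟩).1.le
    · simp only [h3, h1, h2, if_false]
      push Not at h1 h2 h3
      split_ifs with h
      · exact (hmem s ⟨h3, h2⟩).2.le
      · push Not at h; exact hm ⟨h3, h2⟩ ⟨h1, h⟩ hst
  · intro s hs
    simp only [hs.1.not_ge, hs.2.not_ge, if_false]; exact hmem s hs
  · intro s hs
    split_ifs with h h'
    · have : s = 0 := le_antisymm h hs.1
      simp [this]
    · have : s = l := le_antisymm hs.2 h'
      have e := H.per 0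
      rw [zero_add] at e
      rw [this, e]; push_cast; rw [Complex.exp_two_pi_mul_I, mul_one]
    · exact ang_exp (H.phi_gamma 0) (H.phi_gamma s)

lemma mono_or_anti {f : ℝ → ℝ} {a b : ℝ} (hf : ContinuousOn f (Ioo a b))
    (h : ∀ x ∈ Ioo a b, ∀ y ∈ Ioo a b, ∀ z ∈ Ioo a b, x < y → y < z → f x = f z → f y = f x) :
    MonotoneOn f (Ioo a b) ∨ AntitoneOn f (Ioo a b) := by
  by_contra hcon
  push Not at hcon
  obtain ⟨h1, h2⟩ := hcon
  rw [monotoneOn_iff_monotone] at h1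
  rw [antitoneOn_iff_antitone] at h2
  obtain ⟨⟨x, hx⟩, ⟨y, hy⟩, ⟨z, hz⟩, hxy, hyz, hor⟩ :=
    not_monotone_not_antitone_iff_exists_le_le.1 ⟨h1, h2⟩
  simp only [Subtype.mk_le_mk] at hxy hyz hor
  have c1 : ContinuousOn f (Icc x y) := hf.mono (Icc_subset_Ioo hx.1 hy.2)
  have c2 : ContinuousOn f (Icc y z) := hf.mono (Icc_subset_Ioo hy.1 hz.2)
  rcases hor with ⟨ha, hb⟩ | ⟨ha, hb⟩
  · obtain ⟨v, hv1, hv2⟩ := exists_between (max_lt ha hb)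
    rw [max_lt_iff] at hv1
    obtain ⟨p, hp, hpv⟩ := intermediate_value_Ioo hxy c1 ⟨hv1.1, hv2⟩
    obtain ⟨q, hq, hqv⟩ := intermediate_value_Ioo' hyz c2 ⟨hv1.2, hv2⟩
    have := h p ⟨hx.1.trans hp.1, hp.2.trans hy.2⟩ y hy q ⟨hy.1.trans hq.1, hq.2.trans hz.2⟩
      hp.2 hq.1 (hpv.trans hqv.symm)
    linarith
  · obtain ⟨v, hv1, hv2⟩ := exists_between (lt_min ha hb)
    rw [lt_min_iff] at hv2
    obtain ⟨p, hp, hpv⟩ := intermediate_value_Ioo' hxy c1 ⟨hv1, hv2.1⟩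
    obtain ⟨q, hq, hqv⟩ := intermediate_value_Ioo hyz c2 ⟨hv1, hv2.2⟩
    have := h p ⟨hx.1.trans hp.1, hp.2.trans hy.2⟩ y hy q ⟨hy.1.trans hq.1, hq.2.trans hz.2⟩
      hp.2 hq.1 (hpv.trans hqv.symm)
    linarith

lemma Setup.good_base (H : Setup G l γ φ) (hb : ∀ s ∈ Ioo 0 l, φ (γ s) ≠ φ (γ 0)) :
    (∃ c θ, Good G l γ φ c θ) ∨ (∃ c θ, Good G l (fun s => γ (-s)) φ c θ) := by
  have hl := H.lpos
  have hcont : Continuous (fun s => φ (γ s)) :=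
    H.cont.comp_continuous H.lip.continuous H.gamma_mem
  have hf : ContinuousOn (fun s => ang (φ (γ 0)) (φ (γ s))) (Ioo 0 l) := by
    intro s hs
    refine ContinuousAt.continuousWithinAt ?_
    unfold ang
    refine continuousAt_const.add ?_
    refine (Complex.continuousAt_arg (ang_slit (H.phi_gamma 0) (H.phi_gamma s) (hb s hs))).comp
      (f := fun s => -(φ (γ s) / φ (γ 0))) ?_
    exact ((hcont.div_const _).neg).continuousAt
  have hord : MonotoneOn (fun s => ang (φ (γ 0)) (φ (γ s))) (Ioo 0 l) ∨ AntitoneOn (fun s => ang (φ (γ 0)) (φ (γ s))) (Ioo 0 l) := by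
    refine mono_or_anti hf ?_
    intro x hx y hy z hz hxy hyz he
    have e1 := ang_exp (H.phi_gamma 0) (H.phi_gamma x)
    have e2 := ang_exp (H.phi_gamma 0) (H.phi_gamma z)
    have exz : φ (γ x) = φ (γ z) := by rw [e1, he, ← e2]
    by_cases hyx : φ (γ y) = φ (γ x)
    · rw [hyx]
    · exfalso
      exact H.sep (c := φ (γ x)) (p := 0) (q := y) (x := x) (y := z) hy.1 (by linarith [hy.2])
        ⟨hx.1, hxy⟩ ⟨hyz, by linarith [hz.2]⟩ rfl exz.symm (hb x hx).symm hyx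
  rcases hord with h | h
  · exact Or.inl (H.good_of_mono hb h)
  · right
    have hrefl : ∀ s, γ (-s) = γ (l - s) := fun s => by
      have := H.per (-s); rw [← this]; congr 1; ring
    refine H.rev.good_of_mono ?_ ?_
    · intro s hs
      simp only [neg_zero]; rw [hrefl]; exact hb _ ⟨by linarith [hs.2], by linarith [hs.1]⟩
    · intro s hs t ht hst
      simp only [neg_zero]; rw [hrefl, hrefl]
      exact h ⟨by linarith [ht.2], by linarith [ht.1]⟩ ⟨by linarith [hs.2], by linarith [hs.1]⟩
        (by linarith)

lemma Setup.exists_good (H : Setup G l γ φ) : ∃ s₀ : ℝ,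
    (∃ c θ, Good G l (fun s => γ (s₀ + s)) φ c θ) ∨
    (∃ c θ, Good G l (fun s => γ (s₀ + -s)) φ c θ) := by
  obtain ⟨s₀, h⟩ := H.exists_base
  refine ⟨s₀, (H.shift s₀).good_base fun s hs => ?_⟩
  simp only [add_zero]
  exact h _ ⟨by linarith [hs.1], by linarith [hs.2]⟩

end


section
variable {G : Set ℂ} {l : ℝ} {γ : ℝ → ℂ} {φ : ℂ → ℂ} {c : ℂ} {θ : ℝ → ℝ}

lemma Setup.hcont (H : Setup G l γ φ) : Continuous (fun s => φ (γ s)) :=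
    H.cont.comp_continuous H.lip.continuous H.gamma_mem

lemma lip_int0 (h : LipschitzWith 1 γ) (a b : ℝ) : IntervalIntegrable (deriv γ) volume a b :=
  (intervalIntegrable_const (c := (1:ℝ))).mono_fun (measurable_deriv γ).aestronglyMeasurable
      (Eventually.of_forall fun s => by simpa using lip_deriv_le h s)

lemma lip_int (h : LipschitzWith 1 γ) {f : ℝ → ℂ} {a b : ℝ} (hf : ContinuousOn f (uIcc a b)) :
    IntervalIntegrable (fun s => f s * deriv γ s) volume a b :=
  (lip_int0 h a b).continuousOn_mul hf

lemma lip_ftc (h : LipschitzWith 1 γ) {a b : ℝ} (hab : a ≤ b) :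
    ∫ s in a..b, deriv γ s = γ b - γ a := by
  have := (comp_ftc h isOpen_univ (H := id) (H' := fun _ => 1) (fun z _ => hasDerivAt_id z) hab
      (fun s _ => mem_univ _)).2
  simpa using this

lemma Setup.gl (H : Setup G l γ φ) : γ l = γ 0 := by simpa using H.per 0

lemma Good.surj (H : Good G l γ φ c θ) {t : ℝ} {s : ℝ} (ht : t ∈ Ioo 0 (2 * Real.pi))
    (hs : s ∈ Ico 0 l) (h : φ (γ s) = c * Complex.exp (t * I)) : s ∈ Ioo 0 l ∧ θ s = t := by
  have hc0 : c ≠ 0 := by intro h; have := H.cn; simp [h] at this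
  have h0 : s ≠ 0 := by
    rintro rfl
    have e := H.ex 0 ⟨le_rfl, H.lpos.le⟩
    rw [h, H.t0] at e
    have e2 := mul_left_cancel₀ hc0 e
    simp only [ofReal_zero, zero_mul, Complex.exp_zero] at e2
    obtain ⟨n, hn⟩ := Complex.exp_eq_one_iff.1 e2
    have : t = n * (2 * Real.pi) := by
      have h3 : (t : ℂ) * I = (n * (2 * Real.pi)) * I := by rw [hn]; ring
      have h4 := mul_right_cancel₀ I_ne_zero h3
      exact_mod_cast h4
    have hp := Real.pi_pos
    have h1 : (n:ℝ) < 1 := by by_contra hh; push Not at hh; nlinarith [ht.2]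
    have h2 : (0:ℝ) < n := by by_contra hh; push Not at hh; nlinarith [ht.1]
    have h1' : n < 1 := by exact_mod_cast h1
    have h2' : 0 < n := by exact_mod_cast h2
    omega
  have hs' : s ∈ Ioo 0 l := ⟨lt_of_le_of_ne hs.1 (Ne.symm h0), hs.2⟩
  refine ⟨hs', exp_inj (H.maps s hs') ht ?_⟩
  have e := H.ex s ⟨hs.1, hs.2.le⟩
  rw [h] at e
  exact (mul_left_cancel₀ hc0 e).symm

lemma Good.exists_pre (H : Good G l γ φ c θ) {t : ℝ} (ht : t ∈ Ioo 0 (2 * Real.pi)) :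
    ∃ s ∈ Ioo 0 l, θ s = t := by
  obtain ⟨s, hs⟩ := H.exists_gamma (c := c * Complex.exp (t * I))
    (by rw [norm_mul, H.cn, Complex.norm_exp_ofReal_mul_I, one_mul])
  obtain ⟨s', hs', e⟩ := H.mem_period 0 s
  rw [zero_add] at hs'
  exact ⟨s', H.surj ht hs' (by rw [e, hs])⟩

lemma Good.one (H : Good G l γ φ c θ) {F : ℂ → ℂ} {R : ℝ} (hR : 1 < R)
    (hF : DifferentiableOn ℂ F (ball 0 R)) :
    ∫ s in (0:ℝ)..l, F (φ (γ s)) * deriv γ s = 0 := by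
  have hl := H.lpos
  have hpi := Real.pi_pos
  set e : ℝ → ℂ := fun t => c * Complex.exp (t * I) with he
  have hen : ∀ t, ‖e t‖ = 1 := fun t => by
    rw [he]; simp only; rw [norm_mul, H.cn, Complex.norm_exp_ofReal_mul_I, one_mul]
  have heR : ∀ t, e t ∈ ball (0:ℂ) R := fun t => by simp [hen t, hR]
  have hec : Continuous e := by rw [he]; fun_prop
  have hed : ∀ t, HasDerivAt e (e t * I) t := by
    intro t
    have h1 : HasDerivAt (fun t : ℝ => (t:ℂ) * I) (1 * I) t :=
      (Complex.ofRealCLM.hasDerivAt (x := t)).mul_const I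
    have := (h1.cexp).const_mul c
    have e2 : e t * I = c * (Complex.exp (t * I) * (1 * I)) := by simp only [he]; ring
    rw [e2]; exact this
  set k : ℝ → ℂ := fun t => deriv F (e t) * (e t * I) with hk
  have hFd : ∀ t, HasDerivAt (fun t => F (e t)) (k t) t := by
    intro t
    exact ((hF.differentiableAt (isOpen_ball.mem_nhds (heR t))).hasDerivAt).comp t (hed t)
  have hdF : DifferentiableOn ℂ (deriv F) (ball 0 R) := hF.deriv isOpen_ball
  have hkc : Continuous k :=
    (hdF.continuousOn.comp_continuous hec heR).mul (hec.mul continuous_const)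
  have hFint : ∀ τ, ∫ t in (0:ℝ)..τ, k t = F (e τ) - F (e 0) := fun τ =>
    intervalIntegral.integral_eq_sub_of_hasDerivAt (fun t _ => hFd t)
      (hkc.intervalIntegrable _ _)
  have hk2 : ∫ t in (0:ℝ)..(2*Real.pi), k t = 0 := by
    rw [hFint]
    have : e (2 * Real.pi) = e 0 := by
      simp only [he]; push_cast; rw [Complex.exp_two_pi_mul_I]; simp
    rw [this, sub_self]
  -- bad set
  have hbad : {t | ∃ x y, x < y ∧ θ x = t ∧ θ y = t}.Countable := H.mono.countable_setOfPred_two_preimages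
  have hae : ∀ᵐ t ∂(volume.restrict (Ioc 0 (2*Real.pi))), t ∈ Ioo 0 (2*Real.pi) ∧
      ¬ ∃ x y, x < y ∧ θ x = t ∧ θ y = t := by
    rw [ae_restrict_iff' measurableSet_Ioc]
    filter_upwards [hbad.ae_notMem volume, (countable_singleton (2*Real.pi)).ae_notMem volume]
      with t h1 h2 h3
    exact ⟨⟨h3.1, lt_of_le_of_ne h3.2 h2⟩, h1⟩
  have hσ : ∃ σ : ℝ → ℝ, ∀ t ∈ Ioo 0 (2*Real.pi), σ t ∈ Ioo 0 l ∧ θ (σ t) = t := by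
    have : ∀ t : ℝ, ∃ s, t ∈ Ioo 0 (2*Real.pi) → s ∈ Ioo 0 l ∧ θ s = t := by
      intro t
      by_cases ht : t ∈ Ioo 0 (2*Real.pi)
      · obtain ⟨s, h1, h2⟩ := H.exists_pre ht
        exact ⟨s, fun _ => ⟨h1, h2⟩⟩
      · exact ⟨0, fun h => absurd h ht⟩
    choose σ hσ using this
    exact ⟨σ, hσ⟩
  obtain ⟨σ, hσ⟩ := hσ
  -- Fubini
  set S : Set (ℝ × ℝ) := {p | p.2 < θ p.1} with hS
  have hSm : MeasurableSet S := measurableSet_lt measurable_snd (H.mono.measurable.comp measurable_fst)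
  set f : ℝ → ℝ → ℂ := fun s t => S.indicator (fun p => deriv γ p.1 * k p.2) (s, t) with hf
  have hfi : Integrable (Function.uncurry f)
      ((volume.restrict (Ioc 0 l)).prod (volume.restrict (Ioc 0 (2*Real.pi)))) := by
    have h1 : Integrable (deriv γ) (volume.restrict (Ioc 0 l)) := (lip_int0 H.lip 0 l).1
    have h2 : Integrable k (volume.restrict (Ioc 0 (2*Real.pi))) :=
      (hkc.intervalIntegrable 0 (2*Real.pi)).1
    exact (h1.mul_prod h2).indicator hSm
  have hswap := integral_integral_swap hfi
  have hin1 : ∀ s ∈ Ioc 0 l, ∫ t in Ioc 0 (2*Real.pi), f s t = (F (φ (γ s)) - F (e 0)) * deriv γ s := by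
    intro s hs
    have h1 : θ s ≤ 2*Real.pi := by rw [← H.tl]; exact H.mono hs.2
    have h0 : 0 ≤ θ s := by rw [← H.t0]; exact H.mono hs.1.le
    have : ∀ t, f s t = (Iio (θ s)).indicator (fun t => deriv γ s * k t) t := by
      intro t; simp only [hf, hS, indicator, Set.mem_ofPred_eq, mem_Iio]
    simp_rw [this]
    rw [setIntegral_indicator measurableSet_Iio]
    have hset : Ioc 0 (2*Real.pi) ∩ Iio (θ s) = Ioo 0 (θ s) := by
      ext t; simp only [mem_inter_iff, mem_Ioc, mem_Iio, mem_Ioo]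
      constructor
      · rintro ⟨⟨a, b⟩, d⟩; exact ⟨a, d⟩
      · rintro ⟨a, d⟩; exact ⟨⟨a, d.le.trans h1⟩, d⟩
    rw [hset, ← integral_Ioc_eq_integral_Ioo, ← intervalIntegral.integral_of_le h0,
      intervalIntegral.integral_const_mul, hFint, H.ex s ⟨hs.1.le, hs.2⟩]
    ring
  have hin2 : ∀ᵐ t ∂(volume.restrict (Ioc 0 (2*Real.pi))),
      ∫ s in Ioc 0 l, f s t = k t * (γ 0 - γ (σ t)) := by
    filter_upwards [hae] with t ht
    obtain ⟨hσ1, hσ2⟩ := hσ t ht.1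
    have : ∀ s ∈ Ioc 0 l, f s t = (Ioi (σ t)).indicator (fun s => k t * deriv γ s) s := by
      intro s hs
      have hiff : t < θ s ↔ σ t < s := by
        constructor
        · intro h; by_contra hh; push Not at hh
          have := H.mono hh; linarith
        · intro h
          refine lt_of_le_of_ne (hσ2 ▸ H.mono h.le) fun h' => ht.2 ⟨_, _, h, hσ2, h'.symm⟩
      simp only [hf, hS, indicator, Set.mem_ofPred_eq, mem_Ioi, hiff, mul_comm (k t)]
    rw [setIntegral_congr_fun measurableSet_Ioc this, setIntegral_indicator measurableSet_Ioi]
    have hset : Ioc 0 l ∩ Ioi (σ t) = Ioc (σ t) l := by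
      ext s; simp only [mem_inter_iff, mem_Ioc, mem_Ioi]
      constructor
      · rintro ⟨⟨a, b⟩, d⟩; exact ⟨d, b⟩
      · rintro ⟨a, d⟩; exact ⟨⟨hσ1.1.trans a, d⟩, a⟩
    rw [hset, ← intervalIntegral.integral_of_le hσ1.2.le, intervalIntegral.integral_const_mul,
      lip_ftc H.lip hσ1.2.le, H.gl]
  rw [setIntegral_congr_fun measurableSet_Ioc hin1, integral_congr_ae hin2] at hswap
  -- limit
  set r : ℕ → ℝ := fun n => 1 - 1 / ((n:ℝ) + 2) with hr
  have hr01 : ∀ n, r n ∈ Ioo (0:ℝ) 1 := by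
    intro n
    have h2 : (0:ℝ) < (n:ℝ) + 2 := by positivity
    constructor
    · simp only [hr, sub_pos]; rw [div_lt_one h2]; linarith [(Nat.cast_nonneg n : (0:ℝ) ≤ n)]
    · simp only [hr]; linarith [div_pos one_pos h2]
  have hrlim : Tendsto r atTop (nhds 1) := by
    have : Tendsto (fun n : ℕ => 1 / ((n:ℝ) + 2)) atTop (nhds 0) := by
      refine Tendsto.div_atTop tendsto_const_nhds ?_
      exact tendsto_atTop_add_const_right _ _ tendsto_natCast_atTop_atTop
    have h3 := (tendsto_const_nhds (x := (1:ℝ))).sub this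
    rw [sub_zero] at h3; exact h3
  have hrb : ∀ n t, (r n : ℂ) * e t ∈ ball (0:ℂ) 1 := by
    intro n t
    simp only [mem_ball_zero_iff, norm_mul, hen, mul_one, Complex.norm_real, Real.norm_eq_abs]
    rw [abs_of_pos (hr01 n).1]; exact (hr01 n).2
  have hz : ∀ n, ∫ t in Ioc 0 (2*Real.pi), k t * psi φ G (r n * e t) = 0 := by
    intro n
    have hd : DiffContOnCl ℂ (fun z => c * deriv F (c * z) * psi φ G (r n * (c * z))) (ball 0 1) := by
      refine DifferentiableOn.diffContOnCl ?_
      rw [closure_ball (0:ℂ) one_ne_zero]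
      refine ((differentiableOn_const c).mul (hdF.comp (by fun_prop) ?_)).mul
        (H.psi_diff.comp (by fun_prop) ?_)
      · intro z hz
        simp only [mem_closedBall_zero_iff] at hz
        simp [H.cn]; linarith
      · intro z hz
        simp only [mem_closedBall_zero_iff] at hz
        simp only [mem_ball_zero_iff, norm_mul, H.cn, one_mul, Complex.norm_real, Real.norm_eq_abs]
        rw [abs_of_pos (hr01 n).1]
        nlinarith [(hr01 n).1, (hr01 n).2]
    have h0 := hd.circleIntegral_eq_zero zero_le_one
    rw [circleIntegral, intervalIntegral.integral_of_le (by positivity)] at h0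
    rw [← h0]
    refine setIntegral_congr_fun measurableSet_Ioc fun t _ => ?_
    simp only [deriv_circleMap, circleMap, smul_eq_mul, hk, he]
    simp; ring
  obtain ⟨B, hB⟩ := H.bd.exists_norm_le
  have hlim : Tendsto (fun n => ∫ t in Ioc 0 (2*Real.pi), k t * psi φ G (r n * e t)) atTop
      (nhds (∫ t in Ioc 0 (2*Real.pi), k t * γ (σ t))) := by
    refine tendsto_integral_of_dominated_convergence (fun t => ‖k t‖ * B) ?_ ?_ ?_ ?_
    · intro n
      refine (hkc.mul ?_).aestronglyMeasurable
      exact H.psi_contOn.comp_continuous (by fun_prop) (hrb n)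
    · exact ((hkc.norm.mul continuous_const).intervalIntegrable 0 (2*Real.pi)).1
    · intro n
      refine Eventually.of_forall fun t => ?_
      rw [norm_mul]
      exact mul_le_mul_of_nonneg_left (hB _ (H.psi_mem (hrb n t))) (norm_nonneg _)
    · filter_upwards [hae] with t ht
      obtain ⟨hσ1, hσ2⟩ := hσ t ht.1
      refine tendsto_const_nhds.mul ?_
      have hps : Tendsto (psi φ G) (nhdsWithin (e t) (ball 0 1)) (nhds (γ (σ t))) := by
        refine H.psi_lim fun x hx hxe => ?_
        rcases H.mem_or hx with h | ⟨s, rfl⟩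
        · have := H.bij.mapsTo h
          rw [hxe] at this; simp [hen] at this
        · obtain ⟨s', hs', es⟩ := H.mem_period 0 s
          rw [zero_add] at hs'
          obtain ⟨h1, h2⟩ := H.surj ht.1 hs' (by rw [es]; exact hxe)
          rw [← es]; congr 1
          by_contra hne
          rcases lt_or_gt_of_ne hne with h | h
          · exact ht.2 ⟨_, _, h, h2, hσ2⟩
          · exact ht.2 ⟨_, _, h, hσ2, h2⟩
      refine hps.comp (tendsto_nhdsWithin_iff.2 ⟨?_, Eventually.of_forall fun n => hrb n t⟩)
      have : Tendsto (fun n => (r n : ℂ) * e t) atTop (nhds ((1:ℝ) * e t)) :=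
        ((Complex.continuous_ofReal.tendsto _).comp hrlim).mul_const _
      simpa using this
  have hkσ : ∫ t in Ioc 0 (2*Real.pi), k t * γ (σ t) = 0 := by
    refine tendsto_nhds_unique hlim ?_
    simp_rw [hz]; exact tendsto_const_nhds
  -- integrability of k * γσ not needed separately
  have hkσi : Integrable (fun t => k t * γ (σ t)) (volume.restrict (Ioc 0 (2*Real.pi))) := by
    have h1 : Integrable (fun t => k t * (γ 0 - γ (σ t))) (volume.restrict (Ioc 0 (2*Real.pi))) :=
      (hfi.integral_prod_right).congr hin2
    have h2 : Integrable (fun t => k t * γ 0) (volume.restrict (Ioc 0 (2*Real.pi))) :=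
      ((hkc.mul continuous_const).intervalIntegrable 0 (2*Real.pi)).1
    refine (h2.sub h1).congr (Eventually.of_forall fun t => ?_)
    simp only [Pi.sub_apply]; ring
  have hR0 : ∫ t in Ioc 0 (2*Real.pi), k t * (γ 0 - γ (σ t)) = 0 := by
    simp_rw [mul_sub]
    rw [integral_sub _ hkσi, hkσ, integral_mul_const,
      ← intervalIntegral.integral_of_le (by positivity), hk2]
    · simp
    · exact ((hkc.mul continuous_const).intervalIntegrable 0 (2*Real.pi)).1
  rw [hR0, ← intervalIntegral.integral_of_le hl.le] at hswap
  have hFc : Continuous (fun s => F (φ (γ s))) :=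
    hF.continuousOn.comp_continuous H.hcont (fun s => by simp [H.phi_gamma, hR])
  simp_rw [sub_mul] at hswap
  rw [intervalIntegral.integral_sub (lip_int H.lip hFc.continuousOn)
    (lip_int H.lip continuousOn_const), intervalIntegral.integral_const_mul, lip_ftc H.lip hl.le,
    H.gl, sub_self, mul_zero, sub_zero] at hswap
  exact hswap

end


section
variable {G : Set ℂ} {l : ℝ} {γ : ℝ → ℂ} {φ : ℂ → ℂ} {c : ℂ} {θ : ℝ → ℝ}

lemma avg_tendsto {u : ℂ} (hu : ‖u‖ = 1) (h1 : u ≠ 1) :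
    Tendsto (fun N : ℕ => ((N:ℂ) + 1)⁻¹ * ∑ n ∈ Finset.range (N+1), u ^ n) atTop (nhds 0) := by
  have hpos : 0 < ‖u - 1‖ := norm_pos_iff.2 (sub_ne_zero.2 h1)
  refine squeeze_zero_norm (a := fun N : ℕ => (1 / ((N:ℝ) + 1)) * (2 / ‖u - 1‖)) ?_ ?_
  · intro N
    rw [geom_sum_eq h1, norm_mul, norm_inv, norm_div]
    have h2 : ‖(N:ℂ) + 1‖ = (N:ℝ) + 1 := by
      rw [show (N:ℂ) + 1 = ((N + 1 : ℝ) : ℂ) by push_cast; ring, Complex.norm_real,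
        Real.norm_of_nonneg (by positivity)]
    have h3 : ‖u ^ (N+1) - 1‖ ≤ 2 := by
      refine (norm_sub_le _ _).trans ?_
      rw [norm_pow, hu]; norm_num
    rw [h2, one_div]
    gcongr
  · have := (tendsto_one_div_add_atTop_nhds_zero_nat (𝕜 := ℝ)).mul_const (2 / ‖u - 1‖)
    rwa [zero_mul] at this

lemma Good.theta_inj (H : Good G l γ φ c θ) {s t : ℝ} (hs : s ∈ Ioo 0 l) (ht : t ∈ Ioo 0 l)
    (hst : θ s = θ t) : s = t := by
  have hl := H.lpos
  set w := φ (γ s) with hw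
  have hwn : ‖w‖ = 1 := H.phi_gamma s
  have hw0 : w ≠ 0 := by intro h; rw [h] at hwn; simp at hwn
  set S := {x | x ∈ Icc 0 l ∧ φ (γ x) = w} with hS
  have hSθ : ∀ x, x ∈ S ↔ x ∈ Ioo 0 l ∧ θ x = θ s := by
    intro x
    constructor
    · rintro ⟨hx, hxw⟩
      have e : φ (γ x) = c * Complex.exp (θ s * I) := by
        rw [hxw, hw, H.ex s (Ioo_subset_Icc_self hs)]
      rcases eq_or_lt_of_le hx.2 with h | h
      · rw [h, H.gl] at e
        have := (H.surj (H.maps s hs) ⟨le_rfl, hl⟩ e).1.1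
        exact absurd this (lt_irrefl _)
      · exact H.surj (H.maps s hs) ⟨hx.1, h⟩ e
    · rintro ⟨hx, hxs⟩
      refine ⟨Ioo_subset_Icc_self hx, ?_⟩
      rw [hw, H.ex s (Ioo_subset_Icc_self hs), H.ex x (Ioo_subset_Icc_self hx), hxs]
  have hclosed : IsClosed S :=
    isClosed_Icc.inter (isClosed_singleton.preimage H.hcont)
  have hScpt : IsCompact S := isCompact_Icc.of_isClosed_subset hclosed (fun x hx => hx.1)
  have hsS : s ∈ S := (hSθ s).2 ⟨hs, rfl⟩
  have htS : t ∈ S := (hSθ t).2 ⟨ht, hst.symm⟩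
  have hord : S.OrdConnected := by
    refine ⟨fun x hx y hy z hz => ?_⟩
    have hx' := (hSθ x).1 hx
    have hy' := (hSθ y).1 hy
    refine (hSθ z).2 ⟨⟨hx'.1.1.trans_le hz.1, hz.2.trans_lt hy'.1.2⟩, le_antisymm ?_ ?_⟩
    · rw [← hy'.2]; exact H.mono hz.2
    · rw [← hx'.2]; exact H.mono hz.1
  have hIcc := eq_Icc_of_connected_compact ⟨⟨s, hsS⟩, hord.isPreconnected⟩ hScpt
  set a := sInf S
  set b := sSup S
  have hab : a ≤ b := by
    rw [hIcc] at hsS; exact hsS.1.trans hsS.2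
  have ha := ((hSθ a).1 (hIcc ▸ left_mem_Icc.2 hab)).1
  have hb := ((hSθ b).1 (hIcc ▸ right_mem_Icc.2 hab)).1
  have hlim : Tendsto (fun N : ℕ => ∫ x in Ioc 0 l,
      (((N:ℂ) + 1)⁻¹ * ∑ n ∈ Finset.range (N+1), (w⁻¹ * φ (γ x)) ^ n) * deriv γ x) atTop
      (nhds (∫ x in Ioc 0 l, S.indicator (deriv γ) x)) := by
    refine tendsto_integral_of_dominated_convergence (fun _ => 1) ?_ ?_ ?_ ?_
    · intro N
      refine (Continuous.aestronglyMeasurable ?_).mul (measurable_deriv γ).aestronglyMeasurable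
      exact continuous_const.mul (continuous_finsetSum _ fun n _ => (continuous_const.mul H.hcont).pow n)
    · exact integrable_const _
    · intro N
      refine Eventually.of_forall fun x => ?_
      rw [norm_mul, norm_mul, norm_inv]
      have h2 : ‖(N:ℂ) + 1‖ = (N:ℝ) + 1 := by
        rw [show (N:ℂ) + 1 = ((N + 1 : ℝ) : ℂ) by push_cast; ring, Complex.norm_real,
          Real.norm_of_nonneg (by positivity)]
      have h3 : ‖∑ n ∈ Finset.range (N+1), (w⁻¹ * φ (γ x)) ^ n‖ ≤ (N:ℝ) + 1 := by
        refine (norm_sum_le _ _).trans ?_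
        simp [hwn, H.phi_gamma]
      rw [h2]
      have h4 : ((N:ℝ) + 1)⁻¹ * ‖∑ n ∈ Finset.range (N+1), (w⁻¹ * φ (γ x)) ^ n‖ ≤ 1 := by
        rw [inv_mul_le_iff₀ (by positivity)]; simpa using h3
      exact mul_le_one₀ h4 (norm_nonneg _) (lip_deriv_le H.lip x)
    · rw [ae_restrict_iff' measurableSet_Ioc]
      refine Eventually.of_forall fun x hx => ?_
      by_cases hxS : x ∈ S
      · rw [indicator_of_mem hxS]
        have : w⁻¹ * φ (γ x) = 1 := by rw [hxS.2]; field_simp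
        simp only [this, one_pow, Finset.sum_const, Finset.card_range, nsmul_eq_mul, mul_one]
        refine (tendsto_const_nhds).congr fun N => ?_
        have : (N:ℂ) + 1 ≠ 0 := by exact_mod_cast Nat.succ_ne_zero N
        push_cast; field_simp
      · rw [indicator_of_notMem hxS]
        have hne : w⁻¹ * φ (γ x) ≠ 1 := by
          intro h
          apply hxS
          refine ⟨⟨hx.1.le, hx.2⟩, ?_⟩
          field_simp at h; exact h
        have := (avg_tendsto (by simp [hwn, H.phi_gamma]) hne).mul_const (deriv γ x)
        rwa [zero_mul] at this
  have h0 : ∀ N : ℕ, ∫ x in Ioc 0 l,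
      (((N:ℂ) + 1)⁻¹ * ∑ n ∈ Finset.range (N+1), (w⁻¹ * φ (γ x)) ^ n) * deriv γ x = 0 := by
    intro N
    rw [← intervalIntegral.integral_of_le hl.le]
    exact H.one (F := fun z => ((N:ℂ) + 1)⁻¹ * ∑ n ∈ Finset.range (N+1), (w⁻¹ * z) ^ n)
      (R := 2) (by norm_num) (by fun_prop)
  simp_rw [h0] at hlim
  have hzero := tendsto_nhds_unique hlim tendsto_const_nhds
  rw [setIntegral_indicator hclosed.measurableSet] at hzero
  have hset : Ioc 0 l ∩ S = Icc a b := by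
    rw [inter_eq_right.2]
    · exact hIcc
    · intro x hx; exact Ioo_subset_Ioc_self ((hSθ x).1 hx).1
  rw [hset, integral_Icc_eq_integral_Ioc, ← intervalIntegral.integral_of_le hab,
    lip_ftc H.lip hab, sub_eq_zero] at hzero
  obtain ⟨n, hn⟩ := H.inj _ _ hzero
  have h1 : (n:ℝ) < 1 := by by_contra hh; push Not at hh; nlinarith [ha.1, hb.2, ha.2]
  have h2 : (-1:ℝ) < n := by by_contra hh; push Not at hh; nlinarith [ha.1, hb.2, ha.2]
  have h1' : n < 1 := by exact_mod_cast h1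
  have h2' : -1 < n := by exact_mod_cast h2
  obtain rfl : n = 0 := by omega
  have hba : b = a := by simpa using hn
  rw [hIcc, hba, Icc_self] at hsS htS
  rw [mem_singleton_iff.1 hsS, mem_singleton_iff.1 htS]

lemma Good.gamma_inj (H : Good G l γ φ c θ) {s t : ℝ} (h : φ (γ s) = φ (γ t)) : γ s = γ t := by
  obtain ⟨s', hs, es⟩ := H.mem_period 0 s
  obtain ⟨t', ht, et⟩ := H.mem_period 0 t
  rw [zero_add] at hs ht
  rw [← es, ← et] at h ⊢
  by_cases ht' : t' ∈ Ioo 0 l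
  · obtain ⟨h1, h2⟩ := H.surj (H.maps t' ht') hs (by rw [h, H.ex t' (Ioo_subset_Icc_self ht')])
    rw [H.theta_inj h1 ht' h2]
  · by_cases hs' : s' ∈ Ioo 0 l
    · obtain ⟨h1, h2⟩ := H.surj (H.maps s' hs') ht (by rw [← h, H.ex s' (Ioo_subset_Icc_self hs')])
      exact absurd h1 ht'
    · have a1 : s' = 0 := by
        by_contra hh; exact hs' ⟨lt_of_le_of_ne hs.1 (Ne.symm hh), hs.2⟩
      have a2 : t' = 0 := by
        by_contra hh; exact ht' ⟨lt_of_le_of_ne ht.1 (Ne.symm hh), ht.2⟩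
      rw [a1, a2]

/-- Cauchy theorem. -/
lemma Good.cauchy (H : Good G l γ φ c θ) {f : ℂ → ℂ} (hc : ContinuousOn f (closure G))
    (hd : DifferentiableOn ℂ f G) : ∫ s in (0:ℝ)..l, f (γ s) * deriv γ s = 0 := by
  have hl := H.lpos
  obtain ⟨r, -, hr, hrl⟩ := exists_seq_strictMono_tendsto' (zero_lt_one (α := ℝ))
  have hrb : ∀ n s, (r n : ℂ) * φ (γ s) ∈ ball (0:ℂ) 1 := by
    intro n t
    simp only [mem_ball_zero_iff, norm_mul, H.phi_gamma, mul_one, Complex.norm_real,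
      Real.norm_eq_abs]
    rw [abs_of_pos (hr n).1]; exact (hr n).2
  have h0 : ∀ n, ∫ s in Ioc 0 l, f (psi φ G (r n * φ (γ s))) * deriv γ s = 0 := by
    intro n
    rw [← intervalIntegral.integral_of_le hl.le]
    refine H.one (F := fun w => f (psi φ G (r n * w))) (R := (r n)⁻¹)
      ((one_lt_inv₀ (hr n).1).2 (hr n).2) ?_
    have hm : MapsTo (fun w : ℂ => (r n : ℂ) * w) (ball 0 (r n)⁻¹) (ball 0 1) := by
      intro w hw
      simp only [mem_ball_zero_iff, norm_mul, Complex.norm_real, Real.norm_eq_abs] at hw ⊢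
      rw [abs_of_pos (hr n).1]
      calc r n * ‖w‖ < r n * (r n)⁻¹ := mul_lt_mul_of_pos_left hw (hr n).1
        _ = 1 := mul_inv_cancel₀ (hr n).1.ne'
    exact hd.comp (H.psi_diff.comp (by fun_prop) hm) (fun w hw => H.psi_mem (hm hw))
  obtain ⟨B, hB⟩ := H.cpt.exists_bound_of_continuousOn hc
  have hlim : Tendsto (fun n => ∫ s in Ioc 0 l, f (psi φ G (r n * φ (γ s))) * deriv γ s) atTop
      (nhds (∫ s in Ioc 0 l, f (γ s) * deriv γ s)) := by
    refine tendsto_integral_of_dominated_convergence (fun _ => B) ?_ (integrable_const _) ?_ ?_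
    · intro n
      refine (Continuous.aestronglyMeasurable ?_).mul (measurable_deriv γ).aestronglyMeasurable
      refine hc.comp_continuous (H.psi_contOn.comp_continuous ?_ (hrb n))
        (fun s => subset_closure (H.psi_mem (hrb n s)))
      exact continuous_const.mul H.hcont
    · intro n
      refine Eventually.of_forall fun s => ?_
      rw [norm_mul]
      have h1 := hB _ (subset_closure (H.psi_mem (hrb n s)))
      calc _ ≤ B * 1 := mul_le_mul h1 (lip_deriv_le H.lip s) (norm_nonneg _)
            ((norm_nonneg _).trans h1)
        _ = B := mul_one B
    · refine Eventually.of_forall fun s => ?_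
      refine Tendsto.mul_const _ ?_
      have hps : Tendsto (psi φ G) (nhdsWithin (φ (γ s)) (ball 0 1)) (nhds (γ s)) := by
        refine H.psi_lim fun x hx hxe => ?_
        rcases H.mem_or hx with h | ⟨t, rfl⟩
        · have := H.bij.mapsTo h
          rw [hxe] at this; simp [H.phi_gamma] at this
        · exact H.gamma_inj hxe
      have ht : Tendsto (fun n => (r n : ℂ) * φ (γ s)) atTop (nhds (φ (γ s))) := by
        have : Tendsto (fun n => (r n : ℂ) * φ (γ s)) atTop (nhds ((1:ℝ) * φ (γ s))) :=
          ((Complex.continuous_ofReal.tendsto _).comp hrl).mul_const _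
        simpa using this
      have h1 := hps.comp (tendsto_nhdsWithin_iff.2 ⟨ht, Eventually.of_forall fun n => hrb n s⟩)
      exact (hc (γ s) (H.gamma_mem s)).tendsto.comp (tendsto_nhdsWithin_iff.2 ⟨h1,
        Eventually.of_forall fun n => subset_closure (H.psi_mem (hrb n s))⟩)
  rw [intervalIntegral.integral_of_le hl.le]
  simp_rw [h0] at hlim
  exact tendsto_nhds_unique hlim tendsto_const_nhds

/-- index integral -/
noncomputable def idx (γ : ℝ → ℂ) (l : ℝ) (z : ℂ) : ℂ :=
  ∫ s in (0:ℝ)..l, (γ s - z)⁻¹ * deriv γ s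

lemma Good.idx_out (H : Good G l γ φ c θ) {z : ℂ} (hz : z ∉ closure G) : idx γ l z = 0 := by
  have hne : ∀ x ∈ closure G, x - z ≠ 0 := fun x hx h => hz (sub_eq_zero.1 h ▸ hx)
  refine H.cauchy (f := fun x => (x - z)⁻¹) ?_ ?_
  · exact ContinuousOn.inv₀ (by fun_prop) hne
  · exact DifferentiableOn.inv (by fun_prop) fun x hx => hne x (subset_closure hx)

lemma Setup.off_cont (H : Setup G l γ φ) {z : ℂ} (hz : ∀ s, γ s ≠ z) :
    Continuous (fun s => (γ s - z)⁻¹) :=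
  (H.lip.continuous.sub continuous_const).inv₀ (fun s => sub_ne_zero.2 (hz s))

lemma Setup.int_sq (H : Setup G l γ φ) {z : ℂ} (hz : ∀ s, γ s ≠ z) :
    ∫ s in (0:ℝ)..l, ((γ s - z)^2)⁻¹ * deriv γ s = 0 := by
  have := (comp_ftc H.lip (U := {z}ᶜ) isOpen_compl_singleton (H := fun x => -(x - z)⁻¹)
    (H' := fun x => ((x - z)^2)⁻¹) (fun x hx => ?_) H.lpos.le (fun s _ => hz s)).2
  · rw [this, H.gl, sub_self]
  · have h := ((hasDerivAt_id x).sub_const z).inv (sub_ne_zero.2 hx)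
    have h2 := h.neg
    refine h2.congr_deriv ?_
    simp [neg_div]

lemma Good.idx_const (H : Good G l γ φ c θ) {z w : ℂ} (hz : z ∈ G) (hw : w ∈ G) :
    idx γ l z = idx γ l w := by
  have hne : ∀ x ∈ G, ∀ s, γ s ≠ x := fun x hx s h => H.gamma_notMem s (h ▸ hx)
  have hloc : ∀ z₀ ∈ G, ∀ᶠ z in nhds z₀, idx γ l z = idx γ l z₀ := by
    intro z₀ hz₀
    obtain ⟨r, hr, hb⟩ := Metric.isOpen_iff.1 H.op z₀ hz₀
    filter_upwards [ball_mem_nhds z₀ hr] with z hz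
    have hzG := hb hz
    set U := {x : ℂ | ‖z - z₀‖ < ‖x - z₀‖} with hU
    have hUo : IsOpen U := isOpen_lt continuous_const (by fun_prop)
    have hmem : ∀ s, γ s ∈ U := by
      intro s
      have h1 : r ≤ ‖γ s - z₀‖ := by
        by_contra hh; push Not at hh
        exact H.gamma_notMem s (hb (by simpa [dist_eq_norm] using hh))
      have h2 : ‖z - z₀‖ < r := by simpa [dist_eq_norm] using hz
      exact h2.trans_le h1
    have hx0 : ∀ x ∈ U, x - z₀ ≠ 0 := fun x hx h => by
      have : ‖z - z₀‖ < ‖x - z₀‖ := hx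
      rw [h, norm_zero] at this; exact absurd this (norm_nonneg _).not_gt
    have hxz : ∀ x ∈ U, x - z ≠ 0 := fun x hx h => by
      have : ‖z - z₀‖ < ‖x - z₀‖ := hx
      rw [sub_eq_zero.1 h] at this; exact absurd this (lt_irrefl _)
    have hslit : ∀ x ∈ U, (x - z) / (x - z₀) ∈ slitPlane := by
      intro x hx
      have h0 := hx0 x hx
      have this : (x - z) / (x - z₀) - 1 = (z₀ - z) / (x - z₀) := by field_simp; ring
      have hnorm : ‖(x - z) / (x - z₀) - 1‖ < 1 := by
        rw [this, norm_div, div_lt_one (norm_pos_iff.2 h0), norm_sub_rev]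
        exact hx
      have h := Complex.mem_slitPlane_of_norm_lt_one hnorm
      rwa [add_sub_cancel] at h
    have hint := (comp_ftc H.lip hUo (H := fun x => Complex.log ((x - z) / (x - z₀)))
      (H' := fun x => (x - z)⁻¹ - (x - z₀)⁻¹) (fun x hx => by
        have h0 := hx0 x hx
        have h1 := hxz x hx
        have hd := (((hasDerivAt_id x).sub_const z).div ((hasDerivAt_id x).sub_const z₀) h0).clog
          (hslit x hx)
        refine hd.congr_deriv ?_
        simp only [id, Pi.div_apply]
        field_simp) H.lpos.le (fun s _ => hmem s)).2
    rw [H.gl, sub_self] at hint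
    simp_rw [sub_mul] at hint
    rw [intervalIntegral.integral_sub (lip_int H.lip (H.off_cont (hne z hzG)).continuousOn)
      (lip_int H.lip (H.off_cont (hne z₀ hz₀)).continuousOn), sub_eq_zero] at hint
    exact hint
  have hlc : IsLocallyConstant (fun x : G => idx γ l x) := by
    rw [IsLocallyConstant.iff_eventually_eq]
    intro x
    exact (continuous_subtype_val.tendsto x).eventually (hloc x x.2)
  have hpc : IsPreconnected (univ : Set G) := by
    haveI := isPreconnected_iff_preconnectedSpace.1 H.conn.isPreconnected
    exact isPreconnected_univ
  exact hlc.apply_eq_of_isPreconnected hpc (x := ⟨z, hz⟩) (y := ⟨w, hw⟩) (mem_univ _) (mem_univ _)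

lemma Good.cauchy_formula (H : Good G l γ φ c θ) {f : ℂ → ℂ} (hc : ContinuousOn f (closure G))
    (hd : DifferentiableOn ℂ f G) {z : ℂ} (hz : z ∈ G) :
    ∫ s in (0:ℝ)..l, (f (γ s) * (γ s - z)⁻¹) * deriv γ s = f z * idx γ l z := by
  have hne : ∀ s, γ s ≠ z := fun s h => H.gamma_notMem s (h ▸ hz)
  have hn : closure G ∈ nhds z := mem_of_superset (H.op.mem_nhds hz) subset_closure
  have hdz := hd.differentiableAt (H.op.mem_nhds hz)
  have h := H.cauchy (f := dslope f z) ((continuousOn_dslope hn).2 ⟨hc, hdz⟩)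
    ((Complex.differentiableOn_dslope (H.op.mem_nhds hz)).2 hd)
  have hcf : Continuous (fun s => f (γ s)) := hc.comp_continuous H.lip.continuous H.gamma_mem
  have e : ∀ s, dslope f z (γ s) * deriv γ s =
      f (γ s) * (γ s - z)⁻¹ * deriv γ s - f z * ((γ s - z)⁻¹ * deriv γ s) := by
    intro s
    rw [dslope_of_ne _ (hne s), slope_def_field]; ring
  simp_rw [e] at h
  have hfc : Continuous (fun s => f (γ s) * (γ s - z)⁻¹) := hcf.mul (H.off_cont hne)
  rw [intervalIntegral.integral_sub
    (lip_int H.lip hfc.continuousOn)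
    ((lip_int H.lip (H.off_cont hne).continuousOn).const_mul _),
    intervalIntegral.integral_const_mul, sub_eq_zero] at h
  exact h

lemma Good.deriv_formula (H : Good G l γ φ c θ) {f : ℂ → ℂ} (hc : ContinuousOn f (closure G))
    (hd : DifferentiableOn ℂ f G) {z : ℂ} (hz : z ∈ G) :
    ∫ s in (0:ℝ)..l, (f (γ s) * ((γ s - z)^2)⁻¹) * deriv γ s = deriv f z * idx γ l z := by
  have hne : ∀ s, γ s ≠ z := fun s h => H.gamma_notMem s (h ▸ hz)
  have hn : closure G ∈ nhds z := mem_of_superset (H.op.mem_nhds hz) subset_closure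
  have hdz := hd.differentiableAt (H.op.mem_nhds hz)
  have h := H.cauchy_formula (f := dslope f z) ((continuousOn_dslope hn).2 ⟨hc, hdz⟩)
    ((Complex.differentiableOn_dslope (H.op.mem_nhds hz)).2 hd) hz
  have hcf : Continuous (fun s => f (γ s)) := hc.comp_continuous H.lip.continuous H.gamma_mem
  have hsq : Continuous (fun s => ((γ s - z)^2)⁻¹) := by
    exact ((H.lip.continuous.sub continuous_const).pow 2).inv₀
      (fun s => pow_ne_zero 2 (sub_ne_zero.2 (hne s)))
  have hfc : Continuous (fun s => f (γ s) * ((γ s - z)^2)⁻¹) := hcf.mul hsq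
  have e : ∀ s, dslope f z (γ s) * (γ s - z)⁻¹ * deriv γ s =
      f (γ s) * ((γ s - z)^2)⁻¹ * deriv γ s - f z * (((γ s - z)^2)⁻¹ * deriv γ s) := by
    intro s
    rw [dslope_of_ne _ (hne s), slope_def_field, ← inv_pow]; ring
  simp_rw [e] at h
  rw [intervalIntegral.integral_sub
    (lip_int H.lip hfc.continuousOn)
    ((lip_int H.lip hsq.continuousOn).const_mul _),
    intervalIntegral.integral_const_mul, H.int_sq hne, mul_zero, sub_zero, dslope_same] at h
  exact h

lemma Good.deriv_formula_out (H : Good G l γ φ c θ) {f : ℂ → ℂ} (hc : ContinuousOn f (closure G))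
    (hd : DifferentiableOn ℂ f G) {z : ℂ} (hz : z ∉ closure G) :
    ∫ s in (0:ℝ)..l, (f (γ s) * ((γ s - z)^2)⁻¹) * deriv γ s = 0 := by
  have hne : ∀ x ∈ closure G, (x - z)^2 ≠ 0 := fun x hx h =>
    hz (sub_eq_zero.1 (pow_eq_zero_iff two_ne_zero |>.1 h) ▸ hx)
  refine H.cauchy (f := fun x => f x * ((x - z)^2)⁻¹) ?_ ?_
  · exact hc.mul (ContinuousOn.inv₀ (by fun_prop) hne)
  · exact hd.mul (DifferentiableOn.inv (by fun_prop) fun x hx => hne x (subset_closure hx))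

end


section
variable {G : Set ℂ} {l : ℝ} {γ : ℝ → ℂ} {φ : ℂ → ℂ} {c : ℂ} {θ : ℝ → ℝ}

lemma near_aux {s₀ : ℝ} {τ : ℂ} (hs : s₀ ∈ Ioo 0 l) (hd : HasDerivAt γ τ s₀) (hn : ‖τ‖ = 1) :
    ∃ δ, 0 < δ ∧ 0 < s₀ - δ ∧ s₀ + δ < l ∧
      ∀ s, |s - s₀| ≤ δ → ‖(γ s - γ s₀) / τ - ((s - s₀ : ℝ) : ℂ)‖ ≤ |s - s₀| / 4 := by
  have h := (hasDerivAt_iff_isLittleO.1 hd).def (c := 1/4) (by norm_num)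
  obtain ⟨δ, hδ, h⟩ := Metric.eventually_nhds_iff.1 h
  have hτ : τ ≠ 0 := norm_pos_iff.1 (by rw [hn]; norm_num)
  refine ⟨min (δ/2) (min (s₀/2) ((l - s₀)/2)), ?_, ?_, ?_, ?_⟩
  · have := hs.1; have := hs.2
    refine lt_min (by linarith) (lt_min (by linarith) (by linarith))
  · have := (min_le_right (δ/2) (min (s₀/2) ((l - s₀)/2))).trans (min_le_left _ _)
    linarith [hs.1]
  · have := (min_le_right (δ/2) (min (s₀/2) ((l - s₀)/2))).trans (min_le_right _ _)
    linarith [hs.2]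
  · intro s hss
    have h1 := hss.trans (min_le_left _ _)
    have h2 := h (y := s) (by rw [Real.dist_eq]; linarith)
    have e : (γ s - γ s₀) / τ - ((s - s₀ : ℝ) : ℂ) = (γ s - γ s₀ - (s - s₀) • τ) / τ := by
      rw [Complex.real_smul]; field_simp
    rw [e, norm_div, hn, div_one]
    rw [Real.norm_eq_abs] at h2
    linarith

lemma near_re_im {v : ℂ} {x : ℝ} (h : ‖v - (x:ℂ)‖ ≤ |x| / 4) :
    |v.re - x| ≤ |x| / 4 ∧ |v.im| ≤ |x| / 4 := by
  constructor
  · have := (abs_re_le_norm (v - x)).trans h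
    simpa using this
  · have := (abs_im_le_norm (v - x)).trans h
    simpa using this

lemma near_bd {v : ℂ} {x e : ℝ} (h : ‖v - (x:ℂ)‖ ≤ |x| / 4) :
    (1/2) * (x^2 + e^2) ≤ ‖v^2 + (e:ℂ)^2‖ := by
  obtain ⟨h1, h2⟩ := near_re_im h
  refine le_trans ?_ (re_le_norm _)
  have : (v^2 + (e:ℂ)^2).re = v.re^2 - v.im^2 + e^2 := by simp [pow_two]
  rw [this]
  have h3 : v.im^2 ≤ x^2/16 := by
    have := pow_le_pow_left₀ (abs_nonneg _) h2 2
    rw [div_pow, sq_abs, sq_abs] at this; linarith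
  have h4 : 9/16 * x^2 ≤ v.re^2 := by
    have a1 : |x| - |v.re| ≤ |x|/4 := by
      have := abs_sub_abs_le_abs_sub x v.re
      rw [abs_sub_comm] at this; linarith
    have : (3/4*|x|)^2 ≤ |v.re|^2 := pow_le_pow_left₀ (by positivity) (by linarith) 2
    rw [mul_pow, sq_abs, sq_abs] at this; linarith
  nlinarith [sq_nonneg e]

lemma Good.away (H : Good G l γ φ c θ) {s₀ δ : ℝ} (hs : s₀ ∈ Ioo 0 l) (hδ : 0 < δ) :
    ∃ d, 0 < d ∧ ∀ s ∈ Icc 0 l, δ ≤ |s - s₀| → d ≤ ‖γ s - γ s₀‖ := by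
  have hK : IsCompact (Icc 0 l ∩ {s | δ ≤ |s - s₀|}) :=
    isCompact_Icc.inter_right (isClosed_le continuous_const (by fun_prop))
  obtain ⟨d, hd, h⟩ := hK.exists_forall_le' (f := fun s => ‖γ s - γ s₀‖) (a := 0)
    (by have := H.lip.continuous; fun_prop) (by
      rintro s ⟨h1, h2⟩
      rw [norm_pos_iff, sub_ne_zero]
      intro h
      obtain ⟨n, hn⟩ := H.inj _ _ h
      have hl := H.lpos
      have a1 : (n:ℝ) < 1 := by by_contra hh; push Not at hh; nlinarith [hs.1, hs.2, h1.1, h1.2]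
      have a2 : (-1:ℝ) < n := by by_contra hh; push Not at hh; nlinarith [hs.1, hs.2, h1.1, h1.2]
      have h1' : n < 1 := by exact_mod_cast a1
      have h2' : -1 < n := by exact_mod_cast a2
      obtain rfl : n = 0 := by omega
      have : s = s₀ := by simpa using hn
      rw [this] at h2; simp at h2; linarith)
  exact ⟨d, hd, fun s h1 h2 => h s ⟨h1, h2⟩⟩

lemma Good.kernel (H : Good G l γ φ c θ) {s₀ : ℝ} {τ : ℂ} (hs : s₀ ∈ Ioo 0 l)
    (hd : HasDerivAt γ τ s₀) (hn : ‖τ‖ = 1) :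
    ∃ k : ℝ, 0 < k ∧ k ≤ 1 ∧ ∃ ε₀ : ℝ, 0 < ε₀ ∧ ∀ e : ℝ, |e| < ε₀ → ∀ s ∈ Icc 0 l,
      k * ((s - s₀)^2 + e^2) ≤ ‖(γ s - γ s₀)^2 + (e * τ)^2‖ := by
  have hτ : τ ≠ 0 := norm_pos_iff.1 (by rw [hn]; norm_num)
  obtain ⟨δ, hδ, -, -, hnear⟩ := near_aux hs hd hn
  obtain ⟨d, hd0, haway⟩ := H.away hs hδ
  have hl := H.lpos
  refine ⟨min (1/2) (d^2/2 / (l^2 + d^2)), by positivity, (min_le_left _ _).trans (by norm_num),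
    d/2, by positivity, ?_⟩
  intro e he s hsm
  rcases le_total |s - s₀| δ with h | h
  · have h1 := near_bd (e := e) (hnear s h)
    have h2 : (γ s - γ s₀)^2 + (e * τ)^2 = τ^2 * (((γ s - γ s₀) / τ)^2 + (e:ℂ)^2) := by
      field_simp
    rw [h2, norm_mul, norm_pow, hn, one_pow, one_mul]
    refine le_trans ?_ h1
    gcongr
    exact min_le_left _ _
  · have h1 := haway s hsm h
    have he2 : e^2 ≤ d^2/4 := by
      have := pow_le_pow_left₀ (abs_nonneg _) he.le 2
      rw [sq_abs] at this; linarith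
    have hx : (s - s₀)^2 ≤ l^2 := by
      apply sq_le_sq'
      · linarith [hs.2, hsm.1]
      · linarith [hs.1, hsm.2]
    have h3 : d^2 - e^2 ≤ ‖(γ s - γ s₀)^2 + (e * τ)^2‖ := by
      have := norm_sub_le_norm_add ((γ s - γ s₀)^2) ((e * τ)^2)
      rw [norm_pow, norm_pow, norm_mul, hn, mul_one, Complex.norm_real, Real.norm_eq_abs, sq_abs]
        at this
      have := pow_le_pow_left₀ hd0.le h1 2
      linarith
    calc _ ≤ (d^2/2 / (l^2 + d^2)) * ((s - s₀)^2 + e^2) := by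
            gcongr; exact min_le_right _ _
      _ ≤ (d^2/2 / (l^2 + d^2)) * (l^2 + d^2) :=
            mul_le_mul_of_nonneg_left (by nlinarith [sq_nonneg d]) (by positivity)
      _ = d^2/2 := by field_simp
      _ ≤ _ := by nlinarith

/-- points on the normal -/
noncomputable def zpt (γ : ℝ → ℂ) (s₀ : ℝ) (τ : ℂ) (e : ℝ) : ℂ := γ s₀ + I * e * τ

lemma zpt_mul (γ : ℝ → ℂ) (s₀ : ℝ) (τ : ℂ) (e s : ℝ) :
    (γ s - zpt γ s₀ τ e) * (γ s - zpt γ s₀ τ (-e)) = (γ s - γ s₀)^2 + (e * τ)^2 := by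
  unfold zpt; push_cast; linear_combination (-(e:ℂ)^2 * τ^2) * I_sq

lemma Good.off (H : Good G l γ φ c θ) {s₀ : ℝ} {τ : ℂ} (hn : ‖τ‖ = 1) {k ε₀ : ℝ} (hk : 0 < k)
    (hker : ∀ e : ℝ, |e| < ε₀ → ∀ s ∈ Icc 0 l,
      k * ((s - s₀)^2 + e^2) ≤ ‖(γ s - γ s₀)^2 + (e * τ)^2‖) {e : ℝ} (he : |e| < ε₀) (he0 : e ≠ 0)
    (s : ℝ) : k / 2 * |e| ≤ ‖γ s - zpt γ s₀ τ e‖ := by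
  obtain ⟨t, ht, hts⟩ := H.mem_period 0 s
  rw [zero_add] at ht
  rw [← hts]
  have h := hker e he t (Ico_subset_Icc_self ht)
  rw [← zpt_mul, norm_mul] at h
  have hpos : 0 < |e| := abs_pos.2 he0
  have h2 : ‖γ t - zpt γ s₀ τ (-e)‖ ≤ |t - s₀| + |e| := by
    have h3 : ‖γ t - γ s₀‖ ≤ |t - s₀| := by
      have := H.lip.dist_le_mul t s₀
      rw [dist_eq_norm, dist_eq_norm, Real.norm_eq_abs] at this; simpa using this
    have : γ t - zpt γ s₀ τ (-e) = (γ t - γ s₀) + I * e * τ := by unfold zpt; push_cast; ring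
    rw [this]
    refine (norm_add_le _ _).trans ?_
    have : ‖I * e * τ‖ = |e| := by simp [hn]
    linarith
  have h4 : k / 2 * |e| * (|t - s₀| + |e|) ≤ ‖γ t - zpt γ s₀ τ e‖ * (|t - s₀| + |e|) := by
    calc _ ≤ k / 2 * (|t - s₀| + |e|) * (|t - s₀| + |e|) := by
          gcongr; linarith [abs_nonneg (t - s₀)]
      _ ≤ k * ((t - s₀)^2 + e^2) := by
          rw [← sq_abs (t - s₀), ← sq_abs e]
          nlinarith [mul_nonneg hk.le (sq_nonneg (|t - s₀| - |e|))]
      _ ≤ _ := h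
      _ ≤ _ := by gcongr
  exact le_of_mul_le_mul_right h4 (by positivity)

lemma log_jump {u : ℂ} (hu : u.re ≠ 0) :
    Tendsto (fun e : ℝ => Complex.log (e + I * u) - Complex.log (e - I * u)) (nhdsWithin 0 (Ioi 0))
      (nhds (Complex.log (I * u) - Complex.log (-(I * u)))) := by
  have h1 : Tendsto (fun e : ℝ => (e:ℂ) + I * u) (nhdsWithin 0 (Ioi 0)) (nhds (I * u)) := by
    have : Continuous (fun e : ℝ => (e:ℂ) + I * u) := by fun_prop
    simpa using (this.tendsto 0).mono_left nhdsWithin_le_nhds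
  have h2 : Tendsto (fun e : ℝ => (e:ℂ) - I * u) (nhdsWithin 0 (Ioi 0)) (nhds (-(I * u))) := by
    have : Continuous (fun e : ℝ => (e:ℂ) - I * u) := by fun_prop
    simpa using (this.tendsto 0).mono_left nhdsWithin_le_nhds
  refine (h1.clog ?_).sub (h2.clog ?_)
  · rw [mem_slitPlane_iff]; right; simpa using hu
  · rw [mem_slitPlane_iff]; right; simpa using hu

lemma log_neg_pos {w : ℂ} (h : 0 < w.im) : Complex.log w - Complex.log (-w) = Real.pi * I := by
  rw [Complex.log, Complex.log, arg_neg_eq_arg_sub_pi_of_im_pos h, norm_neg]; push_cast; ring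

lemma log_neg_neg {w : ℂ} (h : w.im < 0) : Complex.log w - Complex.log (-w) = -(Real.pi * I) := by
  rw [Complex.log, Complex.log, arg_neg_eq_arg_add_pi_of_im_neg h, norm_neg]; push_cast; ring

lemma lorentz_le {a b s₀ e : ℝ} (he : 0 < e) :
    ∫ s in a..b, e / ((s - s₀)^2 + e^2) ≤ Real.pi := by
  have hd : ∀ s ∈ uIcc a b, HasDerivAt (fun s => Real.arctan ((s - s₀) / e))
      (e / ((s - s₀)^2 + e^2)) s := by
    intro s _
    have h := (((hasDerivAt_id s).sub_const s₀).div_const e).arctan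
    refine h.congr_deriv ?_
    simp only [id]
    field_simp
    ring
  rw [intervalIntegral.integral_eq_sub_of_hasDerivAt hd]
  · have := Real.arctan_lt_pi_div_two ((b - s₀) / e)
    have := Real.neg_pi_div_two_lt_arctan ((a - s₀) / e)
    linarith
  · refine Continuous.intervalIntegrable ?_ _ _
    refine continuous_const.div (by fun_prop) fun s => by positivity

/-- jump of the index -/
lemma Good.idx_jump (H : Good G l γ φ c θ) {s₀ : ℝ} {τ : ℂ} (hs : s₀ ∈ Ioo 0 l)
    (hd : HasDerivAt γ τ s₀) (hn : ‖τ‖ = 1) :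
    Tendsto (fun e : ℝ => idx γ l (zpt γ s₀ τ e) - idx γ l (zpt γ s₀ τ (-e)))
      (nhdsWithin 0 (Ioi 0)) (nhds (2 * Real.pi * I)) := by
  have hτ : τ ≠ 0 := norm_pos_iff.1 (by rw [hn]; norm_num)
  have hl := H.lpos
  obtain ⟨k, hk, -, ε₀, hε₀, hker⟩ := H.kernel hs hd hn
  obtain ⟨δ, hδ, hδ1, hδ2, hnear⟩ := near_aux hs hd hn
  set f : ℝ → ℝ → ℂ := fun e s => 2 * I * e * τ * ((γ s - γ s₀)^2 + (e * τ)^2)⁻¹ with hf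
  have hev : ∀ᶠ e in nhdsWithin (0:ℝ) (Ioi 0), 0 < e ∧ |e| < ε₀ := by
    have : Ioo 0 ε₀ ∈ nhdsWithin (0:ℝ) (Ioi 0) := Ioo_mem_nhdsGT hε₀
    filter_upwards [this] with e he
    exact ⟨he.1, by rw [abs_of_pos he.1]; exact he.2⟩
  have hne : ∀ e, 0 < e → |e| < ε₀ → ∀ s, γ s ≠ zpt γ s₀ τ e ∧ γ s ≠ zpt γ s₀ τ (-e) := by
    intro e he he' s
    have h1 := H.off hn hk hker he' he.ne' s
    have h2 := H.off hn hk hker (e := -e) (by rwa [abs_neg]) (by linarith) s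
    rw [abs_neg] at h2
    have : 0 < k / 2 * |e| := by positivity
    exact ⟨sub_ne_zero.1 (norm_pos_iff.1 (this.trans_le h1)),
      sub_ne_zero.1 (norm_pos_iff.1 (this.trans_le h2))⟩
  have hfe : ∀ e, 0 < e → |e| < ε₀ → ∀ s,
      (γ s - zpt γ s₀ τ e)⁻¹ - (γ s - zpt γ s₀ τ (-e))⁻¹ = f e s := by
    intro e he he' s
    obtain ⟨a1, a2⟩ := hne e he he' s
    rw [hf]; dsimp only
    rw [← zpt_mul, inv_sub_inv (sub_ne_zero.2 a1) (sub_ne_zero.2 a2), div_eq_mul_inv]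
    congr 1
    unfold zpt; push_cast; ring
  have hfc : ∀ e, 0 < e → |e| < ε₀ → Continuous (f e) := by
    intro e he he'
    have : Continuous (fun s => (γ s - zpt γ s₀ τ e)⁻¹ - (γ s - zpt γ s₀ τ (-e))⁻¹) :=
      (H.off_cont fun s => (hne e he he' s).1).sub (H.off_cont fun s => (hne e he he' s).2)
    convert this using 2 with s
    exact (hfe e he he' s).symm
  have hint : ∀ e, 0 < e → |e| < ε₀ → ∀ a b, IntervalIntegrable (fun s => f e s * deriv γ s) volume a b :=
    fun e he he' a b => lip_int H.lip (hfc e he he').continuousOn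
  have hsplit : ∀ e, 0 < e → |e| < ε₀ → idx γ l (zpt γ s₀ τ e) - idx γ l (zpt γ s₀ τ (-e)) =
      (∫ s in (0:ℝ)..(s₀ - δ), f e s * deriv γ s) + (∫ s in (s₀ - δ)..(s₀ + δ), f e s * deriv γ s)
      + ∫ s in (s₀ + δ)..l, f e s * deriv γ s := by
    intro e he he'
    unfold idx
    rw [← intervalIntegral.integral_sub
      (lip_int H.lip (H.off_cont fun s => (hne e he he' s).1).continuousOn)
      (lip_int H.lip (H.off_cont fun s => (hne e he he' s).2).continuousOn)]
    simp_rw [← sub_mul, hfe e he he']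
    rw [intervalIntegral.integral_add_adjacent_intervals (hint e he he' _ _) (hint e he he' _ _),
      intervalIntegral.integral_add_adjacent_intervals (hint e he he' _ _) (hint e he he' _ _)]
  have hfb : ∀ e, 0 < e → |e| < ε₀ → ∀ s ∈ Icc 0 l, δ ≤ |s - s₀| →
      ‖f e s * deriv γ s‖ ≤ 2 * e / (k * δ^2) := by
    intro e he he' s hsm hsd
    have h1 := hker e he' s hsm
    rw [norm_mul, hf]; dsimp only
    rw [norm_mul, norm_inv]
    have h2 : ‖2 * I * e * τ‖ = 2 * e := by simp [hn, abs_of_pos he]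
    rw [h2]
    have h3 : k * δ^2 ≤ ‖(γ s - γ s₀)^2 + (e * τ)^2‖ := by
      refine le_trans ?_ h1
      gcongr
      have := pow_le_pow_left₀ hδ.le hsd 2
      rw [sq_abs] at this; nlinarith [sq_nonneg e]
    calc _ ≤ 2 * e * (k * δ^2)⁻¹ * 1 := by
          gcongr
          exact lip_deriv_le H.lip s
      _ = _ := by rw [mul_one, div_eq_mul_inv]
  have hz : ∀ a b, a ≤ b → 0 ≤ a → b ≤ l → (∀ s ∈ Icc a b, δ ≤ |s - s₀|) →
      Tendsto (fun e : ℝ => ∫ s in a..b, f e s * deriv γ s) (nhdsWithin 0 (Ioi 0)) (nhds 0) := by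
    intro a b hab ha hb hab'
    refine squeeze_zero_norm' (a := fun e => 2 * e / (k * δ^2) * |b - a|) ?_ ?_
    · filter_upwards [hev] with e he
      refine intervalIntegral.norm_integral_le_of_norm_le_const fun s hs' => ?_
      rw [uIoc_of_le hab] at hs'
      exact hfb e he.1 he.2 s ⟨ha.trans hs'.1.le, hs'.2.trans hb⟩ (hab' s ⟨hs'.1.le, hs'.2⟩)
    · have : Continuous (fun e => 2 * e / (k * δ^2) * |b - a|) := by fun_prop
      simpa using (this.tendsto 0).mono_left nhdsWithin_le_nhds
  set u : ℝ → ℂ := fun s => (γ s - γ s₀) / τ with hu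
  have hmid : ∀ e, 0 < e → |e| < ε₀ → ∫ s in (s₀ - δ)..(s₀ + δ), f e s * deriv γ s =
      (Complex.log (e + I * u (s₀ + δ)) - Complex.log (e - I * u (s₀ + δ))) -
      (Complex.log (e + I * u (s₀ - δ)) - Complex.log (e - I * u (s₀ - δ))) := by
    intro e he he'
    set U : Set ℂ := {x | (e:ℂ) + I * ((x - γ s₀) / τ) ∈ slitPlane ∧
      (e:ℂ) - I * ((x - γ s₀) / τ) ∈ slitPlane}
    have hUo : IsOpen U := by
      refine (isOpen_slitPlane.preimage ?_).inter (isOpen_slitPlane.preimage ?_) <;> fun_prop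
    have := (comp_ftc H.lip hUo (H := fun x => Complex.log (e + I * ((x - γ s₀) / τ)) -
      Complex.log (e - I * ((x - γ s₀) / τ)))
      (H' := fun x => 2 * I * e * τ * ((x - γ s₀)^2 + (e * τ)^2)⁻¹) (fun x hx => ?_)
      (show s₀ - δ ≤ s₀ + δ by linarith) (fun s hs' => ?_)).2
    · exact this
    · have hb : HasDerivAt (fun x => I * ((x - γ s₀) / τ)) (I * (1 / τ)) x :=
        (((hasDerivAt_id x).sub_const (γ s₀)).div_const τ).const_mul I
      have hx1 := slitPlane_ne_zero hx.1
      have hx2 := slitPlane_ne_zero hx.2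
      refine (((hb.const_add (e:ℂ)).clog hx.1).sub ((hb.const_sub (e:ℂ)).clog hx.2)).congr_deriv ?_
      have hp : (x - γ s₀)^2 + (e * τ)^2 = τ^2 *
          (((e:ℂ) + I * ((x - γ s₀) / τ)) * ((e:ℂ) - I * ((x - γ s₀) / τ))) := by
        field_simp
        linear_combination ((x - γ s₀)^2) * I_sq
      rw [hp]
      have hAB : ((e:ℂ) + I * ((x - γ s₀) / τ)) + ((e:ℂ) - I * ((x - γ s₀) / τ)) = 2 * e := by ring
      generalize (e:ℂ) + I * ((x - γ s₀) / τ) = A at *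
      generalize (e:ℂ) - I * ((x - γ s₀) / τ) = B at *
      field_simp
      linear_combination hAB
    · have hab : |s - s₀| ≤ δ := by rw [abs_le]; constructor <;> linarith [hs'.1, hs'.2]
      obtain ⟨h1, h2⟩ := near_re_im (hnear s hab)
      have key : s = s₀ ∨ ((γ s - γ s₀) / τ).re ≠ 0 := by
        by_cases h : s = s₀
        · left; exact h
        · right
          intro h0
          rw [h0] at h1
          have : 0 < |s - s₀| := abs_pos.2 (sub_ne_zero.2 h)
          rw [zero_sub, abs_neg] at h1; linarith
      rcases key with rfl | h
      · simp [U, he]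
      · constructor
        · rw [mem_slitPlane_iff]; right; simpa using h
        · rw [mem_slitPlane_iff]; right; simpa using h
  have hur : 0 < (u (s₀ + δ)).re := by
    have := (near_re_im (hnear (s₀ + δ) (by simp [abs_of_pos hδ]))).1
    rw [add_sub_cancel_left, abs_of_pos hδ, abs_le] at this
    linarith [this.1]
  have hul : (u (s₀ - δ)).re < 0 := by
    have := (near_re_im (hnear (s₀ - δ) (by simp [abs_of_pos hδ]))).1
    rw [show s₀ - δ - s₀ = -δ by ring, abs_neg, abs_of_pos hδ, abs_le] at this
    linarith [this.2]
  have hlim := ((hz 0 (s₀ - δ) hδ1.le le_rfl (by linarith) (fun s hs' => by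
      rw [abs_sub_comm]; exact (le_abs_self _).trans' (by linarith [hs'.2]))).add
    ((log_jump hur.ne').sub (log_jump hul.ne))).add
    (hz (s₀ + δ) l hδ2.le (by linarith) le_rfl (fun s hs' =>
      (le_abs_self _).trans' (by linarith [hs'.1])))
  rw [log_neg_pos (by simpa using hur), log_neg_neg (by simpa using hul)] at hlim
  have e1 : (0:ℂ) + (Real.pi * I - -(Real.pi * I)) + 0 = 2 * Real.pi * I := by ring
  rw [e1] at hlim
  refine hlim.congr' ?_
  filter_upwards [hev] with e he
  rw [hsplit e he.1 he.2, hmid e he.1 he.2]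

end


section
variable {G : Set ℂ} {l : ℝ} {γ : ℝ → ℂ} {φ : ℂ → ℂ} {c : ℂ} {θ : ℝ → ℝ}

/-- points near the boundary, off the curve -/
lemma Good.off_ev (H : Good G l γ φ c θ) {s₀ : ℝ} {τ : ℂ} (hs : s₀ ∈ Ioo 0 l)
    (hd : HasDerivAt γ τ s₀) (hn : ‖τ‖ = 1) :
    ∃ M : ℝ, 1 < M ∧ ∀ᶠ e in nhdsWithin (0:ℝ) (Ioi 0), 0 < e ∧
      (∀ s, γ s ≠ zpt γ s₀ τ e) ∧ (∀ s, γ s ≠ zpt γ s₀ τ (-e)) ∧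
      e ≤ M * infDist (zpt γ s₀ τ e) (frontier G) ∧
      e ≤ M * infDist (zpt γ s₀ τ (-e)) (frontier G) := by
  obtain ⟨k, hk, -, ε₀, hε₀, hker⟩ := H.kernel hs hd hn
  refine ⟨2 / k + 1, by linarith [show 0 < 2 / k by positivity], ?_⟩
  have hne : (frontier G).Nonempty := by rw [← H.ran]; exact range_nonempty γ
  have hall : ∀ e : ℝ, e ≠ 0 → |e| < ε₀ → (∀ s, γ s ≠ zpt γ s₀ τ e) ∧
      |e| ≤ (2 / k + 1) * infDist (zpt γ s₀ τ e) (frontier G) := by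
    intro e he he'
    have h0 := fun s => H.off hn hk hker he' he s
    have hp : 0 < |e| := abs_pos.2 he
    refine ⟨fun s h => ?_, ?_⟩
    · have := h0 s
      rw [h, sub_self, norm_zero] at this
      have : 0 < k / 2 * |e| := by positivity
      linarith
    · have h1 : k / 2 * |e| ≤ infDist (zpt γ s₀ τ e) (frontier G) := by
        rw [le_infDist hne]
        intro y hy
        rw [← H.ran] at hy
        obtain ⟨s, rfl⟩ := hy
        rw [dist_comm, dist_eq_norm]; exact h0 s
      calc |e| = 2 / k * (k / 2 * |e|) := by field_simp
        _ ≤ (2 / k + 1) * (k / 2 * |e|) := by gcongr; linarith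
        _ ≤ _ := by gcongr
  filter_upwards [Ioo_mem_nhdsGT hε₀] with e he
  have h1 := hall e he.1.ne' (by rw [abs_of_pos he.1]; exact he.2)
  have h2 := hall (-e) (by linarith [he.1]) (by rw [abs_neg, abs_of_pos he.1]; exact he.2)
  rw [abs_of_pos he.1] at h1
  rw [abs_neg, abs_of_pos he.1] at h2
  exact ⟨he.1, h1.1, h2.1, h1.2, h2.2⟩

lemma Setup.in_or_out (H : Setup G l γ φ) {z : ℂ} (hz : ∀ s, γ s ≠ z) : z ∈ G ∨ z ∉ closure G := by
  by_cases h : z ∈ closure G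
  · left
    rcases H.mem_or h with h | ⟨t, rfl⟩
    · exact h
    · exact absurd rfl (hz t)
  · exact Or.inr h

lemma twopiI_ne : (2 * Real.pi * I : ℂ) ≠ 0 := by
  simp [Real.pi_ne_zero]

/-- orientation and side -/
lemma Good.orient (H : Good G l γ φ c θ) : ∃ σ : ℝ, (σ = 1 ∨ σ = -1) ∧
    (∀ w ∈ G, idx γ l w = σ * (2 * Real.pi * I)) ∧
    ∀ s₀ ∈ Ioo 0 l, ∀ τ : ℂ, HasDerivAt γ τ s₀ → ‖τ‖ = 1 →
      ∀ᶠ e in nhdsWithin (0:ℝ) (Ioi 0), zpt γ s₀ τ (σ * e) ∈ G ∧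
        zpt γ s₀ τ (-(σ * e)) ∉ closure G := by
  obtain ⟨w₀, hw₀⟩ := H.conn.nonempty
  set ω := idx γ l w₀ with hω
  have hin : ∀ z ∈ G, idx γ l z = ω := fun z hz => H.idx_const hz hw₀
  -- every point gives a dichotomy
  have hdich : ∀ s₀ ∈ Ioo 0 l, ∀ τ : ℂ, HasDerivAt γ τ s₀ → ‖τ‖ = 1 →
      ∀ᶠ e in nhdsWithin (0:ℝ) (Ioi 0),
        (zpt γ s₀ τ e ∈ G ∧ zpt γ s₀ τ (-e) ∉ closure G ∧ ‖ω - 2 * Real.pi * I‖ < 1) ∨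
        (zpt γ s₀ τ (-e) ∈ G ∧ zpt γ s₀ τ e ∉ closure G ∧ ‖ω + 2 * Real.pi * I‖ < 1) := by
    intro s₀ hs τ hd hn
    obtain ⟨M, -, hM⟩ := H.off_ev hs hd hn
    have hj := (Metric.tendsto_nhds.1 (H.idx_jump hs hd hn)) 1 one_pos
    filter_upwards [hM, hj] with e ⟨_, h1, h2, _, _⟩ h3
    rw [dist_eq_norm] at h3
    have hbig : 1 ≤ ‖(0:ℂ) - 2 * Real.pi * I‖ := by
      simp [abs_of_pos Real.pi_pos]; linarith [Real.pi_gt_three]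
    rcases H.in_or_out h1 with a | a <;> rcases H.in_or_out h2 with b | b
    · rw [hin _ a, hin _ b, sub_self] at h3; linarith
    · left; rw [hin _ a, H.idx_out b, sub_zero] at h3; exact ⟨a, b, h3⟩
    · right; rw [hin _ b, H.idx_out a] at h3; refine ⟨b, a, ?_⟩
      rw [← norm_neg, show -(ω + 2 * Real.pi * I) = 0 - ω - 2 * Real.pi * I by ring]; exact h3
    · rw [H.idx_out a, H.idx_out b, sub_self] at h3; linarith
  obtain ⟨s₁, hs₁, hds₁⟩ : ∃ s₁ ∈ Ioo 0 l, HasDerivAt γ (deriv γ s₁) s₁ ∧ ‖deriv γ s₁‖ = 1 := by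
    have : ∀ᵐ s, HasDerivAt γ (deriv γ s) s ∧ ‖deriv γ s‖ = 1 := by
      filter_upwards [lip_ae H.lip, H.unit] with s h1 h2
      exact ⟨h1, h2⟩
    have hpos : volume (Ioo 0 l) ≠ 0 := by simp [H.lpos]
    by_contra hcon
    push Not at hcon
    apply hpos
    refine measure_mono_null ?_ this
    intro s hs h
    exact hcon s hs h.1 h.2
  have hj := H.idx_jump hs₁ hds₁.1 hds₁.2
  rcases em (‖ω - 2 * Real.pi * I‖ < 1) with hp | hp
  · have hnot : ¬ ‖ω + 2 * Real.pi * I‖ < 1 := by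
      intro hq
      have h1 := norm_sub_le (ω + 2 * Real.pi * I) (ω - 2 * Real.pi * I)
      have h2 : ‖(ω + 2 * Real.pi * I) - (ω - 2 * Real.pi * I)‖ = 4 * Real.pi := by
        rw [show (ω + 2 * Real.pi * I) - (ω - 2 * Real.pi * I) = ((4 * Real.pi : ℝ):ℂ) * I by
          push_cast; ring]
        rw [norm_mul, Complex.norm_real, norm_I, mul_one, Real.norm_of_nonneg (by positivity)]
      linarith [Real.pi_gt_three]
    have hω2 : ω = 2 * Real.pi * I := by
      refine tendsto_nhds_unique (tendsto_const_nhds.congr' ?_) hj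
      filter_upwards [hdich s₁ hs₁ _ hds₁.1 hds₁.2] with e he
      rcases he with he | he
      · rw [hin _ he.1, H.idx_out he.2.1, sub_zero]
      · exact absurd he.2.2 hnot
    refine ⟨1, Or.inl rfl, fun w hw => by rw [hin w hw, hω2]; simp, fun s₀ hs τ hd hn => ?_⟩
    filter_upwards [hdich s₀ hs τ hd hn] with e he
    rcases he with he | he
    · rw [one_mul]; exact ⟨he.1, he.2.1⟩
    · exact absurd he.2.2 hnot
  · have hω2 : ω = -(2 * Real.pi * I) := by
      rw [← neg_eq_iff_eq_neg]
      refine tendsto_nhds_unique (tendsto_const_nhds.congr' ?_) hj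
      filter_upwards [hdich s₁ hs₁ _ hds₁.1 hds₁.2] with e he
      rcases he with he | he
      · exact absurd he.2.2 hp
      · rw [hin _ he.1, H.idx_out he.2.1, zero_sub]
    refine ⟨-1, Or.inr rfl, fun w hw => by rw [hin w hw, hω2]; simp, fun s₀ hs τ hd hn => ?_⟩
    filter_upwards [hdich s₀ hs τ hd hn] with e he
    rcases he with he | he
    · exact absurd he.2.2 hp
    · rw [neg_one_mul, neg_neg]; exact ⟨he.1, he.2.1⟩

/-- Cauchy type kernel, second order -/
noncomputable def kint (f γ : ℝ → ℂ) (l : ℝ) (z : ℂ) : ℂ :=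
  ∫ s in (0:ℝ)..l, (f s * ((γ s - z)^2)⁻¹) * deriv γ s

lemma Setup.off_cont2 (H : Setup G l γ φ) {z : ℂ} (hz : ∀ s, γ s ≠ z) :
    Continuous (fun s => ((γ s - z)^2)⁻¹) :=
  ((H.lip.continuous.sub continuous_const).pow 2).inv₀
      (fun s => pow_ne_zero 2 (sub_ne_zero.2 (hz s)))

lemma Setup.kint_lin (H : Setup G l γ φ) {f : ℝ → ℂ} (hf : Continuous f) {z : ℂ}
    (hz : ∀ s, γ s ≠ z) (s₀ : ℝ) (κ : ℂ) :
    kint f γ l z = κ * idx γ l z +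
      kint (fun s => f s - f s₀ - κ * (γ s - γ s₀)) γ l z := by
  have hR : Continuous (fun s => f s - f s₀ - κ * (γ s - γ s₀)) := by
    have := H.lip.continuous; fun_prop
  have hRc : Continuous (fun s => (f s - f s₀ - κ * (γ s - γ s₀)) * ((γ s - z)^2)⁻¹) :=
    hR.mul (H.off_cont2 hz)
  have i1 := lip_int H.lip (a := 0) (b := l) (H.off_cont hz).continuousOn
  have i2 := lip_int H.lip (a := 0) (b := l) (H.off_cont2 hz).continuousOn
  have i3 := lip_int H.lip (a := 0) (b := l) hRc.continuousOn
  have e : ∀ s, (f s * ((γ s - z)^2)⁻¹) * deriv γ s =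
      κ * ((γ s - z)⁻¹ * deriv γ s) + ((f s₀ + κ * (z - γ s₀)) * (((γ s - z)^2)⁻¹ * deriv γ s) +
      ((f s - f s₀ - κ * (γ s - γ s₀)) * ((γ s - z)^2)⁻¹) * deriv γ s) := by
    intro s
    have := sub_ne_zero.2 (hz s)
    field_simp
    ring
  unfold kint idx
  simp_rw [e]
  rw [intervalIntegral.integral_add (i1.const_mul _) ((i2.const_mul _).add i3),
    intervalIntegral.integral_add (i2.const_mul _) i3, intervalIntegral.integral_const_mul,
    intervalIntegral.integral_const_mul, H.int_sq hz, mul_zero, zero_add]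

lemma Good.kint_jump (H : Good G l γ φ c θ) {f : ℝ → ℂ} (hf : Continuous f) {s₀ : ℝ} {τ κ : ℂ}
    (hs : s₀ ∈ Ioo 0 l) (hd : HasDerivAt γ τ s₀) (hn : ‖τ‖ = 1) (hfd : HasDerivAt f (κ * τ) s₀) :
    Tendsto (fun e : ℝ => kint f γ l (zpt γ s₀ τ e) - kint f γ l (zpt γ s₀ τ (-e)))
      (nhdsWithin 0 (Ioi 0)) (nhds (κ * (2 * Real.pi * I))) := by
  have hl := H.lpos
  set R : ℝ → ℂ := fun s => f s - f s₀ - κ * (γ s - γ s₀) with hR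
  have hRc : Continuous R := by
    have := H.lip.continuous; fun_prop
  have hRd : HasDerivAt R 0 s₀ := by
    have := (hfd.sub_const (f s₀)).sub ((hd.sub_const (γ s₀)).const_mul κ)
    rwa [sub_self] at this
  have hR0 : R s₀ = 0 := by simp [hR]
  obtain ⟨B, hB⟩ := isCompact_Icc.exists_bound_of_continuousOn (hRc.continuousOn (s := Icc 0 l))
  have hB0 : 0 ≤ B := (norm_nonneg _).trans (hB 0 ⟨le_rfl, hl.le⟩)
  obtain ⟨k, hk, -, ε₀, hε₀, hker⟩ := H.kernel hs hd hn
  obtain ⟨M, -, hM⟩ := H.off_ev hs hd hn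
  have hrem : Tendsto (fun e : ℝ => kint R γ l (zpt γ s₀ τ e) - kint R γ l (zpt γ s₀ τ (-e)))
      (nhdsWithin 0 (Ioi 0)) (nhds 0) := by
    rw [Metric.tendsto_nhds]
    intro η hη
    set η' := η * k^2 / (8 * Real.pi + 8) with hη'
    have hη'0 : 0 < η' := by have := Real.pi_pos; positivity
    have h0 := (hasDerivAt_iff_isLittleO.1 hRd).def hη'0
    obtain ⟨δ, hδ, hδ'⟩ := Metric.eventually_nhds_iff.1 h0
    have hlim : Tendsto (fun e : ℝ => 4 / k^2 * (η' * Real.pi + e * (B * l / δ^4) * l))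
        (nhdsWithin 0 (Ioi 0)) (nhds (4 / k^2 * (η' * Real.pi))) := by
      have : Continuous (fun e : ℝ => 4 / k^2 * (η' * Real.pi + e * (B * l / δ^4) * l)) := by fun_prop
      simpa using (this.tendsto 0).mono_left nhdsWithin_le_nhds
    have hlt : 4 / k^2 * (η' * Real.pi) < η := by
      rw [hη']
      have := Real.pi_pos
      have e1 : 4 / k^2 * (η * k^2 / (8 * Real.pi + 8) * Real.pi) = η * (4 * Real.pi / (8 * Real.pi + 8)) := by
        field_simp
      rw [e1]
      have : 4 * Real.pi / (8 * Real.pi + 8) < 1 := by rw [div_lt_one (by positivity)]; linarith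
      nlinarith
    filter_upwards [hM, Ioo_mem_nhdsGT hε₀, hlim.eventually_lt_const hlt] with e ⟨he, h1, h2, _, _⟩ hee hlast
    rw [dist_zero_right]
    refine lt_of_le_of_lt ?_ hlast
    have c1 : Continuous (fun s => R s * ((γ s - zpt γ s₀ τ e)^2)⁻¹) := hRc.mul (H.off_cont2 h1)
    have c2 : Continuous (fun s => R s * ((γ s - zpt γ s₀ τ (-e))^2)⁻¹) := hRc.mul (H.off_cont2 h2)
    unfold kint
    rw [← intervalIntegral.integral_sub (lip_int H.lip c1.continuousOn) (lip_int H.lip c2.continuousOn)]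
    have cL : Continuous (fun s => e / ((s - s₀)^2 + e^2)) :=
      continuous_const.div (by fun_prop) fun s => by positivity
    have hpt : ∀ s ∈ Ioc 0 l, ‖R s * ((γ s - zpt γ s₀ τ e)^2)⁻¹ * deriv γ s -
        R s * ((γ s - zpt γ s₀ τ (-e))^2)⁻¹ * deriv γ s‖ ≤
        4 / k^2 * (η' * (e / ((s - s₀)^2 + e^2)) + e * (B * l / δ^4)) := by
      intro s hs'
      have hsm : s ∈ Icc 0 l := Ioc_subset_Icc_self hs'
      have hkk := hker e (by rw [abs_of_pos he]; exact hee.2) s hsm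
      have a1 := sub_ne_zero.2 (h1 s)
      have a2 := sub_ne_zero.2 (h2 s)
      have eq : R s * ((γ s - zpt γ s₀ τ e)^2)⁻¹ * deriv γ s -
        R s * ((γ s - zpt γ s₀ τ (-e))^2)⁻¹ * deriv γ s =
        R s * (4 * I * e * τ * (γ s - γ s₀)) * (((γ s - γ s₀)^2 + (e * τ)^2)^2)⁻¹ * deriv γ s := by
        rw [← zpt_mul]
        field_simp
        unfold zpt
        push_cast
        ring
      rw [eq, norm_mul, norm_mul, norm_mul, norm_inv, norm_pow]
      have hx : ‖4 * I * e * τ * (γ s - γ s₀)‖ ≤ 4 * e * |s - s₀| := by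
        have h3 : ‖γ s - γ s₀‖ ≤ |s - s₀| := by
          have := H.lip.dist_le_mul s s₀
          rw [dist_eq_norm, dist_eq_norm, Real.norm_eq_abs] at this; simpa using this
        rw [norm_mul]
        have : ‖4 * I * e * τ‖ = 4 * e := by simp [hn, abs_of_pos he]
        rw [this]; gcongr
      have hq : 0 < (s - s₀)^2 + e^2 := by positivity
      have hinv : (‖(γ s - γ s₀)^2 + (e * τ)^2‖^2)⁻¹ ≤ (k^2 * ((s - s₀)^2 + e^2)^2)⁻¹ := by
        rw [← mul_pow]; gcongr
      have step : ‖R s‖ * ‖4 * I * e * τ * (γ s - γ s₀)‖ * (‖(γ s - γ s₀)^2 + (e * τ)^2‖^2)⁻¹ * ‖deriv γ s‖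
          ≤ ‖R s‖ * (4 * e * |s - s₀|) * (k^2 * ((s - s₀)^2 + e^2)^2)⁻¹ * 1 := by
        gcongr
        exact lip_deriv_le H.lip s
      refine step.trans ?_
      have hRx : ‖R s‖ * |s - s₀| ≤ η' * (s - s₀)^2 + B * l / δ^4 * ((s - s₀)^2 + e^2)^2 := by
        rcases lt_or_ge |s - s₀| δ with h | h
        · have h4 := hδ' (y := s) (by rwa [Real.dist_eq])
          rw [hR0, smul_zero, sub_zero, sub_zero, Real.norm_eq_abs] at h4
          have : ‖R s‖ * |s - s₀| ≤ η' * (s - s₀)^2 := by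
            rw [← sq_abs (s - s₀)]; nlinarith [abs_nonneg (s - s₀)]
          have : 0 ≤ B * l / δ^4 * ((s - s₀)^2 + e^2)^2 := by positivity
          linarith
        · have h5 : |s - s₀| ≤ l := by
            rw [abs_le]; constructor <;> linarith [hs.1, hs.2, hsm.1, hsm.2]
          have h6 : δ^4 ≤ ((s - s₀)^2 + e^2)^2 := by
            have : δ^2 ≤ (s - s₀)^2 + e^2 := by
              have := pow_le_pow_left₀ hδ.le h 2
              rw [sq_abs] at this; nlinarith [sq_nonneg e]
            calc δ^4 = (δ^2)^2 := by ring
              _ ≤ _ := by gcongr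
          have h7 : ‖R s‖ * |s - s₀| ≤ B * l := by
            gcongr; exact hB s hsm
          have h8 : B * l ≤ B * l / δ^4 * ((s - s₀)^2 + e^2)^2 := by
            calc B * l = B * l / δ^4 * δ^4 := by field_simp
              _ ≤ _ := by gcongr
          nlinarith [mul_nonneg hη'0.le (sq_nonneg (s - s₀))]
      calc ‖R s‖ * (4 * e * |s - s₀|) * (k^2 * ((s - s₀)^2 + e^2)^2)⁻¹ * 1
          = (‖R s‖ * |s - s₀|) * (4 * e * (k^2 * ((s - s₀)^2 + e^2)^2)⁻¹) := by ring
        _ ≤ (η' * (s - s₀)^2 + B * l / δ^4 * ((s - s₀)^2 + e^2)^2) *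
            (4 * e * (k^2 * ((s - s₀)^2 + e^2)^2)⁻¹) := by gcongr
        _ ≤ (η' * ((s - s₀)^2 + e^2) + B * l / δ^4 * ((s - s₀)^2 + e^2)^2) *
            (4 * e * (k^2 * ((s - s₀)^2 + e^2)^2)⁻¹) := by
              gcongr
              linarith [sq_nonneg e]
        _ = _ := by
          generalize (s - s₀)^2 + e^2 = q at hq
          field_simp
    calc _ ≤ ∫ s in (0:ℝ)..l, 4 / k^2 * (η' * (e / ((s - s₀)^2 + e^2)) + e * (B * l / δ^4)) := by
          refine intervalIntegral.norm_integral_le_of_norm_le hl.le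
            (Eventually.of_forall fun s hs' => hpt s hs') ?_
          refine Continuous.intervalIntegrable ?_ _ _
          exact continuous_const.mul ((continuous_const.mul cL).add continuous_const)
      _ = 4 / k^2 * (η' * (∫ s in (0:ℝ)..l, e / ((s - s₀)^2 + e^2)) + e * (B * l / δ^4) * l) := by
          rw [intervalIntegral.integral_const_mul, intervalIntegral.integral_add
            ((cL.intervalIntegrable _ _).const_mul _) intervalIntegrable_const,
            intervalIntegral.integral_const_mul, intervalIntegral.integral_const, smul_eq_mul]
          ring
      _ ≤ _ := by
          gcongr
          exact lorentz_le he
  have hlim := ((H.idx_jump hs hd hn).const_mul κ).add hrem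
  rw [add_zero] at hlim
  refine hlim.congr' ?_
  filter_upwards [hM] with e ⟨he, h1, h2, _, _⟩
  rw [H.kint_lin hf h1 s₀ κ, H.kint_lin hf h2 s₀ κ]
  ring

/-- nontangential approach along the normal -/
lemma Good.nt_seq (H : Good G l γ φ c θ) {σ : ℝ} (hσ : σ = 1 ∨ σ = -1)
    {s₀ : ℝ} {τ : ℂ} (hs : s₀ ∈ Ioo 0 l) (hd : HasDerivAt γ τ s₀) (hn : ‖τ‖ = 1)
    (hside : ∀ᶠ e in nhdsWithin (0:ℝ) (Ioi 0), zpt γ s₀ τ (σ * e) ∈ G ∧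
        zpt γ s₀ τ (-(σ * e)) ∉ closure G) {g : ℂ → ℂ} {v : ℂ}
    (hnt : ∀ M : ℝ, 1 < M → Tendsto g (nhdsWithin (γ s₀)
      {z | z ∈ G ∧ ‖z - γ s₀‖ ≤ M * infDist z (frontier G)}) (nhds v)) :
    Tendsto (fun e : ℝ => g (zpt γ s₀ τ (σ * e))) (nhdsWithin 0 (Ioi 0)) (nhds v) := by
  obtain ⟨M, hM1, hM⟩ := H.off_ev hs hd hn
  refine (hnt M hM1).comp (tendsto_nhdsWithin_iff.2 ⟨?_, ?_⟩)
  · have : Continuous (fun e : ℝ => zpt γ s₀ τ (σ * e)) := by unfold zpt; fun_prop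
    have h := (this.tendsto 0).mono_left (nhdsWithin_le_nhds (s := Ioi 0))
    simpa [zpt] using h
  · filter_upwards [hM, hside] with e ⟨he, _, _, h1, h2⟩ h3
    refine ⟨h3.1, ?_⟩
    have hz : ‖zpt γ s₀ τ (σ * e) - γ s₀‖ = e := by
      have : |σ| = 1 := by rcases hσ with rfl | rfl <;> simp
      simp [zpt, hn, this, abs_of_pos he]
    rw [hz]
    rcases hσ with rfl | rfl
    · rw [one_mul]; exact h1
    · rw [neg_one_mul]; exact h2

lemma Good.bdry_sq (H : Good G l γ φ c θ) {σ : ℝ} (hσ : σ = 1 ∨ σ = -1)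
    (hidx : ∀ w ∈ G, idx γ l w = σ * (2 * Real.pi * I))
    {s₀ : ℝ} {τ κ : ℂ} (hs : s₀ ∈ Ioo 0 l) (hd : HasDerivAt γ τ s₀) (hn : ‖τ‖ = 1)
    (hside : ∀ᶠ e in nhdsWithin (0:ℝ) (Ioi 0), zpt γ s₀ τ (σ * e) ∈ G ∧
        zpt γ s₀ τ (-(σ * e)) ∉ closure G)
    (hφd : HasDerivAt (fun s => φ (γ s)) (κ * τ) s₀)
    {g : ℂ → ℂ} {v : ℂ} (hg : ∀ z ∈ G, g z ^ 2 = deriv φ z)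
    (hnt : ∀ M : ℝ, 1 < M → Tendsto g (nhdsWithin (γ s₀)
      {z | z ∈ G ∧ ‖z - γ s₀‖ ≤ M * infDist z (frontier G)}) (nhds v)) :
    v ^ 2 = κ := by
  have h1 := (H.nt_seq hσ hs hd hn hside hnt).pow 2
  have h2 := H.kint_jump H.hcont hs hd hn hφd
  have h3 : Tendsto (fun e : ℝ => g (zpt γ s₀ τ (σ * e)) ^ 2 * (2 * Real.pi * I))
      (nhdsWithin 0 (Ioi 0)) (nhds (κ * (2 * Real.pi * I))) := by
    refine h2.congr' ?_
    filter_upwards [hside] with e he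
    have hin := H.deriv_formula H.cont H.diffOn he.1
    have hout := H.deriv_formula_out H.cont H.diffOn he.2
    rw [hg _ he.1]
    rw [hidx _ he.1] at hin
    rcases hσ with rfl | rfl
    · rw [one_mul] at hin hout ⊢
      unfold kint
      rw [hin, hout]; simp
    · rw [neg_one_mul] at hin hout ⊢
      rw [neg_neg] at hout
      unfold kint
      rw [hin, hout]; simp
  exact mul_right_cancel₀ twopiI_ne (tendsto_nhds_unique (h1.mul_const _) h3)

end


section
variable {G : Set ℂ} {l : ℝ} {γ : ℝ → ℂ} {φ : ℂ → ℂ} {c : ℂ} {θ : ℝ → ℝ}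

lemma Good.mean_bd (H : Good G l γ φ c θ) {ζ : ℂ} (hζ : ζ ∈ G) : ∃ C : ℝ, 0 < C ∧
    ∀ f : ℂ → ℂ, ContinuousOn f (closure G) → DifferentiableOn ℂ f G →
      ‖f ζ‖ ≤ C * ∫ s in (0:ℝ)..l, ‖f (γ s)‖ := by
  obtain ⟨σ, hσ, hidx, -⟩ := H.orient
  obtain ⟨r, hr, hb⟩ := Metric.isOpen_iff.1 H.op ζ hζ
  refine ⟨r⁻¹, by positivity, fun f hc hd => ?_⟩
  have h := H.cauchy_formula hc hd hζ
  rw [hidx ζ hζ] at h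
  have hcf : Continuous (fun s => f (γ s)) := hc.comp_continuous H.lip.continuous H.gamma_mem
  have hn : ‖f ζ * (σ * (2 * Real.pi * I))‖ = ‖f ζ‖ * (2 * Real.pi) := by
    have : |σ| = 1 := by rcases hσ with rfl | rfl <;> simp
    simp [this, abs_of_pos Real.pi_pos]
  have h2 : ‖f ζ‖ * (2 * Real.pi) ≤ ∫ s in (0:ℝ)..l, r⁻¹ * ‖f (γ s)‖ := by
    rw [← hn, ← h]
    refine intervalIntegral.norm_integral_le_of_norm_le H.lpos.le
      (Eventually.of_forall fun s _ => ?_) ((continuous_const.mul hcf.norm).intervalIntegrable _ _)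
    rw [norm_mul, norm_mul, norm_inv]
    have h3 : r ≤ ‖γ s - ζ‖ := by
      by_contra hh; push Not at hh
      exact H.gamma_notMem s (hb (by simpa [dist_eq_norm] using hh))
    calc _ ≤ ‖f (γ s)‖ * r⁻¹ * 1 := by
          gcongr
          exact lip_deriv_le H.lip s
      _ = _ := by ring
  rw [intervalIntegral.integral_const_mul] at h2
  nlinarith [norm_nonneg (f ζ), Real.pi_gt_three]

lemma trig_poly (u : ℂ → ℝ) (hu : Continuous u) {ε : ℝ} (hε : 0 < ε) :
    ∃ P : Polynomial ℂ, ∀ t : ℝ, |u (exp (t * I)) - (P.eval (exp (t * I))).re| ≤ ε := by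
  haveI : Fact (0 < 2 * Real.pi) := ⟨Real.two_pi_pos⟩
  have hF : Continuous (fun x : AddCircle (2 * Real.pi) => ((u (AddCircle.toCircle x : ℂ) : ℝ) : ℂ)) :=
    Complex.continuous_ofReal.comp (hu.comp (continuous_subtype_val.comp AddCircle.continuous_toCircle))
  set F : C(AddCircle (2 * Real.pi), ℂ) := ⟨_, hF⟩ with hFdef
  have hmem : F ∈ (Submodule.span ℂ (range (@fourier (2 * Real.pi)))).topologicalClosure := by
    rw [span_fourier_closure_eq_top]; trivial
  obtain ⟨T, hT, hTF⟩ := Metric.mem_closure_iff.1 hmem ε hε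
  have hPQ : ∃ P Q : Polynomial ℂ, ∀ x : AddCircle (2 * Real.pi),
      T x = P.eval (AddCircle.toCircle x : ℂ) + (starRingEnd ℂ) (Q.eval (AddCircle.toCircle x : ℂ)) := by
    clear hTF
    induction hT using Submodule.span_induction with
    | mem x hx =>
      obtain ⟨n, rfl⟩ := hx
      rcases Int.eq_nat_or_neg n with ⟨m, rfl | rfl⟩
      · refine ⟨Polynomial.X ^ m, 0, fun x => ?_⟩
        simp [fourier_apply, AddCircle.toCircle_nsmul]
      · refine ⟨0, Polynomial.X ^ m, fun x => ?_⟩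
        rw [fourier_neg]
        simp [fourier_apply, AddCircle.toCircle_nsmul]
    | zero => exact ⟨0, 0, fun x => by simp⟩
    | add x y _ _ hx hy =>
      obtain ⟨P, Q, h⟩ := hx
      obtain ⟨P', Q', h'⟩ := hy
      refine ⟨P + P', Q + Q', fun x => ?_⟩
      simp [h, h']; ring
    | smul a x _ hx =>
      obtain ⟨P, Q, h⟩ := hx
      refine ⟨Polynomial.C a * P, Polynomial.C ((starRingEnd ℂ) a) * Q, fun x => ?_⟩
      simp [h]; ring
  obtain ⟨P, Q, hPQ⟩ := hPQ
  refine ⟨P + Q, fun t => ?_⟩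
  have h1 : ‖F (t : AddCircle (2 * Real.pi)) - T (t : AddCircle (2 * Real.pi))‖ ≤ ε := by
    have := (ContinuousMap.dist_apply_le_dist (f := F) (g := T) (t : AddCircle (2 * Real.pi))).trans hTF.le
    rwa [dist_eq_norm] at this
  have h2 : (AddCircle.toCircle (t : AddCircle (2 * Real.pi)) : ℂ) = exp (t * I) := by
    rw [AddCircle.toCircle_apply_mk, Circle.coe_exp]
    congr 2
    have := Real.pi_pos
    norm_cast
    field_simp
  have h3 := (abs_re_le_norm _).trans h1
  rw [hPQ, hFdef] at h3
  simp only [ContinuousMap.coe_mk, h2] at h3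
  simpa using h3

lemma Good.log_conv (H : Good G l γ φ c θ) : ∃ C : ℝ, 0 < C ∧ ∀ u : ℂ → ℝ, Continuous u →
    Real.exp ((2 * Real.pi)⁻¹ * ∫ t in (0:ℝ)..(2 * Real.pi), u (exp (t * I))) ≤
      C * ∫ s in (0:ℝ)..l, Real.exp (u (c⁻¹ * φ (γ s))) := by
  have h0 : psi φ G 0 ∈ G := H.psi_mem (by simp)
  obtain ⟨C, hC, hb⟩ := H.mean_bd h0
  refine ⟨C, hC, fun u hu => ?_⟩
  have hpi := Real.pi_pos
  have hc0 : c ≠ 0 := norm_pos_iff.1 (by rw [H.cn]; norm_num)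
  have hcu : Continuous (fun s => Real.exp (u (c⁻¹ * φ (γ s)))) :=
    Real.continuous_exp.comp (hu.comp (continuous_const.mul H.hcont))
  have key : ∀ ε : ℝ, 0 < ε →
      Real.exp ((2 * Real.pi)⁻¹ * ∫ t in (0:ℝ)..(2 * Real.pi), u (exp (t * I))) ≤
      Real.exp (2 * ε) * (C * ∫ s in (0:ℝ)..l, Real.exp (u (c⁻¹ * φ (γ s)))) := by
    intro ε hε
    obtain ⟨P, hP⟩ := trig_poly u hu hε
    have hmean : (2 * Real.pi)⁻¹ * ∫ t in (0:ℝ)..(2 * Real.pi), (P.eval (exp (t * I))).re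
        = (P.eval 0).re := by
      have hd : DiffContOnCl ℂ (fun z => P.eval z) (ball 0 |1|) := P.differentiable.diffContOnCl
      have h1 := hd.circleAverage
      rw [Real.circleAverage_def] at h1
      rw [← h1, Complex.real_smul, Complex.re_ofReal_mul]
      congr 1
      have hi : IntervalIntegrable (fun t => P.eval (circleMap 0 1 t)) volume 0 (2 * Real.pi) := by
        refine Continuous.intervalIntegrable ?_ _ _
        exact P.continuous.comp (continuous_circleMap _ _)
      have := Complex.reCLM.intervalIntegral_comp_comm hi
      simp only [reCLM_apply] at this
      rw [← this]
      simp [circleMap]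
    have hle : (2 * Real.pi)⁻¹ * ∫ t in (0:ℝ)..(2 * Real.pi), u (exp (t * I)) ≤ (P.eval 0).re + ε := by
      have c1 : Continuous (fun t : ℝ => u (exp (t * I))) := hu.comp (by fun_prop)
      have c2 : Continuous (fun t : ℝ => (P.eval (exp (t * I))).re) :=
        continuous_re.comp (P.continuous.comp (by fun_prop))
      have : ∫ t in (0:ℝ)..(2 * Real.pi), u (exp (t * I)) ≤
          ∫ t in (0:ℝ)..(2 * Real.pi), ((P.eval (exp (t * I))).re + ε) := by
        refine intervalIntegral.integral_mono_on (by positivity) (c1.intervalIntegrable _ _)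
          ((c2.add continuous_const).intervalIntegrable _ _) fun t _ => ?_
        linarith [(abs_le.1 (hP t)).2]
      rw [intervalIntegral.integral_add (c2.intervalIntegrable _ _) intervalIntegrable_const,
        intervalIntegral.integral_const, smul_eq_mul] at this
      rw [← hmean]
      calc _ ≤ (2 * Real.pi)⁻¹ * ((∫ t in (0:ℝ)..(2 * Real.pi), (P.eval (exp (t * I))).re) +
            (2 * Real.pi - 0) * ε) := by gcongr
        _ = _ := by rw [mul_add, sub_zero, inv_mul_cancel_left₀ (by positivity)]
    have hf := hb (fun z => exp (P.eval (c⁻¹ * φ z)))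
      (Complex.continuous_exp.comp_continuousOn
        (P.continuous.comp_continuousOn (continuousOn_const.mul H.cont)))
      (Complex.differentiable_exp.comp_differentiableOn
        (P.differentiable.comp_differentiableOn (H.diffOn.const_mul _)))
    simp only [H.phi_psi (show (0:ℂ) ∈ ball 0 1 by simp), mul_zero, Complex.norm_exp] at hf
    have hcP : Continuous (fun s => Real.exp (P.eval (c⁻¹ * φ (γ s))).re) :=
      Real.continuous_exp.comp (continuous_re.comp (P.continuous.comp (continuous_const.mul H.hcont)))
    have hI : ∫ s in (0:ℝ)..l, Real.exp (P.eval (c⁻¹ * φ (γ s))).re ≤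
        ∫ s in (0:ℝ)..l, Real.exp ε * Real.exp (u (c⁻¹ * φ (γ s))) := by
      refine intervalIntegral.integral_mono_on H.lpos.le (hcP.intervalIntegrable _ _)
        ((continuous_const.mul hcu).intervalIntegrable _ _) fun s hs => ?_
      rw [← Real.exp_add]
      apply Real.exp_le_exp.2
      have e1 : c⁻¹ * φ (γ s) = exp (θ s * I) := by rw [H.ex s hs]; field_simp
      rw [e1]
      linarith [(abs_le.1 (hP (θ s))).1]
    rw [intervalIntegral.integral_const_mul] at hI
    calc _ ≤ Real.exp ((P.eval 0).re + ε) := Real.exp_le_exp.2 hle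
      _ = Real.exp ε * Real.exp (P.eval 0).re := by rw [Real.exp_add, mul_comm]
      _ ≤ Real.exp ε * (C * (Real.exp ε * ∫ s in (0:ℝ)..l, Real.exp (u (c⁻¹ * φ (γ s))))) := by
          gcongr; exact hf.trans (by gcongr)
      _ = _ := by rw [two_mul ε, Real.exp_add]; ring
  have hlim : Tendsto (fun ε : ℝ => Real.exp (2 * ε) * (C * ∫ s in (0:ℝ)..l, Real.exp (u (c⁻¹ * φ (γ s)))))
      (nhdsWithin 0 (Ioi 0)) (nhds (C * ∫ s in (0:ℝ)..l, Real.exp (u (c⁻¹ * φ (γ s))))) := by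
    have : Continuous (fun ε : ℝ => Real.exp (2 * ε) * (C * ∫ s in (0:ℝ)..l, Real.exp (u (c⁻¹ * φ (γ s))))) := by
      fun_prop
    simpa using (this.tendsto 0).mono_left nhdsWithin_le_nhds
  refine ge_of_tendsto hlim ?_
  filter_upwards [self_mem_nhdsWithin] with ε hε
  exact key ε hε

end


section
variable {G : Set ℂ} {l : ℝ} {γ : ℝ → ℂ} {φ : ℂ → ℂ} {c : ℂ} {θ : ℝ → ℝ}

lemma Good.cinv (H : Good G l γ φ c θ) {s : ℝ} (hs : s ∈ Icc 0 l) :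
    c⁻¹ * φ (γ s) = exp (θ s * I) := by
  have hc0 : c ≠ 0 := norm_pos_iff.1 (by rw [H.cn]; norm_num)
  rw [H.ex s hs]; field_simp

lemma Good.set_bd (H : Good G l γ φ c θ) : ∃ C : ℝ, 0 < C ∧ ∀ U : Set ℝ, IsOpen U → U ⊆ Ioo 0 l →
    ∀ A : Set ℝ, MeasurableSet A → A ⊆ Ioo 0 (2 * Real.pi) →
    (∀ t ∈ A, ∀ s ∈ Icc 0 l, exp (θ s * I) = exp (t * I) → s ∈ U) → ∀ N : ℝ, 0 ≤ N →
    Real.exp (N * ((2 * Real.pi)⁻¹ * volume.real A)) ≤ C * (l + Real.exp N * volume.real U) := by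
  obtain ⟨C, hC, hb⟩ := H.log_conv
  have hl := H.lpos
  refine ⟨C, hC, fun U hUo hU A hAm hA hAU N hN => ?_⟩
  have hpi := Real.pi_pos
  have hcc : Continuous (fun s => c⁻¹ * φ (γ s)) := continuous_const.mul H.hcont
  set F := (fun s => c⁻¹ * φ (γ s)) '' (Icc 0 l \ U) with hF
  have hFc : IsCompact F := (isCompact_Icc.diff hUo).image hcc
  have hFn : F.Nonempty := ⟨_, 0, ⟨⟨le_rfl, hl.le⟩, fun h => lt_irrefl _ (hU h).1⟩, rfl⟩
  set v : ℕ → ℂ → ℝ := fun j x => min 1 (j * infDist x F) with hv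
  have hvc : ∀ j, Continuous (v j) := fun j =>
    continuous_const.min (continuous_const.mul (continuous_infDist_pt F))
  have hv0 : ∀ j x, 0 ≤ v j x := fun j x => le_min zero_le_one (mul_nonneg (by positivity) infDist_nonneg)
  have hv1 : ∀ j x, v j x ≤ 1 := fun j x => min_le_left _ _
  have hUm := hUo.measurableSet
  have hUfin : volume U ≠ ⊤ := ((measure_mono hU).trans_lt measure_Ioo_lt_top).ne
  have hAfin : volume A ≠ ⊤ := ((measure_mono hA).trans_lt measure_Ioo_lt_top).ne
  have hexp : Continuous (fun t : ℝ => exp (t * I)) := by fun_prop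
  have hlow : ∀ j, ∫ t in A, v j (exp (t * I)) ≤ ∫ t in (0:ℝ)..(2 * Real.pi), v j (exp (t * I)) := by
    intro j
    rw [intervalIntegral.integral_of_le (by positivity)]
    refine setIntegral_mono_set ?_ (Eventually.of_forall fun t => hv0 j _)
      (LE.le.eventuallyLE (hA.trans Ioo_subset_Ioc_self))
    exact (((hvc j).comp hexp).continuousOn.integrableOn_Icc).mono_set Ioc_subset_Icc_self
  have hup : ∀ j, ∫ s in (0:ℝ)..l, Real.exp (N * v j (c⁻¹ * φ (γ s))) ≤ l + Real.exp N * volume.real U := by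
    intro j
    have i1 : IntegrableOn (fun s => Real.exp (N * v j (c⁻¹ * φ (γ s)))) (Ioc 0 l) := by
      refine (Continuous.continuousOn ?_).integrableOn_Icc.mono_set Ioc_subset_Icc_self
      exact Real.continuous_exp.comp (continuous_const.mul ((hvc j).comp hcc))
    have i2 : IntegrableOn (U.indicator fun _ => Real.exp N) (Ioc 0 l) :=
      (integrable_const _).indicator hUm
    have i3 : IntegrableOn (fun _ : ℝ => (1:ℝ)) (Ioc 0 l) := integrable_const _
    rw [intervalIntegral.integral_of_le hl.le]
    calc _ ≤ ∫ s in Ioc 0 l, ((1:ℝ) + U.indicator (fun _ => Real.exp N) s) := by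
          refine setIntegral_mono_on i1 (i3.add i2) measurableSet_Ioc fun s hs => ?_
          by_cases hsU : s ∈ U
          · rw [indicator_of_mem hsU]
            have : Real.exp (N * v j (c⁻¹ * φ (γ s))) ≤ Real.exp N :=
              Real.exp_le_exp.2 (by nlinarith [hv1 j (c⁻¹ * φ (γ s))])
            linarith
          · rw [indicator_of_notMem hsU, add_zero]
            have hm : c⁻¹ * φ (γ s) ∈ F := ⟨s, ⟨Ioc_subset_Icc_self hs, hsU⟩, rfl⟩
            simp [hv, infDist_zero_of_mem hm]
      _ = _ := by
          rw [integral_add i3 i2, setIntegral_indicator hUm]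
          have : Ioc 0 l ∩ U = U := inter_eq_right.2 (hU.trans Ioo_subset_Ioc_self)
          rw [this]
          simp [hl.le, mul_comm]
  have hmain : ∀ j, Real.exp (N * ((2 * Real.pi)⁻¹ * ∫ t in A, v j (exp (t * I)))) ≤
      C * (l + Real.exp N * volume.real U) := by
    intro j
    have h := hb (fun x => N * v j x) (continuous_const.mul (hvc j))
    rw [intervalIntegral.integral_const_mul] at h
    calc _ ≤ Real.exp ((2 * Real.pi)⁻¹ * (N * ∫ t in (0:ℝ)..(2 * Real.pi), v j (exp (t * I)))) := by
          apply Real.exp_le_exp.2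
          rw [mul_left_comm]
          gcongr
          exact hlow j
      _ ≤ _ := h
      _ ≤ _ := by gcongr; exact hup j
  have hlim : Tendsto (fun j => ∫ t in A, v j (exp (t * I))) atTop (nhds (∫ t in A, (1:ℝ))) := by
    refine tendsto_integral_of_dominated_convergence (fun _ => 1) ?_ ?_ ?_ ?_
    · exact fun j => ((hvc j).comp hexp).aestronglyMeasurable
    · exact integrableOn_const hAfin
    · intro j
      refine Eventually.of_forall fun t => ?_
      rw [Real.norm_of_nonneg (hv0 _ _)]; exact hv1 _ _
    · rw [ae_restrict_iff' hAm]
      refine Eventually.of_forall fun t ht => ?_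
      have hnm : exp (t * I) ∉ F := by
        rintro ⟨s, hs, he⟩
        simp only at he
        rw [H.cinv hs.1] at he
        exact hs.2 (hAU t ht s hs.1 he)
      have hpos : 0 < infDist (exp (t * I)) F := (hFc.isClosed.notMem_iff_infDist_pos hFn).1 hnm
      refine tendsto_const_nhds.congr' ?_
      obtain ⟨n, hn⟩ := exists_nat_gt (infDist (exp (t * I)) F)⁻¹
      filter_upwards [eventually_ge_atTop n] with j hj
      rw [hv]; dsimp only
      rw [min_eq_left]
      have : (n:ℝ) ≤ j := by exact_mod_cast hj
      rw [inv_lt_iff_one_lt_mul₀ hpos] at hn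
      nlinarith
  have hI : ∫ t in A, (1:ℝ) = volume.real A := by simp
  rw [hI] at hlim
  have hlim2 : Tendsto (fun j => Real.exp (N * ((2 * Real.pi)⁻¹ * ∫ t in A, v j (exp (t * I))))) atTop
      (nhds (Real.exp (N * ((2 * Real.pi)⁻¹ * volume.real A)))) :=
    (Real.continuous_exp.tendsto _).comp ((hlim.const_mul _).const_mul _)
  exact le_of_tendsto hlim2 (Eventually.of_forall hmain)

lemma Good.theta_ac (H : Good G l γ φ c θ) : AbsolutelyContinuousOnInterval θ 0 l := by
  obtain ⟨C, hC, hb⟩ := H.set_bd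
  have hl := H.lpos
  have hpi := Real.pi_pos
  rw [absolutelyContinuousOnInterval_iff]
  intro ε hε
  obtain ⟨N, hN0, hN⟩ : ∃ N : ℝ, 0 ≤ N ∧ C * (l + 1) < Real.exp (N * ((2 * Real.pi)⁻¹ * ε)) := by
    have : Tendsto (fun N : ℝ => Real.exp (N * ((2 * Real.pi)⁻¹ * ε))) atTop atTop :=
      Real.tendsto_exp_atTop.comp (tendsto_id.atTop_mul_const (by positivity))
    obtain ⟨N, h1, h2⟩ := ((eventually_ge_atTop (0:ℝ)).and (this.eventually_gt_atTop (C * (l + 1)))).exists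
    exact ⟨N, h1, h2⟩
  refine ⟨Real.exp (-N), Real.exp_pos _, fun E hE hEd => ?_⟩
  obtain ⟨n, I'⟩ := E
  obtain ⟨hE1, hE2⟩ := hE
  simp only at hE1 hE2 hEd ⊢
  set a : ℕ → ℝ := fun i => min (I' i).1 (I' i).2 with ha
  set b : ℕ → ℝ := fun i => max (I' i).1 (I' i).2 with hbdef
  have hab : ∀ i, a i ≤ b i := fun i => min_le_max
  have hmem : ∀ i ∈ Finset.range n, a i ∈ Icc 0 l ∧ b i ∈ Icc 0 l := by
    intro i hi
    have := hE1 i hi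
    rw [uIcc_of_le hl.le] at this
    exact ⟨⟨le_min this.1.1 this.2.1, (min_le_left _ _).trans this.1.2⟩,
      ⟨this.1.1.trans (le_max_left _ _), max_le this.1.2 this.2.2⟩⟩
  have hθd : ∀ i, dist (θ (I' i).1) (θ (I' i).2) = θ (b i) - θ (a i) := by
    intro i
    rcases le_total (I' i).1 (I' i).2 with h | h
    · simp only [ha, hbdef, min_eq_left h, max_eq_right h]
      rw [dist_comm, Real.dist_eq, abs_of_nonneg (sub_nonneg.2 (H.mono h))]
    · simp only [ha, hbdef, min_eq_right h, max_eq_left h]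
      rw [Real.dist_eq, abs_of_nonneg (sub_nonneg.2 (H.mono h))]
  have hd : ∀ i, dist (I' i).1 (I' i).2 = b i - a i := by
    intro i
    simp only [ha, hbdef]
    rw [Real.dist_eq, max_sub_min_eq_abs, abs_sub_comm]
  simp_rw [hθd]
  simp_rw [hd] at hEd
  have hdisj : ∀ i ∈ Finset.range n, ∀ j ∈ Finset.range n, i ≠ j → ∀ x, x ∈ Ioo (a i) (b i) →
      x ∈ Ioo (a j) (b j) → False := by
    intro i hi j hj hij x hx hx'
    have := hE2 hi hj hij
    have h1 : x ∈ uIoc (I' i).1 (I' i).2 := ⟨hx.1, hx.2.le⟩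
    have h2 : x ∈ uIoc (I' j).1 (I' j).2 := ⟨hx'.1, hx'.2.le⟩
    exact Set.disjoint_left.1 this h1 h2
  set U := ⋃ i ∈ Finset.range n, Ioo (a i) (b i) with hU
  set A := ⋃ i ∈ Finset.range n, Ioo (θ (a i)) (θ (b i)) with hA
  have hUm : volume.real U ≤ Real.exp (-N) := by
    refine (measureReal_biUnion_finset_le _ _).trans ?_
    refine le_trans (le_of_eq ?_) hEd.le
    refine Finset.sum_congr rfl fun i _ => ?_
    rw [Real.volume_real_Ioo_of_le (hab i)]
  have hAm : volume.real A = ∑ i ∈ Finset.range n, (θ (b i) - θ (a i)) := by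
    rw [hA, measureReal_biUnion_finset (h := fun i _ => measure_Ioo_lt_top.ne)]
    · refine Finset.sum_congr rfl fun i _ => ?_
      rw [Real.volume_real_Ioo_of_le (H.mono (hab i))]
    · intro i hi j hj hij
      rw [Function.onFun, Set.disjoint_left]
      intro t ht ht'
      -- if b i ≤ a j or b j ≤ a i then contradiction
      have h1 : ∀ p q, b p ≤ a q → t ∈ Ioo (θ (a p)) (θ (b p)) → t ∈ Ioo (θ (a q)) (θ (b q)) → False := by
        intro p q hpq h1 h2
        have := H.mono hpq
        linarith [h1.2, h2.1]
      rcases le_or_gt (b i) (a j) with h | h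
      · exact h1 i j h ht ht'
      rcases le_or_gt (b j) (a i) with h' | h'
      · exact h1 j i h' ht' ht
      have hi1 : a i < b i := by
        by_contra hh; push Not at hh
        have := H.mono hh; linarith [ht.1, ht.2]
      have hj1 : a j < b j := by
        by_contra hh; push Not at hh
        have := H.mono hh; linarith [ht'.1, ht'.2]
      have hlt : max (a i) (a j) < min (b i) (b j) := max_lt (lt_min hi1 h') (lt_min h hj1)
      obtain ⟨x, hx1, hx2⟩ := exists_between hlt
      exact hdisj i hi j hj hij x ⟨(le_max_left _ _).trans_lt hx1, hx2.trans_le (min_le_left _ _)⟩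
        ⟨(le_max_right _ _).trans_lt hx1, hx2.trans_le (min_le_right _ _)⟩
    · intro i _; exact measurableSet_Ioo
  have hUo : IsOpen U := isOpen_biUnion fun i _ => isOpen_Ioo
  have hUs : U ⊆ Ioo 0 l := by
    intro x hx
    simp only [hU, mem_iUnion] at hx
    obtain ⟨i, hi, hx⟩ := hx
    have := hmem i hi
    exact ⟨this.1.1.trans_lt hx.1, hx.2.trans_le this.2.2⟩
  have hAs : A ⊆ Ioo 0 (2 * Real.pi) := by
    intro x hx
    simp only [hA, mem_iUnion] at hx
    obtain ⟨i, hi, hx⟩ := hx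
    have := hmem i hi
    rw [← H.t0, ← H.tl]
    exact ⟨(H.mono this.1.1).trans_lt hx.1, hx.2.trans_le (H.mono this.2.2)⟩
  have hAmeas : MeasurableSet A := (isOpen_biUnion fun i _ => isOpen_Ioo).measurableSet
  have hAU : ∀ t ∈ A, ∀ s ∈ Icc 0 l, exp (θ s * I) = exp (t * I) → s ∈ U := by
    intro t ht s hs he
    have ht0 := hAs ht
    have hθs : θ s = t := by
      rcases lt_or_eq_of_le hs.2 with h | h
      · exact (H.surj ht0 ⟨hs.1, h⟩ (by rw [H.ex s hs, he])).2
      · have h0 := H.surj ht0 (s := 0) ⟨le_rfl, hl⟩ (by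
          rw [H.ex 0 ⟨le_rfl, hl.le⟩, ← he, h, H.tl, H.t0]
          simp)
        exact absurd h0.1.1 (lt_irrefl _)
    simp only [hA, mem_iUnion] at ht
    obtain ⟨i, hi, hx⟩ := ht
    simp only [hU, mem_iUnion]
    refine ⟨i, hi, ?_, ?_⟩
    · by_contra hh; push Not at hh
      have := H.mono hh; linarith [hx.1]
    · by_contra hh; push Not at hh
      have := H.mono hh; linarith [hx.2]
  have hfin := hb U hUo hUs A hAmeas hAs hAU N hN0
  rw [← hAm]
  by_contra hcon
  push Not at hcon
  have h1 : Real.exp (N * ((2 * Real.pi)⁻¹ * ε)) ≤ Real.exp (N * ((2 * Real.pi)⁻¹ * volume.real A)) := by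
    apply Real.exp_le_exp.2; gcongr
  have h2 : C * (l + Real.exp N * volume.real U) ≤ C * (l + 1) := by
    gcongr
    calc Real.exp N * volume.real U ≤ Real.exp N * Real.exp (-N) := by gcongr
      _ = 1 := by rw [← Real.exp_add]; simp
  linarith

end


section
variable {G : Set ℂ} {l : ℝ} {γ : ℝ → ℂ} {φ : ℂ → ℂ} {c : ℂ} {θ : ℝ → ℝ}

lemma Good.trace (H : Good G l γ φ c θ) {g : ℂ → ℂ} {gb : ℝ → ℂ} (hgd : DifferentiableOn ℂ g G)
    (hg : ∀ z ∈ G, g z ^ 2 = deriv φ z)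
    (hnt : ∀ᵐ s : ℝ, s ∈ Ioo 0 l → ∀ M : ℝ, 1 < M → Tendsto g
      (nhdsWithin (γ s) {z | z ∈ G ∧ ‖z - γ s‖ ≤ M * infDist z (frontier G)}) (nhds (gb s))) :
    AEMeasurable gb (volume.restrict (Ioc 0 l)) ∧
    IntegrableOn (fun s => ‖gb s‖ ^ 2) (Ioc 0 l) ∧ ∫ s in Ioc 0 l, ‖gb s‖ ^ 2 ≤ 2 * Real.pi ∧
    ∀ a b, 0 ≤ a → a ≤ b → b ≤ l → IntervalIntegrable (fun s => gb s ^ 2 * deriv γ s) volume a b ∧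
      ∫ s in a..b, gb s ^ 2 * deriv γ s = φ (γ b) - φ (γ a) := by
  obtain ⟨σ, hσ, hidx, hside⟩ := H.orient
  have hl := H.lpos
  have hpi := Real.pi_pos
  have hIoo : ∀ᵐ s ∂(volume.restrict (Ioc 0 l)), s ∈ Ioo 0 l := by
    rw [← restrict_Ioo_eq_restrict_Ioc]
    exact ae_restrict_mem measurableSet_Ioo
  have hmeas : AEMeasurable gb (volume.restrict (Ioc 0 l)) := by
    have hgm : Measurable (G.indicator g) := by
      classical
      rw [← piecewise_eq_indicator]
      exact hgd.continuousOn.measurable_piecewise continuousOn_const H.op.measurableSet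
    have hfm : ∀ n : ℕ, Measurable (fun s : ℝ =>
        G.indicator g (zpt γ s (deriv γ s) (σ * (1 / ((n:ℝ) + 1))))) := by
      intro n
      refine hgm.comp ?_
      have h1 : Measurable γ := H.lip.continuous.measurable
      have h2 : Measurable (deriv γ) := measurable_deriv γ
      unfold zpt
      fun_prop
    refine aemeasurable_of_tendsto_metrizable_ae atTop (fun n => (hfm n).aemeasurable) ?_
    filter_upwards [hIoo, ae_restrict_of_ae hnt, ae_restrict_of_ae (lip_ae H.lip),
      ae_restrict_of_ae H.unit] with s hs h1 h2 h3
    have h4 := H.nt_seq hσ hs h2 h3 (hside s hs _ h2 h3) (h1 hs)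
    have h5 : Tendsto (fun e : ℝ => G.indicator g (zpt γ s (deriv γ s) (σ * e)))
        (nhdsWithin 0 (Ioi 0)) (nhds (gb s)) := by
      refine h4.congr' ?_
      filter_upwards [hside s hs _ h2 h3] with e he
      rw [indicator_of_mem he.1]
    refine h5.comp ?_
    refine tendsto_nhdsWithin_iff.2 ⟨tendsto_one_div_add_atTop_nhds_zero_nat, ?_⟩
    exact Eventually.of_forall fun n => by simp only [mem_Ioi]; positivity
  have hkey : ∀ᵐ s : ℝ, s ∈ Ioo 0 l → HasDerivAt (fun s => φ (γ s)) (gb s ^ 2 * deriv γ s) s ∧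
      ‖gb s‖ ^ 2 = deriv θ s := by
    filter_upwards [hnt, lip_ae H.lip, H.unit, H.mono.ae_differentiableAt] with s h1 h2 h3 h4 hs
    have hτ : deriv γ s ≠ 0 := norm_pos_iff.1 (by rw [h3]; norm_num)
    have hd0 : HasDerivAt (fun s => c * exp (θ s * I)) (c * (exp (θ s * I) * (deriv θ s * I))) s := by
      have := (h4.hasDerivAt.ofReal_comp).mul_const I
      exact (this.cexp).const_mul c
    have hd1 : HasDerivAt (fun s => φ (γ s)) (c * (exp (θ s * I) * (deriv θ s * I))) s := by
      refine hd0.congr_of_eventuallyEq ?_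
      filter_upwards [Ioo_mem_nhds hs.1 hs.2] with t ht
      exact H.ex t (Ioo_subset_Icc_self ht)
    set κ := c * (exp (θ s * I) * (deriv θ s * I)) / deriv γ s with hκ
    have hκτ : κ * deriv γ s = c * (exp (θ s * I) * (deriv θ s * I)) := div_mul_cancel₀ _ hτ
    rw [← hκτ] at hd1
    have hsq := H.bdry_sq hσ hidx hs h2 h3 (hside s hs _ h2 h3) hd1 hg (h1 hs)
    rw [hsq]
    refine ⟨hd1, ?_⟩
    have : ‖gb s‖ ^ 2 = ‖κ‖ := by rw [← hsq, norm_pow]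
    have hn := congrArg norm hκτ
    rw [norm_mul, h3, mul_one, norm_mul, H.cn, norm_mul, norm_mul, Complex.norm_exp_ofReal_mul_I] at hn
    rw [this, hn]
    simp [abs_of_nonneg (H.mono.deriv_nonneg)]
  have hae : ∀ᵐ s ∂(volume.restrict (Ioc 0 l)), deriv θ s = ‖gb s‖ ^ 2 := by
    filter_upwards [hIoo, ae_restrict_of_ae hkey] with s hs h
    exact (h hs).2.symm
  have hmo : MonotoneOn θ (uIcc 0 l) := H.mono.monotoneOn _
  have hi := hmo.intervalIntegrable_deriv
  rw [intervalIntegrable_iff_integrableOn_Ioc_of_le hl.le] at hi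
  have hac : AbsolutelyContinuousOnInterval (fun s => φ (γ s)) 0 l := by
    have h := H.theta_ac
    rw [absolutelyContinuousOnInterval_iff] at h ⊢
    intro ε hε
    obtain ⟨δ, hδ, HH⟩ := h ε hε
    refine ⟨δ, hδ, fun E hE hs => lt_of_le_of_lt (Finset.sum_le_sum fun i hi => ?_) (HH E hE hs)⟩
    have hm := hE.1 i hi
    rw [uIcc_of_le hl.le] at hm
    rw [H.ex _ hm.1, H.ex _ hm.2, dist_eq_norm, ← mul_sub, norm_mul, H.cn, one_mul, Real.dist_eq]
    set x := θ (E.2 i).1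
    set y := θ (E.2 i).2
    have e : exp (x * I) - exp (y * I) = exp (y * I) * (exp (I * ((x - y : ℝ) : ℂ)) - 1) := by
      rw [mul_sub, ← Complex.exp_add]; push_cast; ring_nf
    rw [e, norm_mul, Complex.norm_exp_ofReal_mul_I, one_mul]
    exact Real.norm_exp_I_mul_ofReal_sub_one_le
  refine ⟨hmeas, hi.congr hae, ?_, ?_⟩
  · rw [← integral_congr_ae hae, ← intervalIntegral.integral_of_le hl.le]
    have := hmo.intervalIntegral_deriv_mem_uIcc
    rw [H.tl, H.t0, sub_zero, uIcc_of_le (by positivity)] at this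
    exact this.2
  · intro a b ha hab hb
    refine ac_ftc hab (hac.mono ?_) ?_
    · rw [uIcc_of_le hab, uIcc_of_le hl.le]; exact Icc_subset_Icc ha hb
    · filter_upwards [hkey, Measure.ae_ne volume 0, Measure.ae_ne volume l] with s h h0 h1 hs
      exact (h ⟨lt_of_le_of_ne (ha.trans hs.1) (Ne.symm h0), lt_of_le_of_ne (hs.2.trans hb) h1⟩).1

lemma cs_int {μ : Measure ℝ} {u v : ℝ → ℂ} (hu : AEMeasurable u μ) (hv : AEMeasurable v μ)
    (iu : Integrable (fun s => ‖u s‖ ^ 2) μ) (iv : Integrable (fun s => ‖v s‖ ^ 2) μ) :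
    Integrable (fun s => ‖u s * v s‖) μ ∧
    (∫ s, ‖u s * v s‖ ∂μ) ^ 2 ≤ (∫ s, ‖u s‖ ^ 2 ∂μ) * ∫ s, ‖v s‖ ^ 2 ∂μ := by
  have iuv : Integrable (fun s => ‖u s * v s‖) μ := by
    refine (iu.add iv).mono' (hu.mul hv).norm.aestronglyMeasurable (Eventually.of_forall fun s => ?_)
    simp only [norm_norm, norm_mul, Pi.add_apply]
    nlinarith [sq_nonneg (‖u s‖ - ‖v s‖), sq_nonneg (‖u s‖), sq_nonneg (‖v s‖)]
  refine ⟨iuv, ?_⟩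
  have := discrim_le_zero (a := ∫ s, ‖u s‖ ^ 2 ∂μ) (b := -2 * ∫ s, ‖u s * v s‖ ∂μ)
    (c := ∫ s, ‖v s‖ ^ 2 ∂μ) (fun x => ?_)
  · unfold discrim at this; nlinarith
  · have h0 : 0 ≤ ∫ s, ((x * x) * ‖u s‖ ^ 2 + (-2 * x) * ‖u s * v s‖ + ‖v s‖ ^ 2) ∂μ := by
      refine integral_nonneg fun s => ?_
      simp only [norm_mul, Pi.zero_apply]
      nlinarith [sq_nonneg (x * ‖u s‖ - ‖v s‖)]
    have i1 := iu.const_mul (x * x)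
    have i2 := iuv.const_mul (-2 * x)
    have i3 : Integrable (fun s => (x * x) * ‖u s‖ ^ 2 + (-2 * x) * ‖u s * v s‖) μ := i1.add i2
    rw [integral_add i3 iv, integral_add i1 i2, integral_const_mul, integral_const_mul] at h0
    linarith

lemma Good.final (H : Good G l γ φ c θ) {g : ℂ → ℂ} {gb : ℝ → ℂ} (hgd : DifferentiableOn ℂ g G)
    (hg : ∀ z ∈ G, g z ^ 2 = deriv φ z)
    (hnt : ∀ᵐ s : ℝ, s ∈ Ioo 0 l → ∀ M : ℝ, 1 < M → Tendsto g
      (nhdsWithin (γ s) {z | z ∈ G ∧ ‖z - γ s‖ ≤ M * infDist z (frontier G)}) (nhds (gb s)))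
    {J Q : ℂ → ℂ} (hQ : Continuous Q) (hJ : ∀ z, HasDerivAt J (Q z ^ 2) z)
    (hQn : ∫ s in (0:ℝ)..l, ‖Q (γ s)‖ ^ 2 ≤ 2 * Real.pi) {ζ : ℂ} (hζ : ζ ∈ G) (h0 : φ ζ = J ζ)
    {z : ℂ} (hz : z ∈ closure G) :
    ‖φ z - J z‖ ≤ Real.sqrt (2 * Real.pi * ∫ s in (0:ℝ)..l, ‖gb s - Q (γ s)‖ ^ 2) := by
  obtain ⟨hm, hi, hle, harc⟩ := H.trace hgd hg hnt
  have hl := H.lpos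
  rw [intervalIntegral.integral_of_le hl.le] at hQn ⊢
  have hγ := H.lip.continuous
  have hQc : Continuous (fun s => Q (γ s)) := hQ.comp hγ
  have hiQ : IntegrableOn (fun s => ‖Q (γ s)‖ ^ 2) (Ioc 0 l) :=
    (hQc.norm.pow 2).continuousOn.integrableOn_Icc.mono_set Ioc_subset_Icc_self
  have hQm : AEMeasurable (fun s => Q (γ s)) (volume.restrict (Ioc 0 l)) := hQc.aemeasurable
  have isum : IntegrableOn (fun s => 2 * ‖gb s‖ ^ 2 + 2 * ‖Q (γ s)‖ ^ 2) (Ioc 0 l) :=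
    (hi.const_mul 2).add (hiQ.const_mul 2)
  have hp : ∀ a b : ℂ, ‖a + b‖ ^ 2 ≤ 2 * ‖a‖ ^ 2 + 2 * ‖b‖ ^ 2 := by
    intro a b
    have := norm_add_le a b
    nlinarith [sq_nonneg (‖a‖ - ‖b‖), norm_nonneg (a + b), norm_nonneg a, norm_nonneg b]
  have iplus : IntegrableOn (fun s => ‖gb s + Q (γ s)‖ ^ 2) (Ioc 0 l) := by
    refine isum.mono' ((hm.add hQm).norm.pow_const 2).aestronglyMeasurable (Eventually.of_forall fun s => ?_)
    simpa using hp (gb s) (Q (γ s))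
  have iminus : IntegrableOn (fun s => ‖gb s - Q (γ s)‖ ^ 2) (Ioc 0 l) := by
    refine isum.mono' ((hm.sub hQm).norm.pow_const 2).aestronglyMeasurable (Eventually.of_forall fun s => ?_)
    simpa [sub_eq_add_neg] using hp (gb s) (-Q (γ s))
  have hplus : ∫ s in Ioc 0 l, ‖gb s + Q (γ s)‖ ^ 2 ≤ 8 * Real.pi := by
    calc _ ≤ ∫ s in Ioc 0 l, (2 * ‖gb s‖ ^ 2 + 2 * ‖Q (γ s)‖ ^ 2) :=
          integral_mono iplus isum fun s => hp _ _
      _ = 2 * (∫ s in Ioc 0 l, ‖gb s‖ ^ 2) + 2 * ∫ s in Ioc 0 l, ‖Q (γ s)‖ ^ 2 := by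
          rw [integral_add (hi.const_mul 2) (hiQ.const_mul 2), integral_const_mul, integral_const_mul]
      _ ≤ _ := by linarith
  obtain ⟨iK, hcs⟩ := cs_int (hm.sub hQm) (hm.add hQm) iminus iplus
  simp only [Pi.sub_apply, Pi.add_apply] at iK hcs
  set K : ℝ → ℝ := fun s => ‖(gb s - Q (γ s)) * (gb s + Q (γ s))‖ with hK
  set T := ∫ s in Ioc 0 l, K s with hT
  have hT0 : 0 ≤ T := integral_nonneg fun s => norm_nonneg _
  set F : ℂ → ℂ := fun z => φ z - J z with hF
  have iKI : ∀ a b, 0 ≤ a → a ≤ b → b ≤ l → IntervalIntegrable K volume a b := by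
    intro a b ha hab hb
    rw [intervalIntegrable_iff_integrableOn_Ioc_of_le hab]
    exact IntegrableOn.mono_set iK (Ioc_subset_Ioc ha hb)
  have hstep : ∀ a b, 0 ≤ a → a ≤ b → b ≤ l → ‖F (γ b) - F (γ a)‖ ≤ ∫ s in a..b, K s := by
    intro a b ha hab hb
    obtain ⟨i1, e1⟩ := harc a b ha hab hb
    obtain ⟨i2, e2⟩ := comp_ftc H.lip isOpen_univ (H := J) (H' := fun z => Q z ^ 2) (fun z _ => hJ z)
      hab (fun s _ => mem_univ _)
    have : F (γ b) - F (γ a) = ∫ s in a..b, (gb s ^ 2 * deriv γ s - Q (γ s) ^ 2 * deriv γ s) := by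
      rw [intervalIntegral.integral_sub i1 i2, e1, e2]; simp only [hF]; ring
    rw [this]
    refine intervalIntegral.norm_integral_le_of_norm_le hab ?_ (iKI a b ha hab hb)
    filter_upwards [H.unit] with s hs _
    rw [← sub_mul, norm_mul, hs, mul_one, hK]
    refine le_of_eq ?_
    congr 1; ring
  have hpair : ∀ a b, 0 ≤ a → a ≤ b → b ≤ l → ‖F (γ b) - F (γ a)‖ ≤ T / 2 := by
    intro a b ha hab hb
    have h1 := hstep a b ha hab hb
    have h2 := hstep 0 a le_rfl ha (hab.trans hb)
    have h3 := hstep b l (ha.trans hab) hb le_rfl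
    have e : ∫ s in (0:ℝ)..l, K s = (∫ s in (0:ℝ)..a, K s) + (∫ s in a..b, K s) + ∫ s in b..l, K s := by
      rw [intervalIntegral.integral_add_adjacent_intervals (iKI 0 a le_rfl ha (hab.trans hb))
        (iKI a b ha hab hb), intervalIntegral.integral_add_adjacent_intervals
        (iKI 0 b le_rfl (ha.trans hab) hb) (iKI b l (ha.trans hab) hb le_rfl)]
    rw [intervalIntegral.integral_of_le hl.le, ← hT] at e
    have h4 : ‖F (γ b) - F (γ a)‖ ≤ ‖F (γ a) - F (γ 0)‖ + ‖F (γ l) - F (γ b)‖ := by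
      have : F (γ b) - F (γ a) = -((F (γ a) - F (γ 0)) + (F (γ l) - F (γ b))) := by
        rw [H.toSetup.gl]; ring
      rw [this, norm_neg]; exact norm_add_le _ _
    linarith
  have hall : ∀ z ∈ frontier G, ∀ w ∈ frontier G, ‖F z - F w‖ ≤ T / 2 := by
    intro z hz w hw
    rw [← H.ran] at hz hw
    obtain ⟨s, rfl⟩ := hz
    obtain ⟨t, rfl⟩ := hw
    obtain ⟨s', hs', e1⟩ := H.toSetup.mem_period 0 s
    obtain ⟨t', ht', e2⟩ := H.toSetup.mem_period 0 t
    rw [zero_add] at hs' ht'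
    rw [← e1, ← e2]
    rcases le_total t' s' with h | h
    · exact hpair _ _ ht'.1 h hs'.2.le
    · rw [norm_sub_rev]; exact hpair _ _ hs'.1 h ht'.2.le
  have hFd : DiffContOnCl ℂ F G := by
    have hJd : Differentiable ℂ J := fun z => (hJ z).differentiableAt
    refine ⟨fun z hz => ?_, H.cont.sub hJd.continuous.continuousOn⟩
    exact ((H.diff z hz).sub (hJd z)).differentiableWithinAt
  have hfr : ∀ w ∈ frontier G, ‖F w‖ ≤ T / 2 := by
    intro w hw
    have := Complex.norm_le_of_forall_mem_frontier_norm_le H.bd (f := fun z => F z - F w)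
      (hFd.sub diffContOnCl_const) (C := T / 2) (fun z hz => hall z hz w hw) (subset_closure hζ)
    have hFζ : F ζ = 0 := by simp [hF, h0]
    rw [hFζ] at this
    simpa using this
  have hfin : ‖F z‖ ≤ T / 2 := Complex.norm_le_of_forall_mem_frontier_norm_le H.bd hFd hfr hz
  refine hfin.trans (Real.le_sqrt_of_sq_le ?_)
  have hX : 0 ≤ ∫ s in Ioc 0 l, ‖gb s - Q (γ s)‖ ^ 2 := integral_nonneg fun s => by positivity
  nlinarith

end

section
variable {G : Set ℂ} {l : ℝ} {γ : ℝ → ℂ} {φ : ℂ → ℂ} {c : ℂ} {θ : ℝ → ℝ}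

lemma per_ae (hl : 0 < l) (hper : Function.Periodic γ l) {gb : ℝ → ℂ} {P : ℂ → ℂ → Prop}
    (h : ∀ᵐ s ∂(volume.restrict (Ioc 0 l)), P (γ s) (gb s)) :
    ∀ᵐ s : ℝ, P (γ s) (gb (toIocMod hl 0 s)) := by
  rw [ae_restrict_iff' measurableSet_Ioc] at h
  have h2 : ∀ᵐ s : ℝ, ∀ n : ℤ, (s - n • l ∈ Ioc 0 l → P (γ (s - n • l)) (gb (s - n • l))) := by
    rw [ae_all_iff]
    intro n
    exact (measurePreserving_sub_right volume (n • l)).quasiMeasurePreserving.ae h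
  filter_upwards [h2] with s hs
  have := hs (toIocDiv hl 0 s)
  rw [hper.sub_zsmul_eq, self_sub_toIocDiv_zsmul] at this
  exact this (by simpa using toIocMod_mem_Ioc hl 0 s)

lemma per_shift (f : ℝ → ℝ) (hf : Function.Periodic f l) (s₀ : ℝ) :
    ∫ s in (0:ℝ)..l, f (s₀ + s) = ∫ s in (0:ℝ)..l, f s := by
  rw [intervalIntegral.integral_comp_add_left f s₀, add_zero, hf.intervalIntegral_add_eq s₀ 0, zero_add]

lemma per_rev (f : ℝ → ℝ) (hf : Function.Periodic f l) (s₀ : ℝ) :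
    ∫ s in (0:ℝ)..l, f (s₀ + -s) = ∫ s in (0:ℝ)..l, f s := by
  have : ∀ s, f (s₀ + -s) = f (s₀ - s) := fun s => by rw [sub_eq_add_neg]
  simp_rw [this]
  rw [intervalIntegral.integral_comp_sub_left f s₀, sub_zero]
  have := hf.intervalIntegral_add_eq (s₀ - l) 0
  rw [zero_add, sub_add_cancel] at this
  exact this

lemma Setup.final (S : Setup G l γ φ) {g : ℂ → ℂ} {gb : ℝ → ℂ} (hgd : DifferentiableOn ℂ g G)
    (hg : ∀ z ∈ G, g z ^ 2 = deriv φ z)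
    (hnt : ∀ᵐ s ∂(volume.restrict (Ioc 0 l)), NTLim G g (γ s) (gb s))
    {J Q : ℂ → ℂ} (hQ : Continuous Q) (hJ : ∀ z, HasDerivAt J (Q z ^ 2) z)
    (hQn : ∫ s in (0:ℝ)..l, ‖Q (γ s)‖ ^ 2 ≤ 2 * Real.pi) {ζ : ℂ} (hζ : ζ ∈ G) (h0 : φ ζ = J ζ)
    {z : ℂ} (hz : z ∈ closure G) :
    ‖φ z - J z‖ ≤ Real.sqrt (2 * Real.pi * ∫ s in (0:ℝ)..l, ‖gb s - Q (γ s)‖ ^ 2) := by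
  have hl := S.lpos
  have hae := per_ae hl S.per (P := fun w v => NTLim G g w v) hnt
  set gp : ℝ → ℂ := fun s => gb (toIocMod hl 0 s) with hgp
  have hgper : Function.Periodic gp l := fun s => by simp [hgp]
  have e0 : ∫ s in (0:ℝ)..l, ‖gb s - Q (γ s)‖ ^ 2 = ∫ s in (0:ℝ)..l, ‖gp s - Q (γ s)‖ ^ 2 := by
    refine intervalIntegral.integral_congr_ae (Eventually.of_forall fun s hs => ?_)
    rw [uIoc_of_le hl.le] at hs
    have : toIocMod hl 0 s = s := (toIocMod_eq_self hl).2 (by simpa using hs)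
    simp only [hgp, this]
  have p1 : Function.Periodic (fun s => ‖gp s - Q (γ s)‖ ^ 2) l := fun s => by
    simp only [hgper s, S.per s]
  have p2 : Function.Periodic (fun s => ‖Q (γ s)‖ ^ 2) l := fun s => by
    simp only [S.per s]
  rw [e0]
  obtain ⟨s₀, ⟨c, θ, H⟩ | ⟨c, θ, H⟩⟩ := S.exists_good
  · rw [← per_shift _ p1 s₀]
    rw [← per_shift _ p2 s₀] at hQn
    refine H.final (gb := fun s => gp (s₀ + s)) hgd hg ?_ hQ hJ hQn hζ h0 hz
    filter_upwards [(measurePreserving_add_left volume s₀).quasiMeasurePreserving.ae hae] with s hs _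
    exact hs
  · rw [← per_rev _ p1 s₀]
    rw [← per_rev _ p2 s₀] at hQn
    refine H.final (gb := fun s => gp (s₀ + -s)) hgd hg ?_ hQ hJ hQn hζ h0 hz
    have h1 := (measurePreserving_add_left volume s₀).quasiMeasurePreserving.ae hae
    filter_upwards [(Measure.measurePreserving_neg (volume : Measure ℝ)).quasiMeasurePreserving.ae h1] with s hs _
    exact hs

lemma setup_of (D : JordanDomain) {ζ : ℂ} (hφ : ConformalOnto D.G φ ζ)
    (hφc : ContinuousOn φ (closure D.G)) : Setup D.G D.l D.γ φ := by
  have hl := D.l_pos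
  have hlip := lip_of_var hl D.γ_periodic D.γ_unitSpeed
  have hmod : ∀ s : ℝ, D.γ (toIcoMod hl 0 s) = D.γ s := fun s => by
    rw [← self_sub_toIcoDiv_zsmul, D.γ_periodic.sub_zsmul_eq]
  have hmm : ∀ s : ℝ, toIcoMod hl 0 s ∈ Ico 0 D.l := fun s => by
    simpa using toIcoMod_mem_Ico hl 0 s
  refine ⟨D.isOpen, D.bounded, D.connected, hl, hlip, D.γ_periodic, ?_, ?_, ?_,
    hφ.differentiable, hφ.bijOn, hφc⟩
  · intro s t hst
    rw [← hmod s, ← hmod t] at hst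
    have h := D.γ_injOn (hmm s) (hmm t) hst
    rw [← self_sub_toIcoDiv_zsmul, ← self_sub_toIcoDiv_zsmul] at h
    refine ⟨toIcoDiv hl 0 s - toIcoDiv hl 0 t, ?_⟩
    push_cast
    simp only [zsmul_eq_mul] at h
    linarith
  · rw [← D.γ_boundary]
    ext w
    constructor
    · rintro ⟨s, rfl⟩
      exact ⟨_, hmm s, hmod s⟩
    · rintro ⟨s, _, rfl⟩
      exact ⟨s, rfl⟩
  · refine unit_of_var hl hlip D.γ_periodic ?_
    have := D.γ_unitSpeed 0 D.l hl.le (by simp)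
    simpa using this

lemma sum_pos (D : JordanDomain) {p : ℕ → Polynomial ℂ} (hp : D.IsONPolys p) (ζ : ℂ) (n : ℕ) :
    0 < ∑ k ∈ Finset.range (n + 1), ‖(p k).eval ζ‖ ^ 2 := by
  refine Finset.sum_pos' (fun k _ => by positivity) ⟨0, by simp, ?_⟩
  obtain ⟨a, ha, hc⟩ := hp.2.1 0
  have h0 : p 0 = Polynomial.C ((p 0).coeff 0) := Polynomial.eq_C_of_natDegree_eq_zero (hp.1 0)
  rw [Polynomial.leadingCoeff, hp.1 0] at hc
  rw [h0, hc]
  simp only [Polynomial.eval_C, Complex.norm_real]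
  have := norm_pos_iff.2 ha.ne'
  positivity

lemma J_deriv (D : JordanDomain) {p : ℕ → Polynomial ℂ} (hp : D.IsONPolys p) (ζ : ℂ) (n : ℕ) (z : ℂ) :
    HasDerivAt (Jfun D p ζ n) (Qfun D p ζ n z ^ 2) z := by
  have hS := sum_pos D hp ζ n
  have hl := D.l_pos
  have hpi := Real.pi_pos
  set S : Polynomial ℂ :=
    (∑ k ∈ Finset.range (n + 1), Polynomial.C ((starRingEnd ℂ) ((p k).eval ζ)) * p k) ^ 2 with hSdef
  have hev : S.eval z = partialSum p ζ n z ^ 2 := by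
    rw [hSdef, Polynomial.eval_pow, Polynomial.eval_finsetSum]
    simp [partialSum]
  have hd : HasDerivAt (fun z : ℂ => ∑ i ∈ Finset.range (S.natDegree + 1),
      S.coeff i * ((z ^ (i + 1) - ζ ^ (i + 1)) / ((i : ℂ) + 1))) (S.eval z) z := by
    rw [Polynomial.eval_eq_sum_range]
    refine HasDerivAt.fun_sum fun i _ => ?_
    refine HasDerivAt.const_mul _ ?_
    have h1 := ((hasDerivAt_pow (i + 1) z).sub_const (ζ ^ (i + 1))).div_const ((i : ℂ) + 1)
    have hne : (i : ℂ) + 1 ≠ 0 := by exact_mod_cast Nat.succ_ne_zero i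
    convert h1 using 1
    push_cast
    field_simp
  have hm := hd.const_mul (((2 * Real.pi / D.l : ℝ) : ℂ) / (∑ k ∈ Finset.range (n + 1), ((‖(p k).eval ζ‖ : ℂ)) ^ 2))
  have this : (∑ k ∈ Finset.range (n + 1), ((‖(p k).eval ζ‖ : ℂ)) ^ 2) =
      ((∑ k ∈ Finset.range (n + 1), ‖(p k).eval ζ‖ ^ 2 : ℝ) : ℂ) := by push_cast; rfl
  have hval : Qfun D p ζ n z ^ 2 = (((2 * Real.pi / D.l : ℝ) : ℂ) /
      (∑ k ∈ Finset.range (n + 1), ((‖(p k).eval ζ‖ : ℂ)) ^ 2)) * S.eval z := by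
    rw [hev, Qfun, mul_pow, inv_pow, ← Complex.ofReal_pow, Real.sq_sqrt (by positivity)]
    congr 1
    rw [this, ← Complex.ofReal_inv, ← Complex.ofReal_div]
    congr 1
    field_simp
  rw [hval]
  exact hm

lemma Q_cont (D : JordanDomain) (p : ℕ → Polynomial ℂ) (ζ : ℂ) (n : ℕ) :
    Continuous (Qfun D p ζ n) := by
  unfold Qfun partialSum
  exact continuous_const.mul (continuous_finsetSum _ fun k _ => continuous_const.mul (p k).continuous)

lemma Q_norm (D : JordanDomain) {p : ℕ → Polynomial ℂ} (hp : D.IsONPolys p) (ζ : ℂ) (n : ℕ) :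
    ∫ s in (0:ℝ)..D.l, ‖Qfun D p ζ n (D.γ s)‖ ^ 2 = 2 * Real.pi := by
  have hS := sum_pos D hp ζ n
  have hl := D.l_pos
  have hpi := Real.pi_pos
  have hl' : (D.l : ℂ) ≠ 0 := by exact_mod_cast hl.ne'
  have hc : ∀ k, Continuous (fun s => (p k).eval (D.γ s)) := fun k => (p k).continuous.comp D.γ_cont
  have hon : ∀ j k, ∫ s in (0:ℝ)..D.l, (p j).eval (D.γ s) * (starRingEnd ℂ) ((p k).eval (D.γ s)) =
      if j = k then (D.l : ℂ) else 0 := by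
    intro j k
    have := hp.2.2 j k
    rw [one_div, inv_mul_eq_iff_eq_mul₀ hl'] at this
    rw [this]; split_ifs <;> simp
  have hps : ∫ s in (0:ℝ)..D.l, ‖partialSum p ζ n (D.γ s)‖ ^ 2 =
      D.l * ∑ k ∈ Finset.range (n + 1), ‖(p k).eval ζ‖ ^ 2 := by
    have : ((∫ s in (0:ℝ)..D.l, ‖partialSum p ζ n (D.γ s)‖ ^ 2 : ℝ) : ℂ) =
        ((D.l * ∑ k ∈ Finset.range (n + 1), ‖(p k).eval ζ‖ ^ 2 : ℝ) : ℂ) := by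
      rw [← intervalIntegral.integral_ofReal]
      have e : ∀ s : ℝ, ((‖partialSum p ζ n (D.γ s)‖ ^ 2 : ℝ) : ℂ) =
          ∑ j ∈ Finset.range (n + 1), ∑ k ∈ Finset.range (n + 1),
            ((starRingEnd ℂ) ((p j).eval ζ) * (p k).eval ζ) *
              ((p j).eval (D.γ s) * (starRingEnd ℂ) ((p k).eval (D.γ s))) := by
        intro s
        rw [Complex.ofReal_pow, ← Complex.mul_conj', partialSum, map_sum, Finset.sum_mul_sum]
        refine Finset.sum_congr rfl fun j _ => Finset.sum_congr rfl fun k _ => ?_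
        rw [map_mul, Complex.conj_conj]; ring
      simp_rw [e]
      have hcc : ∀ j k, Continuous (fun s => ((starRingEnd ℂ) ((p j).eval ζ) * (p k).eval ζ) *
              ((p j).eval (D.γ s) * (starRingEnd ℂ) ((p k).eval (D.γ s)))) := fun j k =>
        continuous_const.mul ((hc j).mul (Complex.continuous_conj.comp (hc k)))
      rw [intervalIntegral.integral_finsetSum (fun j _ =>
        (continuous_finsetSum _ fun k _ => hcc j k).intervalIntegrable _ _)]
      rw [Complex.ofReal_mul, Complex.ofReal_sum, Finset.mul_sum]
      refine Finset.sum_congr rfl fun j hj => ?_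
      rw [intervalIntegral.integral_finsetSum (fun k _ => (hcc j k).intervalIntegrable _ _)]
      simp_rw [intervalIntegral.integral_const_mul, hon]
      rw [Finset.sum_eq_single_of_mem j hj (fun k _ hk => by simp [Ne.symm hk])]
      rw [if_pos rfl, mul_comm, Complex.conj_mul']
      push_cast; rfl
    exact_mod_cast this
  simp_rw [Qfun, norm_mul, mul_pow]
  rw [intervalIntegral.integral_const_mul, hps, norm_inv, Complex.norm_real, inv_pow, Real.norm_eq_abs, sq_abs,
    Real.sq_sqrt (by positivity)]
  field_simp

end

/-- inequality (3.1). Let `G` be a Jordan domain with rectifiable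
boundary of length `l`, `ζ ∈ G`, and `Q_n` as above (so `J'_{2n+1} = Q_n²`). Then
`‖φ - J_{2n+1}‖_∞ ≤ √(2πl)·‖√(φ') - Q_n‖₂`, where `g = √(φ')` is the analytic branch
of the square root of `φ'` on `G` with `√(φ'(ζ)) > 0`, and `gb` is its nontangential
boundary trace. -/
theorem sup_norm_le_sqrt_deriv_L2
    (D : JordanDomain)
    (p : ℕ → Polynomial ℂ) (hp : D.IsONPolys p)
    (ζ : ℂ) (hζ : ζ ∈ D.G)
    (φ : ℂ → ℂ) (hφ : ConformalOnto D.G φ ζ) (hφc : ContinuousOn φ (closure D.G))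
    (g : ℂ → ℂ) (hgd : DifferentiableOn ℂ g D.G)
    (hgsq : ∀ z ∈ D.G, g z ^ 2 = deriv φ z)
    (hgζ : ∃ c : ℝ, 0 < c ∧ g ζ = (c : ℂ))
    (gb : ℝ → ℂ)
    (hgb : ∀ᵐ s ∂(volume.restrict (Ioc (0 : ℝ) D.l)), NTLim D.G g (D.γ s) (gb s)) :
    ∀ n : ℕ,
      supNormOn (closure D.G) (fun z => φ z - Jfun D p ζ n z) ≤
        Real.sqrt (2 * Real.pi * D.l) *
          D.bnorm (fun s => gb s - Qfun D p ζ n (D.γ s)) := by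
  intro n
  have S := setup_of D hφ hφc
  have hl := D.l_pos
  have hpi := Real.pi_pos
  have hne : Nonempty (closure D.G) := ⟨⟨ζ, subset_closure hζ⟩⟩
  refine ciSup_le fun z => ?_
  have h0 : φ ζ = Jfun D p ζ n ζ := by
    rw [hφ.map_center]; simp [Jfun]
  have := S.final hgd hgsq hgb (Q_cont D p ζ n) (J_deriv D hp ζ n) (Q_norm D hp ζ n).le hζ h0 z.2
  refine this.trans (le_of_eq ?_)
  rw [JordanDomain.bnorm, ← Real.sqrt_mul (by positivity)]
  congr 1
  field_simp
end

section
/- Let α > −1/2 and m be real numbers with m > α + 1/2, and let A, B > 0 be fixed. Then there exists a constant C = C(α, m, A, B) > 0 such that for all d ∈ (0, min(A,B)]: ∫₀^A ( ∫_d^B s^α·(s+r)^{−(m+1)} ds )² dr ≤ C · d^{2(α−m)+1}. -/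
open Complex MeasureTheory Set Filter Metric

theorem aux_Ioc_rpow (e d b : ℝ) (he : e < -1) (hd : 0 < d) :
    IntegrableOn (fun s : ℝ => s ^ e) (Ioc d b) ∧
      ∫ s in Ioc d b, s ^ e ≤ d ^ (e + 1) / (-(e + 1)) := by
  have h := integrableOn_Ioi_rpow_of_lt he hd
  refine ⟨h.mono_set Ioc_subset_Ioi_self, ?_⟩
  have h1 : ∫ s in Ioc d b, s ^ e ≤ ∫ s in Ioi d, s ^ e := by
    refine setIntegral_mono_set h ?_ (Eventually.of_forall Ioc_subset_Ioi_self)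
    filter_upwards [ae_restrict_mem measurableSet_Ioi] with s hs
    exact Real.rpow_nonneg (hd.trans hs).le _
  rw [integral_Ioi_rpow_of_lt he hd] at h1
  rwa [div_neg, ← neg_div]

theorem aux_shift (e d A : ℝ) (he : e < -1) (hd : 0 < d) (hA : 0 < A) :
    IntegrableOn (fun r : ℝ => (d + r) ^ e) (Ioc 0 A) ∧
      ∫ r in Ioc 0 A, (d + r) ^ e ≤ d ^ (e + 1) / (-(e + 1)) := by
  constructor
  · have : ContinuousOn (fun r : ℝ => (d + r) ^ e) (Icc 0 A) := by
      refine ContinuousOn.rpow_const (by fun_prop) ?_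
      intro x hx
      left
      have := hx.1
      positivity
    exact this.integrableOn_Icc.mono_set Ioc_subset_Icc_self
  · have h := (aux_Ioc_rpow e d (d + A) he hd).2
    rw [← intervalIntegral.integral_of_le hA.le,
      intervalIntegral.integral_comp_add_left (fun x : ℝ => x ^ e) d, add_zero,
      intervalIntegral.integral_of_le (by linarith)]
    exact h

theorem aux_inner (α m q B d r : ℝ) (hq0 : 0 ≤ q) (hq1 : q ≤ m + 1) (hq : q < m - α)
    (hd : 0 < d) (hr : 0 < r) :
    0 ≤ (∫ s in Ioc d B, s ^ α * (s + r) ^ (-(m + 1))) ∧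
    (∫ s in Ioc d B, s ^ α * (s + r) ^ (-(m + 1))) ≤
      (d + r) ^ (-q) * (d ^ (α - m + q) / (m - α - q)) := by
  have hae : ∀ᵐ s ∂(volume.restrict (Ioc d B)), s ∈ Ioc d B :=
    ae_restrict_mem measurableSet_Ioc
  have hnn : 0 ≤ᵐ[volume.restrict (Ioc d B)] fun s : ℝ => s ^ α * (s + r) ^ (-(m + 1)) := by
    filter_upwards [hae] with s hs
    have : 0 < s := hd.trans hs.1
    show (0:ℝ) ≤ _
    positivity
  refine ⟨integral_nonneg_of_ae hnn, ?_⟩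
  obtain ⟨hi, hb⟩ := aux_Ioc_rpow (α - m - 1 + q) d B (by linarith) hd
  have h1 : (∫ s in Ioc d B, s ^ α * (s + r) ^ (-(m + 1))) ≤
      ∫ s in Ioc d B, (d + r) ^ (-q) * s ^ (α - m - 1 + q) := by
    refine integral_mono_of_nonneg hnn (hi.const_mul _) ?_
    filter_upwards [hae] with s hs
    have hs0 : 0 < s := hd.trans hs.1
    have e1 : (s + r) ^ (-(m + 1)) = (s + r) ^ (-q) * (s + r) ^ (-(m + 1 - q)) := by
      rw [← Real.rpow_add (by positivity)]; congr 1; ring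
    have e2 : s ^ (α - m - 1 + q) = s ^ α * s ^ (-(m + 1 - q)) := by
      rw [← Real.rpow_add hs0]; congr 1; ring
    have i1 : (s + r) ^ (-q) ≤ (d + r) ^ (-q) :=
      Real.rpow_le_rpow_of_nonpos (by positivity) (by linarith [hs.1]) (by linarith)
    have i2 : (s + r) ^ (-(m + 1 - q)) ≤ s ^ (-(m + 1 - q)) :=
      Real.rpow_le_rpow_of_nonpos hs0 (by linarith) (by linarith)
    show s ^ α * (s + r) ^ (-(m + 1)) ≤ (d + r) ^ (-q) * s ^ (α - m - 1 + q)
    rw [e1, e2]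
    calc s ^ α * ((s + r) ^ (-q) * (s + r) ^ (-(m + 1 - q)))
        ≤ s ^ α * ((d + r) ^ (-q) * s ^ (-(m + 1 - q))) := by gcongr
      _ = _ := by ring
  refine h1.trans ?_
  rw [integral_const_mul]
  have e3 : α - m - 1 + q + 1 = α - m + q := by ring
  have e4 : -(α - m + q) = m - α - q := by ring
  rw [e3, e4] at hb
  gcongr

/-- estimate for `‖g₂ - P_n‖₂` in the proof of Theorem 1.2.
Let `α > -1/2` and `m > α + 1/2` be reals, and `A, B > 0`. Then there is
`C = C(α,m,A,B) > 0` such that for all `0 < d ≤ min(A,B)`: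
`∫₀^A (∫_d^B s^α (s+r)^{-(m+1)} ds)² dr ≤ C·d^{2(α-m)+1}`. -/
theorem dzjadyk_integral_estimate
    (α m A B : ℝ) (hα : -(1 / 2 : ℝ) < α) (hm : α + 1 / 2 < m)
    (hA : 0 < A) (hB : 0 < B) :
    ∃ C : ℝ, 0 < C ∧ ∀ d : ℝ, 0 < d → d ≤ min A B →
      (∫ r in Ioc (0 : ℝ) A,
        (∫ s in Ioc d B, s ^ α * (s + r) ^ (-(m + 1))) ^ 2) ≤
        C * d ^ (2 * (α - m) + 1) := by
  obtain ⟨q, hq2, hq⟩ := exists_between (show (1 / 2 : ℝ) < m - α by linarith)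
  have hc : 0 < m - α - q := by linarith
  have hc2 : 0 < 2 * q - 1 := by linarith
  refine ⟨1 / ((m - α - q) ^ 2 * (2 * q - 1)), by positivity, ?_⟩
  intro d hd _
  obtain ⟨hi, hb⟩ := aux_shift (-(2 * q)) d A (by linarith) hd hA
  have h1 : (∫ r in Ioc (0 : ℝ) A,
        (∫ s in Ioc d B, s ^ α * (s + r) ^ (-(m + 1))) ^ 2) ≤
      ∫ r in Ioc (0 : ℝ) A, (d ^ (α - m + q) / (m - α - q)) ^ 2 * (d + r) ^ (-(2 * q)) := by
    refine integral_mono_of_nonneg (Eventually.of_forall fun r => sq_nonneg _)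
      (hi.const_mul _) ?_
    filter_upwards [ae_restrict_mem measurableSet_Ioc] with r hr
    obtain ⟨a, b⟩ := aux_inner α m q B d r (by linarith) (by linarith) hq hd hr.1
    have hdr : 0 < d + r := by linarith [hr.1]
    have e1 : (d + r) ^ (-(2 * q)) = ((d + r) ^ (-q)) ^ 2 := by
      rw [← Real.rpow_natCast, ← Real.rpow_mul hdr.le]; congr 1; push_cast; ring
    show (∫ s in Ioc d B, s ^ α * (s + r) ^ (-(m + 1))) ^ 2 ≤ _
    rw [e1, ← mul_pow, mul_comm (d ^ (α - m + q) / (m - α - q))]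
    exact pow_le_pow_left₀ a b 2
  refine h1.trans ?_
  rw [integral_const_mul]
  have e2 : -(-(2 * q) + 1) = 2 * q - 1 := by ring
  rw [e2] at hb
  refine (mul_le_mul_of_nonneg_left hb (sq_nonneg _)).trans (le_of_eq ?_)
  have e3 : d ^ (2 * (α - m) + 1) = (d ^ (α - m + q)) ^ 2 * d ^ (-(2 * q) + 1) := by
    rw [← Real.rpow_natCast, ← Real.rpow_mul hd.le, ← Real.rpow_add hd]
    congr 1; push_cast; ring
  rw [e3]
  field_simp
end
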